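/- If n > max(3^d, 2^{d+1} + 1) φ, then the Kolmogorov distance D_S of the normalized number of isolated points S from the standard normal satisfies D_S ≤ ((n − μ_S)/(5 σ_S²)) · ( √( 11 (κ_d^+)²/σ_S + 5 √(η_S(n,ρ))/√n ) + 2 κ_d^+/√σ_S )². -/

import Mathlib

open MeasureTheory ProbabilityTheory Filter Set Metric
open scoped ENNReal NNReal BigOperators Topology Classical

noncomputable section

/-- Side length `n^(1/d)` of the cube `C_n` of volume `n` in dimension `d`. -/
def sideLen (d n : ℕ) : ℝ := (n : ℝ) ^ ((d : ℝ)⁻¹)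

/-- The cube `C_n = [0, L)^d`. -/
def box (d : ℕ) (L : ℝ) : Set (Fin d → ℝ) := Set.univ.pi fun _ => Set.Ico (0 : ℝ) L

/-- The Euclidean toroidal distance on the cube `[0, L)^d`. -/
def torDist {d : ℕ} (L : ℝ) (x y : Fin d → ℝ) : ℝ :=
  Real.sqrt (∑ i, (⨅ k : ℤ, |x i - y i - k * L|) ^ 2)

/-- The toroidal ball `B_r(x) = {y ∈ C_n : D(x,y) ≤ r}`. -/
def torBall {d : ℕ} (L : ℝ) (x : Fin d → ℝ) (r : ℝ) : Set (Fin d → ℝ) :=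
  {y ∈ box d L | torDist L x y ≤ r}

/-- Addition (translation) in the torus `[0, L)^d`. -/
def torAdd {d : ℕ} (L : ℝ) (y x : Fin d → ℝ) : Fin d → ℝ :=
  fun i => L * Int.fract ((y i + x i) / L)

/-- The uniform probability measure on the cube `[0, L)^d`. -/
def uniformBox (d : ℕ) (L : ℝ) : Measure (Fin d → ℝ) :=
  ((L.toNNReal ^ d)⁻¹ : ℝ≥0) • volume.restrict (box d L)

/-- The joint law of `n` independent points uniformly distributed on the cube `C_n`
of volume `n`; a point configuration is `ω : Fin n → (Fin d → ℝ)`, with `U_i = ω i`. -/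
def binppLaw (d n : ℕ) : Measure (Fin n → Fin d → ℝ) :=
  Measure.pi fun _ => uniformBox d (sideLen d n)

/-- The total covered volume `V` of the union of toroidal balls of radius `ρ`
centered at the `n` points. -/
def coveredVol (d n : ℕ) (ρ : ℝ) (ω : Fin n → Fin d → ℝ) : ℝ :=
  (volume (⋃ i, torBall (sideLen d n) (ω i) ρ)).toReal

/-- The number `S` of isolated points: indices `i` with `𝒰_n ∩ B_ρ(U_i) = {U_i}`. -/
def isolCount (d n : ℕ) (ρ : ℝ) (ω : Fin n → Fin d → ℝ) : ℝ :=
  ∑ i, if Set.range ω ∩ torBall (sideLen d n) (ω i) ρ = {ω i} then 1 else 0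

/-- `π_d`: the volume of the unit ball in `ℝ^d`. -/
def unitBallVol (d : ℕ) : ℝ :=
  (volume (Metric.closedBall (0 : EuclideanSpace ℝ (Fin d)) 1)).toReal

/-- `φ = π_d ρ^d`. -/
def phi (d : ℕ) (ρ : ℝ) : ℝ := unitBallVol d * ρ ^ d

/-- The standard normal cumulative distribution function. -/
def stdGaussCDF (t : ℝ) : ℝ := (gaussianReal 0 1 (Set.Iic t)).toReal

/-- The Kolmogorov distance `D_X` between the law of the standardized version of `X`
and the standard normal. -/
def kolDist {Ω : Type*} [MeasurableSpace Ω] (P : Measure Ω) (X : Ω → ℝ) : ℝ :=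
  ⨆ t : ℝ,
    |(P {ω | (X ω - ∫ x, X x ∂P) / Real.sqrt (variance X P) ≤ t}).toReal - stdGaussCDF t|

/-- A fixed unit vector in `ℝ^d` (junk value `0` if `d = 0`). -/
def unitVec (d : ℕ) : EuclideanSpace ℝ (Fin d) :=
  if h : 0 < d then EuclideanSpace.single (⟨0, h⟩ : Fin d) 1 else 0

/-- `ω_d(r)`: the volume of the union of two unit balls in `ℝ^d` whose centers are
at distance `r` apart. -/
def omegaVol (d : ℕ) (r : ℝ) : ℝ :=
  (volume (Metric.closedBall (0 : EuclideanSpace ℝ (Fin d)) 1 ∪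
      Metric.closedBall (r • unitVec d) 1)).toReal

/-- The integral `J_{r,d}(ρ) = d π_d ∫_0^r exp(-ρ^d ω_d(t)) t^{d-1} dt`. -/
def Jint (r : ℝ) (d : ℕ) (ρ : ℝ) : ℝ :=
  d * unitBallVol d * ∫ t in (0:ℝ)..r, Real.exp (-(ρ ^ d * omegaVol d t)) * t ^ (d - 1)

/-- The limiting variance density `g_V(ρ)`. -/
def gV (d : ℕ) (ρ : ℝ) : ℝ :=
  ρ ^ d * Jint 2 d ρ - (2 ^ d * phi d ρ + phi d ρ ^ 2) * Real.exp (-(2 * phi d ρ))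

/-- The limiting variance density `g_S(ρ)`. -/
def gS (d : ℕ) (ρ : ℝ) : ℝ :=
  Real.exp (-phi d ρ) - (1 + (2 ^ d - 2) * phi d ρ + phi d ρ ^ 2) * Real.exp (-(2 * phi d ρ))
    + ρ ^ d * (Jint 2 d ρ - Jint 1 d ρ)

/-- `κ_d`: the maximum number of closed unit balls in `ℝ^d` that can be packed so that
they all intersect a closed unit ball at the origin but are pairwise disjoint. -/
def kappa (d : ℕ) : ℕ :=
  sSup {k : ℕ | ∃ c : Fin k → EuclideanSpace ℝ (Fin d),
    (∀ i, (Metric.closedBall (c i) 1 ∩ Metric.closedBall 0 1).Nonempty) ∧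
    Pairwise fun i j => Disjoint (Metric.closedBall (c i) 1) (Metric.closedBall (c j) 1)}

/-- `η_V(n, ρ)`. -/
def etaV (d n : ℕ) (ρ : ℝ) : ℝ :=
  2 * phi d ρ ^ 2 * ((3 ^ d + 1) * phi d ρ + 1) ^ 2 *
      (1 + (2 ^ d + 1) * 6 ^ d * phi d ρ +
        ((2 * n - 6 ^ d * phi d ρ) / (n - 6 ^ d * phi d ρ)) * 6 ^ (2 * d) * phi d ρ ^ 2) +
    2 * phi d ρ ^ 4 *
      (3 * (4 ^ d + 2 ^ d) * phi d ρ +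
        3 * 4 ^ d * phi d ρ ^ 2 * ((2 * n - 3 * 2 ^ d * phi d ρ) / (n - 3 * 2 ^ d * phi d ρ)) +
        4 + 2 / n)

/-- `η_S(n, ρ)`. -/
def etaS (d n : ℕ) (ρ : ℝ) : ℝ :=
  2 * (1 + 2 * (kappa d : ℝ)) ^ 2 *
      (1 + (2 ^ d + 1) * 3 ^ d * phi d ρ +
        ((2 * n - 3 ^ d * phi d ρ) / (n - 3 ^ d * phi d ρ)) * 9 ^ d * phi d ρ ^ 2) +
    (((1 : ℝ) + kappa d) ^ 2 / 2) *
      ((2 ^ d + 2 * 3 ^ d + 3) * phi d ρ +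
        (2 ^ (d + 1) + 1) *
          ((2 * n - (2 ^ (d + 1) + 1) * phi d ρ) / (n - (2 ^ (d + 1) + 1) * phi d ρ)) *
          phi d ρ ^ 2 +
        (4 * n - 2) / (n - 1))

/-!
The number of isolated points is handled by Stein's method in its coupling form. Each configuration
is coupled to those in which a point `U_j` is redrawn at a location near another point `U_i`; the
weights of these moves are chosen so that the weighted increments reproduce the centred count in
Stein's identity. A move changes the count by at most `1 + κ_d`, because only the neighbours of the
old and of the new location can become or cease to be isolated, and mutually isolated points near a
common one form a packing of balls. What remains is the variance of the conditional mean of the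
weighted increments. By the Efron–Stein inequality it suffices to delete one point at a time, and
this affects only the terms with a point within distance `3ρ` of the deleted one, of which there
are on average at most `3^d φ`.

On the torus, toroidal balls are unions of lattice translates of Euclidean balls, and the cube is a
fundamental domain of the lattice; this makes the probability of being near a point independent of
that point and at most `φ / n`.
-/

section NormalDistribution

/-- The density of the standard normal distribution. -/
abbrev stdGaussPDF : ℝ → ℝ := gaussianPDFReal 0 1

lemma stdGaussPDF_apply (x : ℝ) : stdGaussPDF x = (√(2 * Real.pi))⁻¹ * Real.exp (-x ^ 2 / 2) := by
  simp [stdGaussPDF, gaussianPDFReal]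

lemma stdGaussPDF_pos (x : ℝ) : 0 < stdGaussPDF x := gaussianPDFReal_pos 0 1 x one_ne_zero

lemma stdGaussPDF_neg (x : ℝ) : stdGaussPDF (-x) = stdGaussPDF x := by
  simp only [stdGaussPDF_apply, neg_sq]

lemma stdGaussPDF_le (x : ℝ) : stdGaussPDF x ≤ (√(2 * Real.pi))⁻¹ := by
  rw [stdGaussPDF_apply]
  refine mul_le_of_le_one_right (by positivity) (Real.exp_le_one_iff.2 ?_)
  linarith [sq_nonneg x]

lemma continuous_stdGaussPDF : Continuous stdGaussPDF := by
  simp only [funext stdGaussPDF_apply]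
  fun_prop

lemma hasDerivAt_stdGaussPDF (x : ℝ) : HasDerivAt stdGaussPDF (-(x * stdGaussPDF x)) x := by
  have hexp : HasDerivAt (fun x : ℝ => -x ^ 2 / 2) (-x) x :=
    ((hasDerivAt_pow 2 x).neg.div_const 2).congr_deriv (by ring)
  rw [funext stdGaussPDF_apply]
  exact (hexp.exp.const_mul _).congr_deriv (by ring)

lemma tendsto_stdGaussPDF_atTop : Tendsto stdGaussPDF atTop (𝓝 0) := by
  have hexp : Tendsto (fun x : ℝ => -x ^ 2 / 2) atTop atBot :=
    (tendsto_neg_atTop_atBot.comp (tendsto_pow_atTop two_ne_zero)).atBot_div_const two_pos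
  rw [funext stdGaussPDF_apply]
  simpa using (Real.tendsto_exp_atBot.comp hexp).const_mul (√(2 * Real.pi))⁻¹

lemma integrable_mul_stdGaussPDF : Integrable fun x => x * stdGaussPDF x := by
  refine ((integrable_mul_exp_neg_mul_sq (b := 1 / 2) (by norm_num)).const_mul
    (√(2 * Real.pi))⁻¹).congr (ae_of_all _ fun x => ?_)
  simp only [stdGaussPDF_apply]
  ring_nf

lemma integrable_bounded_mul_stdGaussPDF {h : ℝ → ℝ} (hm : Measurable h) {c : ℝ}
    (hc : ∀ x, |h x| ≤ c) : Integrable fun x => h x * stdGaussPDF x :=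
  (integrable_gaussianPDFReal 0 1).bdd_mul hm.aestronglyMeasurable (ae_of_all _ hc)

lemma integral_Ioi_mul_stdGaussPDF (w : ℝ) : ∫ x in Ioi w, x * stdGaussPDF x = stdGaussPDF w := by
  rw [integral_Ioi_of_hasDerivAt_of_tendsto (f := fun x => -stdGaussPDF x) (m := 0)
    continuous_stdGaussPDF.neg.continuousWithinAt
    (fun x _ => (hasDerivAt_stdGaussPDF x).neg.congr_deriv (neg_neg _))
    integrable_mul_stdGaussPDF.integrableOn (by simpa using tendsto_stdGaussPDF_atTop.neg)]
  simp

/-- The upper tail `∫_w^∞` of the standard normal density. -/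
def stdGaussTail (w : ℝ) : ℝ := ∫ x in Ioi w, stdGaussPDF x

lemma stdGaussTail_nonneg (w : ℝ) : 0 ≤ stdGaussTail w :=
  integral_nonneg fun x => (stdGaussPDF_pos x).le

lemma mul_stdGaussTail_le (w : ℝ) : w * stdGaussTail w ≤ stdGaussPDF w := by
  rw [stdGaussTail, ← integral_Ioi_mul_stdGaussPDF, ← integral_const_mul]
  exact setIntegral_mono_on ((integrable_gaussianPDFReal 0 1).const_mul w).integrableOn
    integrable_mul_stdGaussPDF.integrableOn measurableSet_Ioi
    fun x hx => mul_le_mul_of_nonneg_right (le_of_lt hx) (stdGaussPDF_pos x).le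

lemma stdGaussTail_zero : stdGaussTail 0 = 1 / 2 := by
  have hsplit := intervalIntegral.integral_Iic_add_Ioi (b := 0)
    (integrable_gaussianPDFReal 0 1).integrableOn (integrable_gaussianPDFReal 0 1).integrableOn
  have hsymm : ∫ x in Iic (0 : ℝ), stdGaussPDF x = stdGaussTail 0 := by
    simpa only [stdGaussPDF_neg, neg_zero, stdGaussTail] using integral_comp_neg_Iic 0 stdGaussPDF
  rw [integral_gaussianPDFReal_eq_one 0 one_ne_zero, hsymm, ← stdGaussTail] at hsplit
  linarith

lemma stdGaussTail_le {w : ℝ} (hw : 0 ≤ w) :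
    stdGaussTail w ≤ √(2 * Real.pi) / 2 * stdGaussPDF w := by
  have hshift : stdGaussTail w = ∫ x in Ioi (0 : ℝ), stdGaussPDF (x + w) := by
    rw [stdGaussTail, ← (measurePreserving_add_right volume w).setIntegral_preimage_emb
      (MeasurableEquiv.addRight w).measurableEmbedding stdGaussPDF (Ioi w)]
    simp
  have hpdf : ∀ x ∈ Ioi (0 : ℝ),
      stdGaussPDF (x + w) ≤ √(2 * Real.pi) * stdGaussPDF w * stdGaussPDF x := by
    intro x hx
    have hpos : (√(2 * Real.pi)) ≠ 0 := by positivity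
    calc stdGaussPDF (x + w) ≤ (√(2 * Real.pi))⁻¹ * Real.exp (-w ^ 2 / 2 + -x ^ 2 / 2) := by
          rw [stdGaussPDF_apply]
          gcongr
          nlinarith [mul_nonneg (le_of_lt (mem_Ioi.1 hx)) hw]
      _ = √(2 * Real.pi) * stdGaussPDF w * stdGaussPDF x := by
          rw [Real.exp_add, stdGaussPDF_apply, stdGaussPDF_apply]
          field_simp
  calc stdGaussTail w ≤ ∫ x in Ioi (0 : ℝ), √(2 * Real.pi) * stdGaussPDF w * stdGaussPDF x := by
        rw [hshift]
        exact setIntegral_mono_on ((integrable_gaussianPDFReal 0 1).comp_add_right w).integrableOn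
          ((integrable_gaussianPDFReal 0 1).const_mul _).integrableOn measurableSet_Ioi hpdf
    _ = √(2 * Real.pi) / 2 * stdGaussPDF w := by
        rw [integral_const_mul, ← stdGaussTail, stdGaussTail_zero]
        ring

lemma stdGaussCDF_sub_le {a b : ℝ} (hab : a ≤ b) :
    stdGaussCDF b - stdGaussCDF a ≤ 0.4 * (b - a) := by
  have hdiff : stdGaussCDF b - stdGaussCDF a = ∫ x in Ioc a b, stdGaussPDF x := by
    change (gaussianReal 0 1).real (Iic b) - (gaussianReal 0 1).real (Iic a) = _
    rw [← measureReal_sdiff (Iic_subset_Iic.2 hab) measurableSet_Iic, Iic_sdiff_Iic,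
      measureReal_def, gaussianReal_apply_eq_integral 0 one_ne_zero,
      ENNReal.toReal_ofReal (integral_nonneg (gaussianPDFReal_nonneg 0 1))]
  have hconst : (√(2 * Real.pi))⁻¹ ≤ 0.4 := by
    rw [show (0.4 : ℝ) = 2.5⁻¹ by norm_num]
    gcongr
    exact Real.le_sqrt_of_sq_le (by nlinarith [Real.pi_gt_d2])
  rw [hdiff, ← intervalIntegral.integral_of_le hab]
  calc ∫ x in a..b, stdGaussPDF x ≤ ∫ _ in a..b, (0.4 : ℝ) :=
        intervalIntegral.integral_mono_on hab (continuous_stdGaussPDF.intervalIntegrable _ _)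
          intervalIntegrable_const fun x _ => (stdGaussPDF_le x).trans hconst
    _ = 0.4 * (b - a) := by rw [intervalIntegral.integral_const, smul_eq_mul, mul_comm]

end NormalDistribution

section SteinEquation

/-- The bounded solution `f` of Stein's equation `f' w - w * f w = h w - ∫ h` for the standard
normal distribution. -/
def steinSolution (h : ℝ → ℝ) (w : ℝ) : ℝ :=
  (stdGaussPDF w)⁻¹ * ∫ x in Iic w, (h x - ∫ y, h y ∂gaussianReal 0 1) * stdGaussPDF x

/-- The right-hand side of Stein's equation for the derivative of `steinSolution h`. -/
def steinSolutionDeriv (h : ℝ → ℝ) (w : ℝ) : ℝ :=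
  w * steinSolution h w + h w - ∫ y, h y ∂gaussianReal 0 1

variable {h : ℝ → ℝ}

lemma integral_stdGaussian (h : ℝ → ℝ) :
    ∫ x, h x ∂gaussianReal 0 1 = ∫ x, h x * stdGaussPDF x := by
  simp only [integral_gaussianReal_eq_integral_smul one_ne_zero, smul_eq_mul, mul_comm (h _)]

lemma integrable_centered_mul_stdGaussPDF (hm : Measurable h) (hb : ∀ x, h x ∈ Icc 0 1) (N : ℝ) :
    Integrable fun x => (h x - N) * stdGaussPDF x := by
  refine integrable_bounded_mul_stdGaussPDF (hm.sub_const N) (c := 1 + |N|) fun x => ?_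
  exact (abs_sub _ _).trans (add_le_add_left (abs_le.2 ⟨by linarith [(hb x).1], (hb x).2⟩) _)

lemma integral_Ioi_mul_stdGaussPDF_mem_Icc (hm : Measurable h) (hb : ∀ x, h x ∈ Icc 0 1) (w : ℝ) :
    ∫ x in Ioi w, h x * stdGaussPDF x ∈ Icc 0 (stdGaussTail w) := by
  refine ⟨integral_nonneg fun x => mul_nonneg (hb x).1 (stdGaussPDF_pos x).le,
    integral_mono (Integrable.integrableOn ?_) (integrable_gaussianPDFReal 0 1).integrableOn
      fun x => mul_le_of_le_one_left (stdGaussPDF_pos x).le (hb x).2⟩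
  simpa using integrable_centered_mul_stdGaussPDF hm hb 0

lemma integral_stdGaussian_mem_Icc (hm : Measurable h) (hb : ∀ x, h x ∈ Icc 0 1) :
    ∫ x, h x ∂gaussianReal 0 1 ∈ Icc 0 1 := by
  refine ⟨integral_nonneg fun x => (hb x).1, ?_⟩
  calc ∫ x, h x ∂gaussianReal 0 1 ≤ ∫ _, (1 : ℝ) ∂gaussianReal 0 1 :=
        integral_mono (.of_bound hm.aestronglyMeasurable 1 (ae_of_all _ fun x => by
          rw [Real.norm_of_nonneg (hb x).1]; exact (hb x).2)) (integrable_const 1) fun x => (hb x).2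
    _ = 1 := by simp

lemma steinSolution_eq_Ioi (hm : Measurable h) (hb : ∀ x, h x ∈ Icc 0 1) (w : ℝ) :
    steinSolution h w = (stdGaussPDF w)⁻¹ *
      ((∫ y, h y ∂gaussianReal 0 1) * stdGaussTail w - ∫ x in Ioi w, h x * stdGaussPDF x) := by
  set N := ∫ y, h y ∂gaussianReal 0 1
  have hint : Integrable fun x => h x * stdGaussPDF x := by
    simpa using integrable_centered_mul_stdGaussPDF hm hb 0
  have hintN : Integrable fun x => N * stdGaussPDF x := (integrable_gaussianPDFReal 0 1).const_mul N
  have hcent := integrable_centered_mul_stdGaussPDF hm hb N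
  have htotal : ∫ x, (h x - N) * stdGaussPDF x = 0 := by
    simp only [sub_mul]
    rw [integral_sub hint hintN, integral_const_mul, integral_gaussianPDFReal_eq_one 0 one_ne_zero,
      ← integral_stdGaussian, mul_one, sub_self]
  have htail : ∫ x in Ioi w, (h x - N) * stdGaussPDF x =
      (∫ x in Ioi w, h x * stdGaussPDF x) - N * stdGaussTail w := by
    simp only [sub_mul]
    rw [integral_sub hint.integrableOn hintN.integrableOn, integral_const_mul, stdGaussTail]
  have hsplit := intervalIntegral.integral_Iic_add_Ioi (b := w) hcent.integrableOn
    hcent.integrableOn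
  rw [htotal, htail] at hsplit
  rw [steinSolution]
  congr 1
  linarith

lemma integral_stdGaussian_comp_neg (h : ℝ → ℝ) :
    ∫ x, h (-x) ∂gaussianReal 0 1 = ∫ x, h x ∂gaussianReal 0 1 := by
  rw [integral_stdGaussian, integral_stdGaussian,
    ← integral_neg_eq_self (fun x => h x * stdGaussPDF x)]
  simp only [stdGaussPDF_neg]

lemma steinSolution_comp_neg (hm : Measurable h) (hb : ∀ x, h x ∈ Icc 0 1) (w : ℝ) :
    steinSolution (fun x => h (-x)) (-w) = -steinSolution h w := by
  set N := ∫ y, h y ∂gaussianReal 0 1 with hN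
  have hIic : ∫ x in Iic (-w), (h (-x) - N) * stdGaussPDF x =
      ∫ x in Ioi w, (h x - N) * stdGaussPDF x := by
    simpa only [stdGaussPDF_neg, neg_neg] using
      integral_comp_neg_Iic (-w) fun x => (h x - N) * stdGaussPDF x
  have hint : Integrable fun x => h x * stdGaussPDF x := by
    simpa using integrable_centered_mul_stdGaussPDF hm hb 0
  rw [steinSolution_eq_Ioi hm hb, ← hN, steinSolution, integral_stdGaussian_comp_neg, ← hN, hIic,
    stdGaussPDF_neg]
  simp only [sub_mul]
  rw [integral_sub hint.integrableOn ((integrable_gaussianPDFReal 0 1).const_mul N).integrableOn,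
    integral_const_mul, stdGaussTail]
  ring

lemma steinSolutionDeriv_comp_neg (hm : Measurable h) (hb : ∀ x, h x ∈ Icc 0 1) (w : ℝ) :
    steinSolutionDeriv (fun x => h (-x)) (-w) = steinSolutionDeriv h w := by
  rw [steinSolutionDeriv, steinSolution_comp_neg hm hb, integral_stdGaussian_comp_neg,
    steinSolutionDeriv, neg_neg, neg_mul_neg]

lemma abs_steinSolution_le_of_nonneg (hm : Measurable h) (hb : ∀ x, h x ∈ Icc 0 1) {w : ℝ}
    (hw : 0 ≤ w) : |steinSolution h w| ≤ √(2 * Real.pi) / 2 := by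
  obtain ⟨hN0, hN1⟩ := integral_stdGaussian_mem_Icc hm hb
  obtain ⟨hJ0, hJ1⟩ := integral_Ioi_mul_stdGaussPDF_mem_Icc hm hb w
  have hT := stdGaussTail_nonneg w
  rw [steinSolution_eq_Ioi hm hb, abs_mul, abs_of_pos (inv_pos.2 (stdGaussPDF_pos w)),
    inv_mul_le_iff₀ (stdGaussPDF_pos w), mul_comm (stdGaussPDF w)]
  refine (abs_le.2 ⟨?_, ?_⟩).trans (stdGaussTail_le hw)
  · linarith [mul_nonneg hN0 hT]
  · linarith [mul_le_of_le_one_left hT hN1]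

lemma abs_steinSolutionDeriv_le_of_nonneg (hm : Measurable h) (hb : ∀ x, h x ∈ Icc 0 1) {w : ℝ}
    (hw : 0 ≤ w) : |steinSolutionDeriv h w| ≤ 1 := by
  obtain ⟨hN0, hN1⟩ := integral_stdGaussian_mem_Icc hm hb
  obtain ⟨hJ0, hJ1⟩ := integral_Ioi_mul_stdGaussPDF_mem_Icc hm hb w
  rw [steinSolutionDeriv, steinSolution_eq_Ioi hm hb]
  set N := ∫ y, h y ∂gaussianReal 0 1
  set J := ∫ x in Ioi w, h x * stdGaussPDF x
  set c := w * (stdGaussPDF w)⁻¹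
  have hc : 0 ≤ c := mul_nonneg hw (inv_pos.2 (stdGaussPDF_pos w)).le
  have hmills : c * stdGaussTail w ≤ 1 := by
    rw [show c * stdGaussTail w = w * stdGaussTail w / stdGaussPDF w by simp only [c]; ring]
    exact (div_le_one (stdGaussPDF_pos w)).2 (mul_stdGaussTail_le w)
  have hcJ0 : 0 ≤ c * J := mul_nonneg hc hJ0
  have hcJ1 : c * J ≤ c * stdGaussTail w := mul_le_mul_of_nonneg_left hJ1 hc
  have hN : 0 ≤ N * (1 - c * stdGaussTail w) := mul_nonneg hN0 (by linarith)
  have hN' : N * (1 - c * stdGaussTail w) ≤ 1 - c * stdGaussTail w :=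
    mul_le_of_le_one_left (by linarith) hN1
  rw [show w * ((stdGaussPDF w)⁻¹ * (N * stdGaussTail w - J)) + h w - N =
    h w - N * (1 - c * stdGaussTail w) - c * J by simp only [c]; ring]
  exact abs_le.2 ⟨by linarith [(hb w).1], by linarith [(hb w).2]⟩

lemma abs_steinSolution_le (hm : Measurable h) (hb : ∀ x, h x ∈ Icc 0 1) (w : ℝ) :
    |steinSolution h w| ≤ √(2 * Real.pi) / 2 := by
  rcases le_total 0 w with hw | hw
  · exact abs_steinSolution_le_of_nonneg hm hb hw
  · rw [← abs_neg, ← steinSolution_comp_neg hm hb]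
    exact abs_steinSolution_le_of_nonneg (hm.comp measurable_neg) (fun x => hb (-x))
      (neg_nonneg.2 hw)

lemma abs_steinSolutionDeriv_le (hm : Measurable h) (hb : ∀ x, h x ∈ Icc 0 1) (w : ℝ) :
    |steinSolutionDeriv h w| ≤ 1 := by
  rcases le_total 0 w with hw | hw
  · exact abs_steinSolutionDeriv_le_of_nonneg hm hb hw
  · rw [← steinSolutionDeriv_comp_neg hm hb]
    exact abs_steinSolutionDeriv_le_of_nonneg (hm.comp measurable_neg) (fun x => hb (-x))
      (neg_nonneg.2 hw)

lemma hasDerivAt_integral_Iic {k : ℝ → ℝ} (hk : Integrable k) (hc : Continuous k) (w : ℝ) :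
    HasDerivAt (fun w => ∫ x in Iic w, k x) (k w) w := by
  have hsplit : (fun w => ∫ x in Iic w, k x) =
      fun w => (∫ x in Iic 0, k x) + ∫ x in (0 : ℝ)..w, k x := by
    funext w
    rw [← intervalIntegral.integral_Iic_sub_Iic hk.integrableOn hk.integrableOn, add_sub_cancel]
  rw [hsplit]
  exact (hc.integral_hasStrictDerivAt 0 w).hasDerivAt.const_add _

lemma hasDerivAt_steinSolution (hc : Continuous h) (hb : ∀ x, h x ∈ Icc 0 1) (w : ℝ) :
    HasDerivAt (steinSolution h) (steinSolutionDeriv h w) w := by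
  set N := ∫ y, h y ∂gaussianReal 0 1 with hN
  have hpdf := (stdGaussPDF_pos w).ne'
  have hinv := (hasDerivAt_stdGaussPDF w).inv hpdf
  have hprim := hasDerivAt_integral_Iic (integrable_centered_mul_stdGaussPDF hc.measurable hb N)
    ((hc.sub continuous_const).mul continuous_stdGaussPDF) w
  refine (hinv.mul hprim).congr_deriv ?_
  simp only [steinSolutionDeriv, steinSolution, ← hN]
  field_simp
  simp only [Pi.inv_apply]
  field_simp
  ring

end SteinEquation

section SmoothedIndicator

/-- The continuous function equal to `1` on `(-∞, z]`, to `0` on `[z + α, ∞)`, and affine in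
between; it smooths the indicator of a half-line in Stein's method. -/
def ramp (z α w : ℝ) : ℝ := max 0 (min 1 (1 + (z - w) / α))

variable {z α : ℝ}

lemma continuous_ramp : Continuous (ramp z α) := by
  unfold ramp
  fun_prop

lemma ramp_mem_Icc (w : ℝ) : ramp z α w ∈ Icc 0 1 :=
  ⟨le_max_left _ _, max_le zero_le_one (min_le_left _ _)⟩

lemma ramp_of_le (hα : 0 < α) {w : ℝ} (h : w ≤ z) : ramp z α w = 1 := by
  have : 0 ≤ (z - w) / α := div_nonneg (sub_nonneg.2 h) hα.le
  rw [ramp, min_eq_left (by linarith), max_eq_right zero_le_one]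

lemma ramp_of_ge (hα : 0 < α) {w : ℝ} (h : z + α ≤ w) : ramp z α w = 0 := by
  have : (z - w) / α ≤ -1 := by rw [div_le_iff₀ hα]; linarith
  exact max_eq_left ((min_le_right _ _).trans (by linarith))

lemma abs_ramp_add_sub_le (hα : 0 < α) (w s : ℝ) :
    |ramp z α (w + s) - ramp z α w| ≤ α⁻¹ * |s| := by
  unfold ramp
  refine (abs_max_sub_max_le_max _ _ _ _).trans (max_le (by rw [sub_self, abs_zero]; positivity) ?_)
  refine (abs_min_sub_min_le_max _ _ _ _).trans (max_le (by rw [sub_self, abs_zero]; positivity) ?_)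
  rw [show 1 + (z - (w + s)) / α - (1 + (z - w) / α) = -(α⁻¹ * s) by ring, abs_neg, abs_mul,
    abs_of_pos (inv_pos.2 hα)]

lemma abs_ramp_add_sub_le_indicator (hα : 0 < α) {w s δ : ℝ} (hs : |s| ≤ δ) :
    |ramp z α (w + s) - ramp z α w| ≤
      α⁻¹ * (Ioc (z - δ) (z + α + δ)).indicator 1 w * |s| := by
  by_cases hw : w ∈ Ioc (z - δ) (z + α + δ)
  · rw [indicator_of_mem hw, Pi.one_apply, mul_one]
    exact abs_ramp_add_sub_le hα w s
  · rw [indicator_of_notMem hw, mul_zero, zero_mul, abs_nonpos_iff, sub_eq_zero]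
    obtain ⟨hs1, hs2⟩ := abs_le.1 hs
    have hδ := (abs_nonneg s).trans hs
    rw [mem_Ioc, not_and_or, not_lt, not_le] at hw
    rcases hw with hw | hw
    · rw [ramp_of_le hα (by linarith), ramp_of_le hα (by linarith)]
    · rw [ramp_of_ge hα (by linarith), ramp_of_ge hα (by linarith)]

variable {P : Measure ℝ} [IsProbabilityMeasure P]

lemma integrable_ramp : Integrable (ramp z α) P :=
  .of_bound continuous_ramp.aestronglyMeasurable 1 (ae_of_all _ fun x => by
    rw [Real.norm_of_nonneg (ramp_mem_Icc x).1]; exact (ramp_mem_Icc x).2)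

lemma measureReal_Iic_le_integral_ramp (hα : 0 < α) : P.real (Iic z) ≤ ∫ x, ramp z α x ∂P := by
  rw [← integral_indicator_one measurableSet_Iic]
  refine integral_mono ((integrable_const 1).indicator measurableSet_Iic) integrable_ramp
    (indicator_le' (fun x hx => ?_) fun x _ => (ramp_mem_Icc x).1)
  exact (ramp_of_le hα hx).ge

lemma integral_ramp_le_measureReal_Iic (hα : 0 < α) :
    ∫ x, ramp z α x ∂P ≤ P.real (Iic (z + α)) := by
  rw [← integral_indicator_one measurableSet_Iic]
  refine integral_mono integrable_ramp ((integrable_const 1).indicator measurableSet_Iic)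
    (le_indicator (fun x _ => (ramp_mem_Icc x).2) fun x hx => ?_)
  exact (ramp_of_ge hα (not_le.1 hx).le).le

lemma abs_measureReal_Iic_sub_stdGaussCDF_le (hα : 0 < α) {ε : ℝ}
    (h : ∀ z, |∫ x, ramp z α x ∂P - ∫ x, ramp z α x ∂gaussianReal 0 1| ≤ ε) (z : ℝ) :
    |P.real (Iic z) - stdGaussCDF z| ≤ 0.4 * α + ε := by
  have hbelow := integral_ramp_le_measureReal_Iic (P := P) (z := z - α) hα
  have habove := integral_ramp_le_measureReal_Iic (P := gaussianReal 0 1) (z := z) hα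
  have hgauss := measureReal_Iic_le_integral_ramp (P := gaussianReal 0 1) (z := z - α) hα
  rw [sub_add_cancel] at hbelow
  change stdGaussCDF (z - α) ≤ _ at hgauss
  change _ ≤ stdGaussCDF (z + α) at habove
  rw [abs_le]
  constructor
  · linarith [(abs_le.1 (h (z - α))).1, stdGaussCDF_sub_le (sub_le_self z hα.le)]
  · linarith [(abs_le.1 (h z)).2, stdGaussCDF_sub_le (le_add_of_nonneg_right (a := z) hα.le),
      measureReal_Iic_le_integral_ramp (P := P) (z := z) hα]

lemma measureReal_Ioc_le_of_abs_sub_stdGaussCDF_le {D : ℝ}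
    (hD : ∀ t, |P.real (Iic t) - stdGaussCDF t| ≤ D) {a b : ℝ} (hab : a ≤ b) :
    P.real (Ioc a b) ≤ 0.4 * (b - a) + 2 * D := by
  rw [← Iic_sdiff_Iic, measureReal_sdiff (Iic_subset_Iic.2 hab) measurableSet_Iic]
  linarith [(abs_le.1 (hD a)).1, (abs_le.1 (hD b)).2, stdGaussCDF_sub_le hab]

end SmoothedIndicator

section TaylorRemainder

lemma abs_sub_sub_mul_deriv_le {f f' : ℝ → ℝ} (hf : ∀ x, HasDerivAt f (f' x) x) {w t K : ℝ}
    (hK : ∀ s, |s| ≤ |t| → |f' (w + s) - f' w| ≤ K * |s|) :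
    |f (w + t) - f w - t * f' w| ≤ K * t ^ 2 / 2 := by
  let ψ : ℝ → ℝ := fun s => f (w + s * t) - f w - s * (t * f' w)
  have hψ : ∀ s, HasDerivAt ψ (t * (f' (w + s * t) - f' w)) s := by
    intro s
    have hline : HasDerivAt (fun s : ℝ => w + s * t) t s := by
      simpa using ((hasDerivAt_id s).mul_const t).const_add w
    have hlin : HasDerivAt (fun s : ℝ => s * (t * f' w)) (t * f' w) s := by
      simpa using (hasDerivAt_id s).mul_const (t * f' w)
    exact ((((hf (w + s * t)).comp s hline).sub_const (f w)).sub hlin).congr_deriv (by ring)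
  have hbound : ∀ s ∈ Ico (0 : ℝ) 1, ‖t * (f' (w + s * t) - f' w)‖ ≤ 2 * s * (K * t ^ 2 / 2) := by
    intro s hs
    have hst : |s * t| = s * |t| := by rw [abs_mul, abs_of_nonneg hs.1]
    have hle : |s * t| ≤ |t| := hst.trans_le (mul_le_of_le_one_left (abs_nonneg t) hs.2.le)
    calc ‖t * (f' (w + s * t) - f' w)‖ ≤ |t| * (K * |s * t|) := by
          rw [norm_mul]
          exact mul_le_mul_of_nonneg_left (hK _ hle) (abs_nonneg t)
      _ = 2 * s * (K * t ^ 2 / 2) := by rw [hst, ← sq_abs t]; ring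
  have hψ1 := image_norm_le_of_norm_deriv_right_le_deriv_boundary (f := ψ) (a := 0) (b := 1)
    (B := fun s => s ^ 2 * (K * t ^ 2 / 2)) (B' := fun s => 2 * s * (K * t ^ 2 / 2))
    (fun s _ => (hψ s).continuousAt.continuousWithinAt) (fun s _ => (hψ s).hasDerivWithinAt)
    (by simp [ψ]) (fun s => by simpa using (hasDerivAt_pow 2 s).mul_const (K * t ^ 2 / 2)) hbound
    (right_mem_Icc.2 zero_le_one)
  simpa [ψ] using hψ1

lemma abs_steinSolution_add_sub_le {h : ℝ → ℝ} (hc : Continuous h) (hb : ∀ x, h x ∈ Icc 0 1)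
    (w s : ℝ) : |steinSolution h (w + s) - steinSolution h w| ≤ |s| := by
  simpa using convex_univ.norm_image_sub_le_of_norm_hasDerivWithin_le
    (fun x _ => (hasDerivAt_steinSolution hc hb x).hasDerivWithinAt)
    (fun x _ => abs_steinSolutionDeriv_le hc.measurable hb x) (mem_univ w) (mem_univ (w + s))

lemma abs_steinSolutionDeriv_add_sub_le {h : ℝ → ℝ} (hc : Continuous h)
    (hb : ∀ x, h x ∈ Icc 0 1) {w s L : ℝ} (hL : |h (w + s) - h w| ≤ L * |s|) :
    |steinSolutionDeriv h (w + s) - steinSolutionDeriv h w| ≤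
      (√(2 * Real.pi) / 2 + |w| + L) * |s| := by
  have hdecomp : steinSolutionDeriv h (w + s) - steinSolutionDeriv h w =
      s * steinSolution h (w + s) + w * (steinSolution h (w + s) - steinSolution h w) +
        (h (w + s) - h w) := by
    simp only [steinSolutionDeriv]; ring
  have hfst := mul_le_mul_of_nonneg_left (abs_steinSolution_le hc.measurable hb (w + s))
    (abs_nonneg s)
  have hsnd := mul_le_mul_of_nonneg_left (abs_steinSolution_add_sub_le hc hb w s) (abs_nonneg w)
  rw [hdecomp]
  refine (abs_add_three _ _ _).trans ?_
  rw [abs_mul, abs_mul]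
  linarith

end TaylorRemainder

/-- Resolves the self-referential bound produced by smoothing at scale `α`; the choice
`α = A + √(2.2 A + τ) √(0.8 A) / 0.8` minimises the resulting estimate. -/
lemma le_sqrt_add_sqrt_sq {D A δ τ : ℝ} (hδA : δ ≤ A) (hA : 0 < A) (hτ : 0 ≤ τ)
    (hrec : ∀ α > 0,
      D ≤ 0.4 * α + (τ + A / 2 * (2.26 + α⁻¹ * (0.4 * (α + 2 * δ) + 2 * D)))) :
    D ≤ (√(2.2 * A + τ) + √(0.8 * A)) ^ 2 := by
  set s := √(2.2 * A + τ)
  set r := √(0.8 * A)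
  have hs2 : s ^ 2 = 2.2 * A + τ := Real.sq_sqrt (by positivity)
  have hr2 : r ^ 2 = 0.8 * A := Real.sq_sqrt (by positivity)
  have : 0 < s := Real.sqrt_pos.2 (by positivity)
  have : 0 < r := Real.sqrt_pos.2 (by positivity)
  set α := A + s * r / 0.8 with hα
  have hα0 : 0 < α := by positivity
  have hAα : A ≤ α := by rw [hα]; exact le_add_of_nonneg_right (by positivity)
  have hD : D * α ≤ (0.8 * α + τ + 1.4 * A) * α + A * D := by
    have hexpand : (0.4 * α + (τ + A / 2 * (2.26 + α⁻¹ * (0.4 * (α + 2 * δ) + 2 * D)))) * α =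
        (0.4 * α + τ + 1.33 * A) * α + 0.4 * A * δ + A * D := by field_simp; ring
    have := mul_le_mul_of_nonneg_right (hrec α hα0) hα0.le
    nlinarith [mul_le_mul_of_nonneg_left (hδA.trans hAα) hA.le, mul_pos hA hα0, mul_pos hα0 hα0]
  have hcoeff : 0.8 * α + τ + 1.4 * A = s * (s + r) := by
    rw [show s * (s + r) = s ^ 2 + s * r by ring, hs2, hα]
    ring
  have hα' : α = r * (s + r) / 0.8 := by
    rw [show r * (s + r) = r ^ 2 + s * r by ring, hr2, hα]
    ring
  refine le_of_mul_le_mul_right (a := s * r / 0.8) ?_ (by positivity)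
  calc D * (s * r / 0.8) = D * α - A * D := by rw [hα]; ring
    _ ≤ s * (s + r) * (r * (s + r) / 0.8) := by rw [← hcoeff, ← hα']; linarith
    _ = (s + r) ^ 2 * (s * r / 0.8) := by ring

/-- Bound, at the point `v`, for the first-order Taylor remainder over steps of length at most `δ`
of the Stein solution of `ramp z α`. -/
def steinRemainder (z α δ v : ℝ) : ℝ :=
  δ ^ 2 / 2 * (1.26 + |v| + α⁻¹ * (Ioc (z - δ) (z + α + δ)).indicator 1 v)

lemma measurable_steinRemainder {z α δ : ℝ} : Measurable (steinRemainder z α δ) := by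
  have : Measurable ((Ioc (z - δ) (z + α + δ)).indicator (1 : ℝ → ℝ)) :=
    measurable_one.indicator measurableSet_Ioc
  unfold steinRemainder
  fun_prop

lemma steinRemainder_nonneg {z α δ : ℝ} (hα : 0 ≤ α) (v : ℝ) : 0 ≤ steinRemainder z α δ v := by
  have : 0 ≤ (Ioc (z - δ) (z + α + δ)).indicator (1 : ℝ → ℝ) v :=
    indicator_nonneg (fun _ _ => zero_le_one) v
  unfold steinRemainder
  positivity

lemma steinRemainder_le {z α δ : ℝ} (hα : 0 ≤ α) (v : ℝ) :
    steinRemainder z α δ v ≤ δ ^ 2 / 2 * (1.26 + |v| + α⁻¹ * 1) := by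
  have : (Ioc (z - δ) (z + α + δ)).indicator (1 : ℝ → ℝ) v ≤ 1 :=
    indicator_le' (fun _ _ => le_rfl) (fun _ _ => zero_le_one) v
  unfold steinRemainder
  gcongr

lemma abs_steinSolution_ramp_sub_le {z α δ : ℝ} (hα : 0 < α) {v t : ℝ} (ht : |t| ≤ δ) :
    |steinSolution (ramp z α) (v + t) - steinSolution (ramp z α) v -
      t * steinSolutionDeriv (ramp z α) v| ≤ steinRemainder z α δ v := by
  have hsq : t ^ 2 ≤ δ ^ 2 := sq_le_sq' (abs_le.1 ht).1 (abs_le.1 ht).2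
  have hsqrt : √(2 * Real.pi) / 2 ≤ 1.26 := by
    rw [div_le_iff₀ two_pos]
    exact (Real.sqrt_le_left (by norm_num)).2 (by nlinarith [Real.pi_lt_d2])
  have hχ : 0 ≤ (Ioc (z - δ) (z + α + δ)).indicator (1 : ℝ → ℝ) v :=
    indicator_nonneg (fun _ _ => zero_le_one) v
  calc _ ≤ (√(2 * Real.pi) / 2 + |v| + α⁻¹ * (Ioc (z - δ) (z + α + δ)).indicator 1 v) *
        t ^ 2 / 2 :=
        abs_sub_sub_mul_deriv_le (hasDerivAt_steinSolution continuous_ramp ramp_mem_Icc)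
          fun s hs => abs_steinSolutionDeriv_add_sub_le continuous_ramp ramp_mem_Icc
            (abs_ramp_add_sub_le_indicator hα (hs.trans ht))
    _ ≤ (1.26 + |v| + α⁻¹ * (Ioc (z - δ) (z + α + δ)).indicator 1 v) * δ ^ 2 / 2 := by gcongr
    _ = steinRemainder z α δ v := by unfold steinRemainder; ring

lemma continuous_steinSolutionDeriv {h : ℝ → ℝ} (hc : Continuous h)
    (hb : ∀ x, h x ∈ Icc (0 : ℝ) 1) : Continuous (steinSolutionDeriv h) := by
  have : Continuous (steinSolution h) :=
    continuous_iff_continuousAt.2 fun x => (hasDerivAt_steinSolution hc hb x).continuousAt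
  unfold steinSolutionDeriv
  fun_prop

section SteinCoupling

lemma integrable_of_abs_le {Ω : Type*} [MeasurableSpace Ω] {Q : Measure Ω} [IsFiniteMeasure Q]
    {F : Ω → ℝ} (hF : Measurable F) {K : ℝ} (hK : ∀ ω, |F ω| ≤ K) : Integrable F Q :=
  .of_bound hF.aestronglyMeasurable K (ae_of_all _ hK)

variable {Ω : Type*} [MeasurableSpace Ω] {ι : Type*} [Fintype ι]

/-- A weighted Stein coupling for `W`: perturbations `W' a` of `W`, at distance at most `δ` from it,
carry signed weights `w a` such that `E[W g(W)] = E[∑ a, w a (g(W' a) - g(W))]` for continuous `g`.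
Given `W`, the total absolute weight has mean at most `m`, and the conditional expectation of
`∑ a, w a (W' a - W)` is within `τ` of `1` in `L¹`; the last two properties are stated through test
functions of `W`. -/
structure SteinCoupling (Q : Measure Ω) (W : Ω → ℝ) (w W' : ι → Ω → ℝ) (δ m τ : ℝ) : Prop where
  measurable : Measurable W
  bounded : ∃ C, ∀ ω, |W ω| ≤ C
  measurable_weight : ∀ a, Measurable (w a)
  bounded_weight : ∀ a, ∃ C, ∀ ω, |w a ω| ≤ C
  measurable_coupled : ∀ a, Measurable (W' a)
  abs_sub_le : ∀ a ω, |W' a ω - W ω| ≤ δ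
  integral_mul_eq : ∀ g : ℝ → ℝ, Continuous g →
    ∫ ω, W ω * g (W ω) ∂Q = ∫ ω, ∑ a, w a ω * (g (W' a ω) - g (W ω)) ∂Q
  integral_weight_le : ∀ u : ℝ → ℝ, Measurable u → (∀ x, 0 ≤ u x) → (∃ K, ∀ ω, u (W ω) ≤ K) →
    ∫ ω, (∑ a, |w a ω|) * u (W ω) ∂Q ≤ m * ∫ ω, u (W ω) ∂Q
  abs_integral_sub_le : ∀ u : ℝ → ℝ, Measurable u → (∀ x, |u x| ≤ 1) →
    |∫ ω, u (W ω) ∂Q - ∫ ω, ∑ a, w a ω * (W' a ω - W ω) * u (W ω) ∂Q| ≤ τ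

namespace SteinCoupling

variable {Q : Measure Ω} [IsProbabilityMeasure Q] {W : Ω → ℝ} {w W' : ι → Ω → ℝ} {δ m τ : ℝ}
  (S : SteinCoupling Q W w W' δ m τ)
include S

lemma integrable_comp {g : ℝ → ℝ} (hg : Continuous g) : Integrable (fun ω => g (W ω)) Q := by
  obtain ⟨C, hC⟩ := S.bounded
  obtain ⟨K, hK⟩ := (isCompact_Icc (a := -C) (b := C)).exists_bound_of_continuousOn hg.continuousOn
  exact integrable_of_abs_le (hg.measurable.comp S.measurable) fun ω => hK _ (abs_le.1 (hC ω))

lemma integrable_sum_weight_mul {G : ι → Ω → ℝ} (hG : ∀ a, Measurable (G a)) {K : ℝ}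
    (hK : ∀ a ω, |G a ω| ≤ K) : Integrable (fun ω => ∑ a, w a ω * G a ω) Q := by
  refine integrable_finsetSum _ fun a _ => ?_
  obtain ⟨C, hC⟩ := S.bounded_weight a
  exact (integrable_of_abs_le (S.measurable_weight a) hC).mul_bdd (hG a).aestronglyMeasurable
    (ae_of_all _ (hK a))

lemma integrable_sum_abs_weight : Integrable (fun ω => ∑ a, |w a ω|) Q := by
  refine integrable_finsetSum _ fun a _ => ?_
  obtain ⟨C, hC⟩ := S.bounded_weight a
  exact (integrable_of_abs_le (S.measurable_weight a) hC).abs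

lemma abs_integral_sum_weight_mul_le {G : ι → Ω → ℝ} {u : ℝ → ℝ} (hu : Measurable u)
    (hGu : ∀ a ω, |G a ω| ≤ u (W ω)) (hu0 : ∀ x, 0 ≤ u x) (hub : ∃ K, ∀ ω, u (W ω) ≤ K) :
    |∫ ω, ∑ a, w a ω * G a ω ∂Q| ≤ m * ∫ ω, u (W ω) ∂Q := by
  obtain ⟨K, hK⟩ := hub
  refine le_trans ?_ (S.integral_weight_le u hu hu0 ⟨K, hK⟩)
  rw [← Real.norm_eq_abs]
  refine norm_integral_le_of_norm_le (S.integrable_sum_abs_weight.mul_bdd (c := K)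
    (hu.comp S.measurable).aestronglyMeasurable (ae_of_all _ fun ω => ?_)) (ae_of_all _ fun ω => ?_)
  · exact (Real.norm_of_nonneg (hu0 _)).trans_le (hK ω)
  · rw [Finset.sum_mul]
    refine (norm_sum_le _ _).trans (Finset.sum_le_sum fun a _ => ?_)
    rw [norm_mul]
    exact mul_le_mul_of_nonneg_left (hGu a ω) (norm_nonneg _)

lemma abs_integral_deriv_sub_mul_le {f f' : ℝ → ℝ} (hf : ∀ x, HasDerivAt f (f' x) x)
    (hf'c : Continuous f') (hf' : ∀ x, |f' x| ≤ 1) {u : ℝ → ℝ} (hu : Measurable u)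
    (hu0 : ∀ x, 0 ≤ u x) (hub : ∃ K, ∀ ω, u (W ω) ≤ K)
    (hrem : ∀ a ω, |f (W' a ω) - f (W ω) - (W' a ω - W ω) * f' (W ω)| ≤ u (W ω)) :
    |∫ ω, (f' (W ω) - W ω * f (W ω)) ∂Q| ≤ τ + m * ∫ ω, u (W ω) ∂Q := by
  have hfc : Continuous f := continuous_iff_continuousAt.2 fun x => (hf x).continuousAt
  have hW := S.measurable
  have hW' := S.measurable_coupled
  have hmf' := hf'c.measurable.comp hW
  obtain ⟨K, hK⟩ := hub
  have hremI := S.integrable_sum_weight_mul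
    (fun a => ((hfc.measurable.comp (hW' a)).sub (hfc.measurable.comp hW)).sub
      (((hW' a).sub hW).mul hmf')) fun a ω => (hrem a ω).trans (hK ω)
  have hlinI := S.integrable_sum_weight_mul (K := δ * 1) (fun a => ((hW' a).sub hW).mul hmf')
    fun a ω => by
      simp only [Pi.mul_apply, Pi.sub_apply, Function.comp_apply, abs_mul]
      exact mul_le_mul (S.abs_sub_le a ω) (hf' _) (abs_nonneg _)
        ((abs_nonneg _).trans (S.abs_sub_le a ω))
  have hsplit : ∫ ω, W ω * f (W ω) ∂Q =
      ∫ ω, ∑ a, w a ω * (f (W' a ω) - f (W ω) - (W' a ω - W ω) * f' (W ω)) ∂Q +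
        ∫ ω, ∑ a, w a ω * (W' a ω - W ω) * f' (W ω) ∂Q := by
    simp only [mul_assoc]
    rw [S.integral_mul_eq f hfc]
    refine (integral_congr_ae (ae_of_all _ fun ω => ?_)).trans (integral_add hremI hlinI)
    simp only [← Finset.sum_add_distrib, ← mul_add, sub_add_cancel]
  rw [integral_sub (S.integrable_comp hf'c)
    (S.integrable_comp (g := fun x => x * f x) (by fun_prop)), hsplit,
    sub_add_eq_sub_sub_swap]
  exact (abs_sub _ _).trans (add_le_add (S.abs_integral_sub_le f' hf'c.measurable hf')
    (S.abs_integral_sum_weight_mul_le hu hrem hu0 ⟨K, hK⟩))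

lemma integral_abs_le_one (hvar : ∫ ω, W ω ^ 2 ∂Q = 1) : ∫ ω, |W ω| ∂Q ≤ 1 := by
  have hsq : Integrable (fun ω => 1 / 2 * (1 + W ω ^ 2)) Q :=
    S.integrable_comp (g := fun x => 1 / 2 * (1 + x ^ 2)) (by fun_prop)
  calc ∫ ω, |W ω| ∂Q ≤ ∫ ω, 1 / 2 * (1 + W ω ^ 2) ∂Q :=
        integral_mono (S.integrable_comp continuous_abs) hsq fun ω => by
          have := sq_nonneg (|W ω| - 1)
          rw [sub_sq, sq_abs] at this
          linarith
    _ = 1 := by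
        rw [integral_const_mul, integral_add (integrable_const _)
          (S.integrable_comp (continuous_pow 2)), hvar]
        norm_num

lemma one_le_mul (hvar : ∫ ω, W ω ^ 2 ∂Q = 1) : 0 < δ ∧ 0 < m ∧ 1 ≤ m * δ := by
  have htot := S.integral_weight_le (fun _ => 1) measurable_const (fun _ => zero_le_one)
    ⟨1, fun _ => le_rfl⟩
  simp only [mul_one, integral_const, probReal_univ, smul_eq_mul] at htot
  have htot0 : 0 ≤ ∫ ω, ∑ a, |w a ω| ∂Q :=
    integral_nonneg fun ω => Finset.sum_nonneg fun a _ => abs_nonneg _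
  have hone : 1 ≤ (∫ ω, ∑ a, |w a ω| ∂Q) * δ := by
    rw [← hvar, ← integral_mul_const]
    simp only [sq]
    rw [S.integral_mul_eq (fun x => x) continuous_id]
    refine integral_mono (S.integrable_sum_weight_mul
      (fun a => (S.measurable_coupled a).sub S.measurable) S.abs_sub_le)
      (S.integrable_sum_abs_weight.mul_const δ) fun ω => ?_
    simp only [Finset.sum_mul]
    refine Finset.sum_le_sum fun a _ => (le_abs_self _).trans ?_
    rw [abs_mul]
    exact mul_le_mul_of_nonneg_left (S.abs_sub_le a ω) (abs_nonneg _)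
  have hδ : 0 < δ := pos_of_mul_pos_right (one_pos.trans_le hone) htot0
  have hmδ : 1 ≤ m * δ := hone.trans (mul_le_mul_of_nonneg_right htot hδ.le)
  exact ⟨hδ, pos_of_mul_pos_left (one_pos.trans_le hmδ) hδ.le, hmδ⟩

omit [IsProbabilityMeasure Q] in
lemma nonneg : 0 ≤ τ :=
  (abs_nonneg _).trans (S.abs_integral_sub_le (fun _ => 0) measurable_const
    fun _ => by simp only [abs_zero, zero_le_one])

lemma integral_indicator_le {D : ℝ}
    (hD : ∀ t, |Q.real {ω | W ω ≤ t} - stdGaussCDF t| ≤ D) {a b : ℝ} (hab : a ≤ b) :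
    ∫ ω, (Ioc a b).indicator (1 : ℝ → ℝ) (W ω) ∂Q ≤ 0.4 * (b - a) + 2 * D := by
  have := Measure.isProbabilityMeasure_map (μ := Q) S.measurable.aemeasurable
  rw [← integral_map (f := (Ioc a b).indicator 1) S.measurable.aemeasurable
    (measurable_one.indicator measurableSet_Ioc).aestronglyMeasurable,
    integral_indicator_one measurableSet_Ioc]
  refine measureReal_Ioc_le_of_abs_sub_stdGaussCDF_le (fun t => ?_) hab
  rw [map_measureReal_apply S.measurable measurableSet_Iic]
  exact hD t

lemma integral_steinRemainder_le (hvar : ∫ ω, W ω ^ 2 ∂Q = 1) {D : ℝ}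
    (hD : ∀ t, |Q.real {ω | W ω ≤ t} - stdGaussCDF t| ≤ D) (z : ℝ) {α : ℝ} (hα : 0 < α) :
    ∫ ω, steinRemainder z α δ (W ω) ∂Q ≤
      δ ^ 2 / 2 * (2.26 + α⁻¹ * (0.4 * (α + 2 * δ) + 2 * D)) := by
  obtain ⟨hδ, -, -⟩ := S.one_le_mul hvar
  set χ : ℝ → ℝ := (Ioc (z - δ) (z + α + δ)).indicator 1
  have hχE := S.integral_indicator_le hD (show z - δ ≤ z + α + δ by linarith)
  rw [show z + α + δ - (z - δ) = α + 2 * δ by ring] at hχE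
  have hχ : Integrable (fun ω => χ (W ω)) Q := by
    refine integrable_of_abs_le (K := 1)
      ((measurable_one.indicator measurableSet_Ioc).comp S.measurable) fun ω => ?_
    rw [abs_of_nonneg (indicator_nonneg (f := (1 : ℝ → ℝ)) (fun _ _ => zero_le_one) _)]
    exact indicator_le' (fun _ _ => le_rfl) (fun _ _ => zero_le_one) _
  have habs : Integrable (fun ω => 1.26 + |W ω|) Q :=
    S.integrable_comp (g := fun x => 1.26 + |x|) (by fun_prop)
  simp only [steinRemainder]
  rw [integral_const_mul, integral_add habs (hχ.const_mul _), integral_add (integrable_const _)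
    (S.integrable_comp continuous_abs), integral_const_mul, integral_const, probReal_univ, one_smul]
  gcongr
  linarith [S.integral_abs_le_one hvar]

lemma abs_integral_ramp_sub_le (hvar : ∫ ω, W ω ^ 2 ∂Q = 1) {D : ℝ}
    (hD : ∀ t, |Q.real {ω | W ω ≤ t} - stdGaussCDF t| ≤ D) (z : ℝ) {α : ℝ} (hα : 0 < α) :
    |∫ ω, ramp z α (W ω) ∂Q - ∫ x, ramp z α x ∂gaussianReal 0 1| ≤
      τ + m * δ ^ 2 / 2 * (2.26 + α⁻¹ * (0.4 * (α + 2 * δ) + 2 * D)) := by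
  obtain ⟨-, hm, -⟩ := S.one_le_mul hvar
  have hbdd : ∃ K, ∀ ω, steinRemainder z α δ (W ω) ≤ K := by
    obtain ⟨C, hC⟩ := S.bounded
    refine ⟨δ ^ 2 / 2 * (1.26 + C + α⁻¹ * 1), fun ω => (steinRemainder_le hα.le _).trans ?_⟩
    gcongr
    exact hC ω
  have hrem : ∀ a ω, |steinSolution (ramp z α) (W' a ω) - steinSolution (ramp z α) (W ω) -
      (W' a ω - W ω) * steinSolutionDeriv (ramp z α) (W ω)| ≤ steinRemainder z α δ (W ω) :=
    fun a ω => by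
      have htaylor := abs_steinSolution_ramp_sub_le (z := z) hα (v := W ω) (S.abs_sub_le a ω)
      rwa [add_sub_cancel] at htaylor
  have hstein : ∫ ω, (steinSolutionDeriv (ramp z α) (W ω) - W ω * steinSolution (ramp z α) (W ω)) ∂Q
      = ∫ ω, ramp z α (W ω) ∂Q - ∫ x, ramp z α x ∂gaussianReal 0 1 := by
    have hpt : ∀ x, steinSolutionDeriv (ramp z α) x - x * steinSolution (ramp z α) x =
        ramp z α x - ∫ x, ramp z α x ∂gaussianReal 0 1 := fun x => by
      unfold steinSolutionDeriv
      ring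
    simp only [hpt]
    rw [integral_sub (S.integrable_comp continuous_ramp) (integrable_const _), integral_const,
      probReal_univ, one_smul]
  calc |∫ ω, ramp z α (W ω) ∂Q - ∫ x, ramp z α x ∂gaussianReal 0 1|
      ≤ τ + m * ∫ ω, steinRemainder z α δ (W ω) ∂Q := by
        rw [← hstein]
        exact S.abs_integral_deriv_sub_mul_le
          (hasDerivAt_steinSolution continuous_ramp ramp_mem_Icc)
          (continuous_steinSolutionDeriv continuous_ramp ramp_mem_Icc)
          (abs_steinSolutionDeriv_le continuous_ramp.measurable ramp_mem_Icc)
          measurable_steinRemainder (steinRemainder_nonneg hα.le) hbdd hrem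
    _ ≤ τ + m * (δ ^ 2 / 2 * (2.26 + α⁻¹ * (0.4 * (α + 2 * δ) + 2 * D))) :=
        add_le_add_right (mul_le_mul_of_nonneg_left
          (S.integral_steinRemainder_le hvar hD z hα) hm.le) τ
    _ = _ := by ring

theorem iSup_abs_sub_stdGaussCDF_le (hvar : ∫ ω, W ω ^ 2 ∂Q = 1) :
    ⨆ t, |(Q {ω | W ω ≤ t}).toReal - stdGaussCDF t| ≤
      (√(2.2 * (m * δ ^ 2) + τ) + √(0.8 * (m * δ ^ 2))) ^ 2 := by
  obtain ⟨hδ, hm, hmδ⟩ := S.one_le_mul hvar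
  have hτ := S.nonneg
  have hbdd : BddAbove (range fun t => |(Q {ω | W ω ≤ t}).toReal - stdGaussCDF t|) := by
    refine ⟨1, forall_mem_range.2 fun t => ?_⟩
    have habs := abs_sub_le_of_le_of_le (measureReal_nonneg (μ := Q) (s := {ω | W ω ≤ t}))
      measureReal_le_one
      (measureReal_nonneg (μ := gaussianReal 0 1) (s := Iic t)) measureReal_le_one
    rwa [sub_zero] at habs
  refine le_sqrt_add_sqrt_sq (δ := δ) ?_ (by positivity) hτ fun α hα => ciSup_le fun z => ?_
  · rw [sq, ← mul_assoc]
    exact le_mul_of_one_le_left hδ.le hmδ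
  have := Measure.isProbabilityMeasure_map (μ := Q) S.measurable.aemeasurable
  have hIic := abs_measureReal_Iic_sub_stdGaussCDF_le (P := Q.map W) hα (ε := τ + m * δ ^ 2 / 2 *
    (2.26 + α⁻¹ * (0.4 * (α + 2 * δ) +
      2 * ⨆ t, |(Q {ω | W ω ≤ t}).toReal - stdGaussCDF t|))) (fun z => ?_) z
  · rw [map_measureReal_apply S.measurable measurableSet_Iic] at hIic
    exact hIic
  · rw [integral_map S.measurable.aemeasurable continuous_ramp.aestronglyMeasurable]
    exact S.abs_integral_ramp_sub_le hvar (fun t => le_ciSup hbdd t) z hα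

omit S in
theorem kolDist_le {X : Ω → ℝ} (hX : Measurable X) {μ σ B Δ : ℝ} (hσ : 0 < σ)
    (hσX : variance X Q = σ ^ 2)
    (S : SteinCoupling Q (fun ω => (X ω - ∫ x, X x ∂Q) / σ) w W' (B / σ) (μ / σ)
      (μ * Δ / σ ^ 2)) :
    kolDist Q X ≤ μ / (5 * σ ^ 2) * (√(11 * B ^ 2 / σ + 5 * Δ) + 2 * B / √σ) ^ 2 := by
  have hvar : ∫ ω, ((X ω - ∫ x, X x ∂Q) / σ) ^ 2 ∂Q = 1 := by
    simp only [div_pow]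
    rw [integral_div, ← variance_eq_integral hX.aemeasurable, hσX, div_self (by positivity)]
  obtain ⟨hBσ, hμσ, -⟩ := S.one_le_mul hvar
  have hB : 0 < B := (div_pos_iff_of_pos_right hσ).1 hBσ
  have hμ : 0 < μ := (div_pos_iff_of_pos_right hσ).1 hμσ
  have : 0 ≤ Δ := by
    by_contra! hΔ
    exact S.nonneg.not_gt (div_neg_of_neg_of_pos (mul_neg_of_pos_of_neg hμ hΔ) (by positivity))
  rw [kolDist, hσX, Real.sqrt_sq hσ.le]
  refine (S.iSup_abs_sub_stdGaussCDF_le hvar).trans_eq ?_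
  set c := μ / (5 * σ ^ 2) with hc
  have hfirst : 2.2 * (μ / σ * (B / σ) ^ 2) + μ * Δ / σ ^ 2 = c * (11 * B ^ 2 / σ + 5 * Δ) := by
    rw [hc]
    field_simp
    ring
  have hsecond : 0.8 * (μ / σ * (B / σ) ^ 2) = c * ((2 * B) ^ 2 / σ) := by
    rw [hc]
    field_simp
    ring
  rw [hfirst, hsecond, Real.sqrt_mul (by positivity), Real.sqrt_mul (by positivity),
    Real.sqrt_div (sq_nonneg (2 * B)), Real.sqrt_sq (by positivity), ← mul_add, mul_pow,
    Real.sq_sqrt (by positivity)]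

end SteinCoupling

end SteinCoupling

section ExchangeWeight

/-- The weights `∫₀¹ (u(1-p))ᵏ (1-pu)ᵐ⁻¹⁻ᵏ du`, designed so that for `m` events of probability `p`
the indicator that at least one of them occurs, centred as under independence, is a weighted sum of
the centred indicators of the single events. -/
def exchangeWeight (p : ℝ) (m k : ℕ) : ℝ :=
  ∫ u in (0 : ℝ)..1, (u * (1 - p)) ^ k * (1 - p * u) ^ (m - 1 - k)

lemma intervalIntegrable_exchangeWeight (p : ℝ) (a b : ℕ) :
    IntervalIntegrable (fun u : ℝ => (u * (1 - p)) ^ a * (1 - p * u) ^ b) volume 0 1 :=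
  Continuous.intervalIntegrable (by fun_prop) _ _

lemma hasDerivAt_mul_pow_mul_sub_pow (p : ℝ) {m k : ℕ} (hk : k ≤ m) (u : ℝ) :
    HasDerivAt (fun u : ℝ => (u * (1 - p)) ^ k * (1 - p * u) ^ (m - k))
      (k * (1 - p) * ((u * (1 - p)) ^ (k - 1) * (1 - p * u) ^ (m - 1 - (k - 1))) -
        (m - k) * p * ((u * (1 - p)) ^ k * (1 - p * u) ^ (m - 1 - k))) u := by
  have hleft : HasDerivAt (fun u : ℝ => u * (1 - p)) (1 - p) u := by
    simpa only [id, one_mul] using (hasDerivAt_id u).mul_const (1 - p)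
  have hright : HasDerivAt (fun u : ℝ => 1 - p * u) (-p) u := by
    simpa only [id, mul_one] using ((hasDerivAt_id u).const_mul p).const_sub 1
  refine ((hleft.pow k).mul (hright.pow (m - k))).congr_deriv ?_
  simp only [Pi.pow_apply]
  rw [Nat.cast_sub hk, Nat.sub_right_comm m k 1]
  rcases k with _ | k
  · simp only [Nat.cast_zero, pow_zero]
    ring
  · rw [show m - 1 - (k + 1 - 1) = m - (k + 1) by omega]
    ring

lemma exchangeWeight_sub_exchangeWeight (p : ℝ) {m k : ℕ} (hk : k ≤ m) :
    k * (1 - p) * exchangeWeight p m (k - 1) - (m - k) * p * exchangeWeight p m k =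
      (if k = 0 then 0 else 1) - (1 - (1 - p) ^ m) := by
  have hftc := intervalIntegral.integral_eq_sub_of_hasDerivAt (a := 0) (b := 1)
    (fun u _ => hasDerivAt_mul_pow_mul_sub_pow p hk u)
    (Continuous.intervalIntegrable (by fun_prop) _ _)
  rw [intervalIntegral.integral_sub ((intervalIntegrable_exchangeWeight _ _ _).const_mul _)
    ((intervalIntegrable_exchangeWeight _ _ _).const_mul _), intervalIntegral.integral_const_mul,
    intervalIntegral.integral_const_mul] at hftc
  rw [exchangeWeight, exchangeWeight, hftc, one_mul, mul_one, zero_mul, ← pow_add,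
    Nat.add_sub_cancel' hk, mul_zero, sub_zero, one_pow, mul_one, zero_pow_eq]
  split_ifs <;> ring

lemma exchangeWeight_nonneg {p : ℝ} (hp : p ∈ Icc 0 1) (m k : ℕ) : 0 ≤ exchangeWeight p m k := by
  refine intervalIntegral.integral_nonneg zero_le_one fun u hu => mul_nonneg (pow_nonneg ?_ _)
    (pow_nonneg (sub_nonneg.2 (mul_le_one₀ hp.2 hu.1 hu.2)) _)
  exact mul_nonneg hu.1 (sub_nonneg.2 hp.2)

lemma exchangeWeight_le {p : ℝ} (hp : p ∈ Icc 0 1) {m k : ℕ} (hk : k ≤ m - 1) :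
    exchangeWeight p m k ≤ exchangeWeight p m 0 := by
  refine intervalIntegral.integral_mono_on zero_le_one (intervalIntegrable_exchangeWeight _ _ _)
    (intervalIntegrable_exchangeWeight _ _ _) fun u hu => ?_
  have hpu : 0 ≤ 1 - p * u := sub_nonneg.2 (mul_le_one₀ hp.2 hu.1 hu.2)
  have hu0 : 0 ≤ u * (1 - p) := mul_nonneg hu.1 (sub_nonneg.2 hp.2)
  calc (u * (1 - p)) ^ k * (1 - p * u) ^ (m - 1 - k)
      ≤ (1 - p * u) ^ k * (1 - p * u) ^ (m - 1 - k) := by gcongr; linarith [hu.2]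
    _ = (u * (1 - p)) ^ 0 * (1 - p * u) ^ (m - 1 - 0) := by
        rw [← pow_add, Nat.add_sub_cancel' hk, pow_zero, one_mul, Nat.sub_zero]

lemma mul_exchangeWeight_zero (p : ℝ) (m : ℕ) :
    m * (p * exchangeWeight p m 0) = 1 - (1 - p) ^ m := by
  have h := exchangeWeight_sub_exchangeWeight p (Nat.zero_le m)
  rw [if_pos rfl, Nat.cast_zero, zero_mul, zero_mul, sub_zero] at h
  linarith

lemma sum_exchangeWeight_mul_indicator_sub {ι : Type*} [DecidableEq ι] (s : Finset ι) (p : ℝ)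
    (A : ι → Prop) :
    ∑ j ∈ s, exchangeWeight p s.card ((s.erase j).filter A).card * ((if A j then 1 else 0) - p) =
      (if ∃ j ∈ s, A j then 1 else 0) - (1 - (1 - p) ^ s.card) := by
  set k := (s.filter A).card with hk
  have hin : ∀ j ∈ s.filter A,
      exchangeWeight p s.card ((s.erase j).filter A).card * ((if A j then 1 else 0) - p) =
        exchangeWeight p s.card (k - 1) * (1 - p) := fun j hj => by
    rw [Finset.filter_erase, Finset.card_erase_of_mem hj, if_pos (Finset.mem_filter.1 hj).2]
  have hout : ∀ j ∈ s.filter (¬A ·),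
      exchangeWeight p s.card ((s.erase j).filter A).card * ((if A j then 1 else 0) - p) =
        exchangeWeight p s.card k * (0 - p) := fun j hj => by
    have hA := (Finset.mem_filter.1 hj).2
    rw [Finset.filter_erase, Finset.erase_eq_of_notMem fun h => hA (Finset.mem_filter.1 h).2,
      if_neg hA]
  have hcard : ((s.filter (¬A ·)).card : ℝ) = s.card - k := by
    rw [← Finset.card_filter_add_card_filter_not (s := s) A]
    push_cast
    ring
  have hzero : (∃ j ∈ s, A j) ↔ ¬k = 0 := by
    rw [hk, Finset.card_eq_zero, Finset.filter_eq_empty_iff]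
    push Not
    rfl
  rw [← Finset.sum_filter_add_sum_filter_not s A, Finset.sum_congr rfl hin,
    Finset.sum_congr rfl hout, Finset.sum_const, Finset.sum_const, nsmul_eq_mul, nsmul_eq_mul,
    hcard, if_congr hzero rfl rfl, ite_not,
    ← exchangeWeight_sub_exchangeWeight p (Finset.card_filter_le s A)]
  ring

end ExchangeWeight

section EfronStein

lemma sq_integral_le_integral_sq {Ω : Type*} [MeasurableSpace Ω] {Q : Measure Ω}
    [IsProbabilityMeasure Q] {X : Ω → ℝ} (hX : MemLp X 2 Q) :
    (∫ ω, X ω ∂Q) ^ 2 ≤ ∫ ω, X ω ^ 2 ∂Q := by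
  have h := variance_nonneg X Q
  rw [variance_eq_sub hX] at h
  exact sub_nonneg.1 h

lemma variance_le_integral_sub_sq {Ω : Type*} [MeasurableSpace Ω] {Q : Measure Ω}
    [IsProbabilityMeasure Q] {X : Ω → ℝ} (hX : AEStronglyMeasurable X Q) (c : ℝ) :
    variance X Q ≤ ∫ ω, (X ω - c) ^ 2 ∂Q := by
  rw [← variance_sub_const hX c]
  exact variance_le_expectation_sq (hX.sub aestronglyMeasurable_const)

lemma memLp_two_of_abs_le {Ω : Type*} [MeasurableSpace Ω] {Q : Measure Ω} [IsFiniteMeasure Q]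
    {F : Ω → ℝ} {K : ℝ} (hF : Measurable F) (hK : ∀ ω, |F ω| ≤ K) : MemLp F 2 Q :=
  .of_bound hF.aestronglyMeasurable K (.of_forall hK)

lemma abs_integral_le_of_abs_le {Ω : Type*} [MeasurableSpace Ω] {Q : Measure Ω}
    [IsProbabilityMeasure Q] {F : Ω → ℝ} {K : ℝ} (hK : ∀ ω, |F ω| ≤ K) : |∫ ω, F ω ∂Q| ≤ K := by
  simpa only [Real.norm_eq_abs, probReal_univ, mul_one] using
    norm_integral_le_of_norm_le_const (μ := Q) (f := F) (ae_of_all _ hK)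

section Prod

variable {α β : Type*} [MeasurableSpace α] [MeasurableSpace β] {ν : Measure α} {μ : Measure β}
  [IsProbabilityMeasure ν] [IsProbabilityMeasure μ] {f : α × β → ℝ} {K : ℝ}

lemma measurable_integral_section (hf : Measurable f) : Measurable fun x => ∫ y, f (x, y) ∂μ :=
  hf.stronglyMeasurable.integral_prod_right'.measurable

lemma variance_prod_eq (hf : Measurable f) (hK : ∀ z, |f z| ≤ K) :
    variance f (ν.prod μ) =
      ∫ x, variance (fun y => f (x, y)) μ ∂ν + variance (fun x => ∫ y, f (x, y) ∂μ) ν := by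
  have hF : Measurable fun x => ∫ y, f (x, y) ∂μ := measurable_integral_section hf
  have hFK : ∀ x, |∫ y, f (x, y) ∂μ| ≤ K := fun x => abs_integral_le_of_abs_le fun y => hK _
  have hsq := (memLp_two_of_abs_le (Q := ν.prod μ) hf hK).integrable_sq
  have hvar : ∀ x, variance (fun y => f (x, y)) μ =
      ∫ y, f (x, y) ^ 2 ∂μ - (∫ y, f (x, y) ∂μ) ^ 2 := fun x =>
    variance_eq_sub (memLp_two_of_abs_le (hf.comp measurable_prodMk_left) fun y => hK _)
  simp only [hvar]
  rw [integral_sub hsq.integral_prod_left (memLp_two_of_abs_le hF hFK).integrable_sq,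
    variance_eq_sub (memLp_two_of_abs_le hF hFK), variance_eq_sub (memLp_two_of_abs_le hf hK)]
  simp only [Pi.pow_apply]
  rw [← integral_prod (fun z => f z ^ 2) hsq, ← integral_prod f (integrable_of_abs_le hf hK)]
  ring

lemma variance_prod_le {g : β → ℝ} (hf : Measurable f) (hK : ∀ z, |f z| ≤ K) (hg : Measurable g)
    (hgK : ∀ y, |g y| ≤ K) :
    variance f (ν.prod μ) ≤
      ∫ x, variance (fun y => f (x, y)) μ ∂ν + ∫ z, (f z - g z.2) ^ 2 ∂ν.prod μ := by
  have hfx : ∀ x, Measurable fun y => f (x, y) := fun x => hf.comp measurable_prodMk_left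
  have hsub : ∀ z : α × β, |f z - g z.2| ≤ K + K := fun z =>
    (abs_sub _ _).trans (add_le_add (hK z) (hgK _))
  have hF := measurable_integral_section (μ := μ) hf
  have hL2 := memLp_two_of_abs_le (Q := ν.prod μ) (hf.sub (hg.comp measurable_snd)) hsub
  have hFK : ∀ x, |∫ y, f (x, y) ∂μ - ∫ y, g y ∂μ| ≤ K + K := fun x =>
    (abs_sub _ _).trans (add_le_add (abs_integral_le_of_abs_le fun y => hK _)
      (abs_integral_le_of_abs_le hgK))
  have hjensen : ∀ x, (∫ y, f (x, y) ∂μ - ∫ y, g y ∂μ) ^ 2 ≤ ∫ y, (f (x, y) - g y) ^ 2 ∂μ :=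
    fun x => by
      rw [← integral_sub (integrable_of_abs_le (hfx x) fun y => hK _) (integrable_of_abs_le hg hgK)]
      exact sq_integral_le_integral_sq
        (memLp_two_of_abs_le ((hfx x).sub hg) fun y => hsub (x, y))
  rw [variance_prod_eq hf hK]
  refine add_le_add_right ?_ _
  calc variance (fun x => ∫ y, f (x, y) ∂μ) ν
      ≤ ∫ x, (∫ y, f (x, y) ∂μ - ∫ y, g y ∂μ) ^ 2 ∂ν :=
        variance_le_integral_sub_sq hF.aestronglyMeasurable _
    _ ≤ ∫ x, ∫ y, (f (x, y) - g y) ^ 2 ∂μ ∂ν :=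
        integral_mono (memLp_two_of_abs_le (hF.sub_const _) hFK).integrable_sq
          hL2.integrable_sq.integral_prod_left hjensen
    _ = ∫ z, (f z - g z.2) ^ 2 ∂ν.prod μ := (integral_prod _ hL2.integrable_sq).symm

end Prod

lemma integral_comp_eq_of_measurePreserving {α β : Type*} [MeasurableSpace α] [MeasurableSpace β]
    {μ : Measure α} {ν : Measure β} {φ : α → β} (hφ : MeasurePreserving φ μ ν) {F : β → ℝ}
    (hF : Measurable F) : ∫ x, F (φ x) ∂μ = ∫ y, F y ∂ν := by
  rw [← hφ.map_eq, integral_map hφ.aemeasurable hF.aestronglyMeasurable]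

lemma measurePreserving_cons {n : ℕ} {𝒳 : Fin (n + 1) → Type*} [∀ i, MeasurableSpace (𝒳 i)]
    (ν : ∀ i, Measure (𝒳 i)) [∀ i, SigmaFinite (ν i)] :
    MeasurePreserving (fun q : 𝒳 0 × (∀ i : Fin n, 𝒳 i.succ) => (Fin.cons q.1 q.2 : ∀ i, 𝒳 i))
      ((ν 0).prod (Measure.pi fun i : Fin n => ν i.succ)) (Measure.pi ν) := by
  have hinsert : (fun q : 𝒳 0 × (∀ i : Fin n, 𝒳 i.succ) => (Fin.cons q.1 q.2 : ∀ i, 𝒳 i)) =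
      (MeasurableEquiv.piFinSuccAbove 𝒳 0).symm := by
    ext q i
    exact Fin.cases rfl (fun _ => rfl) i
  rw [hinsert]
  exact (measurePreserving_piFinSuccAbove ν 0).symm

/-- The **Efron–Stein inequality**. -/
theorem variance_pi_le {n : ℕ} {𝒳 : Fin n → Type*} [∀ i, MeasurableSpace (𝒳 i)]
    (ν : ∀ i, Measure (𝒳 i)) [∀ i, IsProbabilityMeasure (ν i)] {f : (∀ i, 𝒳 i) → ℝ}
    {g : Fin n → (∀ i, 𝒳 i) → ℝ} {K : ℝ} (hf : Measurable f) (hfK : ∀ U, |f U| ≤ K)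
    (hg : ∀ k, Measurable (g k)) (hgK : ∀ k U, |g k U| ≤ K)
    (hgk : ∀ k U x, g k (Function.update U k x) = g k U) :
    variance f (Measure.pi ν) ≤ ∑ k, ∫ U, (f U - g k U) ^ 2 ∂Measure.pi ν := by
  induction n with
  | zero =>
    have hconst : f = fun _ => f default := funext fun U => congrArg f (Subsingleton.elim _ _)
    rw [hconst, variance_eq_sub (memLp_const _)]
    simp
  | succ n ih =>
    obtain ⟨x₀⟩ := (ν 0).nonempty_of_neZero
    set μ := Measure.pi fun i : Fin n => ν i.succ
    have hcons := measurePreserving_cons ν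
    have hpair : ∀ {h : (∀ i, 𝒳 i) → ℝ}, Measurable h →
        Measurable fun q : 𝒳 0 × (∀ i : Fin n, 𝒳 i.succ) => h (Fin.cons q.1 q.2) :=
      fun hh => hh.comp hcons.measurable
    have hsection : ∀ {h : (∀ i, 𝒳 i) → ℝ}, Measurable h → ∀ x,
        Measurable fun V : ∀ i : Fin n, 𝒳 i.succ => h (Fin.cons x V) :=
      fun hh x => (hpair hh).comp measurable_prodMk_left
    have hsq : ∀ k, Integrable (fun q : 𝒳 0 × (∀ i : Fin n, 𝒳 i.succ) =>
        (f (Fin.cons q.1 q.2) - g k (Fin.cons q.1 q.2)) ^ 2) ((ν 0).prod μ) := fun k =>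
      (memLp_two_of_abs_le ((hpair hf).sub (hpair (hg k))) fun q =>
        (abs_sub _ _).trans (add_le_add (hfK _) (hgK k _))).integrable_sq
    have htail : ∀ x, variance (fun V => f (Fin.cons x V)) μ ≤
        ∑ k : Fin n, ∫ V, (f (Fin.cons x V) - g k.succ (Fin.cons x V)) ^ 2 ∂μ := fun x =>
      ih _ (hsection hf x) (fun V => hfK _) (fun k => hsection (hg k.succ) x) (fun k V => hgK _ _)
        fun k V y => by rw [Fin.cons_update]; exact hgk _ _ _
    have hhead : ∀ x V, g 0 (Fin.cons x V) = g 0 (Fin.cons x₀ V) := fun x V => by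
      rw [← Fin.update_cons_zero x₀ V x]
      exact hgk _ _ _
    have hsplit : ∀ k, ∫ U, (f U - g k U) ^ 2 ∂Measure.pi ν =
        ∫ q, (f (Fin.cons q.1 q.2) - g k (Fin.cons q.1 q.2)) ^ 2 ∂(ν 0).prod μ := fun k =>
      (integral_comp_eq_of_measurePreserving hcons ((hf.sub (hg k)).pow_const 2)).symm
    rw [← hcons.variance_fun_comp hf.aemeasurable, Fin.sum_univ_succ,
      add_comm (∫ U, (f U - g 0 U) ^ 2 ∂_)]
    refine (variance_prod_le (hpair hf) (fun q => hfK _) (hsection (hg 0) x₀)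
      fun V => hgK 0 _).trans (add_le_add ?_ (le_of_eq ?_))
    · simp only [hsplit, integral_prod _ (hsq _)]
      rw [← integral_finsetSum _ fun k _ => (hsq k.succ).integral_prod_left]
      exact integral_mono_of_nonneg (ae_of_all _ fun x => variance_nonneg _ _)
        (integrable_finsetSum _ fun k _ => (hsq k.succ).integral_prod_left) (ae_of_all _ htail)
    · simp only [hsplit, hhead, μ]

lemma measurePreserving_update {ι : Type*} [Fintype ι] [DecidableEq ι] {𝒳 : ι → Type*}
    [∀ i, MeasurableSpace (𝒳 i)] (ν : ∀ i, Measure (𝒳 i)) [∀ i, IsProbabilityMeasure (ν i)]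
    (j : ι) :
    MeasurePreserving (fun q : (∀ i, 𝒳 i) × 𝒳 j => Function.update q.1 j q.2)
      ((Measure.pi ν).prod (ν j)) (Measure.pi ν) := by
  refine ⟨measurable_update', (Measure.pi_eq fun s hs => ?_).symm⟩
  rw [Measure.map_apply measurable_update' (.univ_pi hs)]
  have hpre : (fun q : (∀ i, 𝒳 i) × 𝒳 j => Function.update q.1 j q.2) ⁻¹' univ.pi s =
      univ.pi (Function.update s j univ) ×ˢ s j := by
    ext ⟨U, x⟩
    simp only [mem_preimage, mem_univ_pi, mem_prod]
    refine ⟨fun h => ⟨fun i => ?_, by simpa using h j⟩, fun h i => ?_⟩ <;>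
      by_cases hi : i = j
    · subst hi; simp
    · simpa [Function.update_of_ne hi] using h i
    · subst hi; simpa using h.2
    · simpa [Function.update_of_ne hi] using h.1 i
  have hprod : ∀ i ∈ Finset.univ.erase j, ν i (Function.update s j univ i) = ν i (s i) :=
    fun i hi => by rw [Function.update_of_ne (Finset.ne_of_mem_erase hi)]
  rw [hpre, Measure.prod_prod, Measure.pi_pi, ← Finset.mul_prod_erase _ _ (Finset.mem_univ j),
    ← Finset.mul_prod_erase _ (fun i => ν i (s i)) (Finset.mem_univ j), Function.update_self,
    measure_univ, one_mul, mul_comm, Finset.prod_congr rfl hprod]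

end EfronStein

section NearRelation

variable {𝒳 ι : Type*} [DecidableEq ι] {near reach : 𝒳 → 𝒳 → Prop} {s : Finset ι} {U V : ι → 𝒳}
  {i j k : ι} {x : 𝒳} {p : ℝ} {m κ : ℕ}

/-- The point with index `i` of the configuration `U` has no neighbour among the other points with
index in `s`. -/
def IsIsolatedIn (near : 𝒳 → 𝒳 → Prop) (s : Finset ι) (U : ι → 𝒳) (i : ι) : Prop :=
  ∀ l ∈ s, l ≠ i → ¬ near (U i) (U l)

/-- The number of points of the configuration `U` restricted to `s` that have a neighbour. -/
def nonIsolatedCount (near : 𝒳 → 𝒳 → Prop) (s : Finset ι) (U : ι → 𝒳) : ℝ :=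
  ∑ i ∈ s, if IsIsolatedIn near s U i then 0 else 1

/-- The increase of `nonIsolatedCount` when a point at `x` is added to the configuration. -/
def insertionIncrement (near : 𝒳 → 𝒳 → Prop) (s : Finset ι) (U : ι → 𝒳) (x : 𝒳) : ℝ :=
  (if ∃ l ∈ s, near (U l) x then 1 else 0) +
    ∑ l ∈ s, if IsIsolatedIn near s U l ∧ near (U l) x then 1 else 0

/-- The number of neighbours of the `i`-th point with index in `s`, not counting the `j`-th. -/
def otherNeighborCount (near : 𝒳 → 𝒳 → Prop) (s : Finset ι) (i j : ι) (U : ι → 𝒳) : ℕ :=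
  (((s.erase i).erase j).filter fun l => near (U i) (U l)).card

/-- The change of `nonIsolatedCount` on `s` when the `j`-th point is moved to a neighbour `x` of the
`i`-th one, weighted by the exchange weight of the pair `(i, j)`. -/
def exchangeDrift (near : 𝒳 → 𝒳 → Prop) (p : ℝ) (m : ℕ) (s : Finset ι) (i j : ι) (U : ι → 𝒳)
    (x : 𝒳) : ℝ :=
  exchangeWeight p m (otherNeighborCount near s i j U) * (if near (U i) x then 1 else 0) *
    (insertionIncrement near (s.erase j) U x - insertionIncrement near (s.erase j) U (U j))

/-- At most `κ` pairwise non-neighbouring points can have a common neighbour. -/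
def PackingBound (near : 𝒳 → 𝒳 → Prop) (κ : ℕ) : Prop :=
  ∀ (k : ℕ) (V : Fin k → 𝒳) (x : 𝒳), (∀ i, near (V i) x) →
    (Pairwise fun i j => ¬ near (V i) (V j)) → k ≤ κ

omit [DecidableEq ι] in
lemma PackingBound.card_le (h : PackingBound near κ) (hx : ∀ i ∈ s, near (U i) x)
    (hs : ∀ i ∈ s, ∀ j ∈ s, j ≠ i → ¬ near (U i) (U j)) : s.card ≤ κ :=
  h s.card (fun a => U (s.equivFin.symm a)) x (fun a => hx _ (s.equivFin.symm a).2) fun a b hab =>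
    hs _ (s.equivFin.symm a).2 _ (s.equivFin.symm b).2 fun hba =>
      hab (s.equivFin.symm.injective (Subtype.ext hba)).symm

omit [DecidableEq ι] in
lemma isIsolatedIn_congr (h : ∀ l ∈ s, U l = V l) (hi : i ∈ s) :
    IsIsolatedIn near s U i ↔ IsIsolatedIn near s V i :=
  forall₂_congr fun l hl => by rw [h l hl, h i hi]

omit [DecidableEq ι] in
lemma nonIsolatedCount_congr (h : ∀ l ∈ s, U l = V l) :
    nonIsolatedCount near s U = nonIsolatedCount near s V :=
  Finset.sum_congr rfl fun i hi => by simp only [isIsolatedIn_congr h hi]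

omit [DecidableEq ι] in
lemma insertionIncrement_congr (h : ∀ l ∈ s, U l = V l) (x : 𝒳) :
    insertionIncrement near s U x = insertionIncrement near s V x := by
  have hex : (∃ l ∈ s, near (U l) x) ↔ ∃ l ∈ s, near (V l) x :=
    exists_congr fun l => and_congr_right fun hl => by rw [h l hl]
  simp only [insertionIncrement, hex]
  exact congrArg _ (Finset.sum_congr rfl fun i hi => by simp only [isIsolatedIn_congr h hi, h i hi])

lemma isIsolatedIn_insert_self (hsymm : ∀ x y, near x y → near y x) (hj : j ∉ s) :
    IsIsolatedIn near (insert j s) U j ↔ ¬ ∃ l ∈ s, near (U l) (U j) := by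
  refine ⟨fun h ⟨l, hl, hn⟩ => ?_, fun h l hl hne hn => ?_⟩
  · exact h l (Finset.mem_insert_of_mem hl) (fun e => hj (e ▸ hl)) (hsymm _ _ hn)
  · exact h ⟨l, Finset.mem_of_mem_insert_of_ne hl hne, hsymm _ _ hn⟩

lemma isIsolatedIn_insert (hj : j ∉ s) (hi : i ∈ s) :
    IsIsolatedIn near (insert j s) U i ↔ IsIsolatedIn near s U i ∧ ¬ near (U i) (U j) := by
  have hji : j ≠ i := fun e => hj (e ▸ hi)
  simp only [IsIsolatedIn, Finset.forall_mem_insert, hji, ne_eq, not_false_eq_true, forall_const]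
  exact and_comm

lemma nonIsolatedCount_insert (hsymm : ∀ x y, near x y → near y x) (hj : j ∉ s) :
    nonIsolatedCount near (insert j s) U =
      nonIsolatedCount near s U + insertionIncrement near s U (U j) := by
  have hold : ∀ l ∈ s, (if IsIsolatedIn near (insert j s) U l then (0 : ℝ) else 1) =
      (if IsIsolatedIn near s U l then 0 else 1) +
        (if IsIsolatedIn near s U l ∧ near (U l) (U j) then 1 else 0) := by
    intro l hl
    rw [isIsolatedIn_insert hj hl]
    by_cases hiso : IsIsolatedIn near s U l <;> by_cases hlj : near (U l) (U j) <;> simp [hiso, hlj]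
  rw [nonIsolatedCount, Finset.sum_insert hj, Finset.sum_congr rfl hold, Finset.sum_add_distrib,
    nonIsolatedCount, insertionIncrement]
  simp only [isIsolatedIn_insert_self hsymm hj, ite_not]
  ring

lemma nonIsolatedCount_update [Fintype ι] (hsymm : ∀ x y, near x y → near y x) (U : ι → 𝒳) (j : ι)
    (x : 𝒳) :
    nonIsolatedCount near Finset.univ (Function.update U j x) -
        nonIsolatedCount near Finset.univ U =
      insertionIncrement near (Finset.univ.erase j) U x -
        insertionIncrement near (Finset.univ.erase j) U (U j) := by
  have hsplit (V : ι → 𝒳) :=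
    nonIsolatedCount_insert (U := V) hsymm (Finset.notMem_erase j Finset.univ)
  rw [Finset.insert_erase (Finset.mem_univ j)] at hsplit
  have hupd : ∀ l ∈ Finset.univ.erase j, Function.update U j x l = U l := fun l hl =>
    Function.update_of_ne (Finset.ne_of_mem_erase hl) _ _
  rw [hsplit, hsplit, Function.update_self, nonIsolatedCount_congr hupd,
    insertionIncrement_congr hupd]
  ring

omit [DecidableEq ι] in
lemma nonIsolatedCount_nonneg (s : Finset ι) (U : ι → 𝒳) : 0 ≤ nonIsolatedCount near s U :=
  Finset.sum_nonneg fun i _ => by split_ifs <;> norm_num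

omit [DecidableEq ι] in
lemma nonIsolatedCount_le_card (s : Finset ι) (U : ι → 𝒳) : nonIsolatedCount near s U ≤ s.card := by
  refine (Finset.sum_le_card_nsmul s _ 1 fun i _ => ?_).trans (by simp)
  split_ifs <;> norm_num

omit [DecidableEq ι] in
lemma abs_nonIsolatedCount_le_card (s : Finset ι) (U : ι → 𝒳) :
    |nonIsolatedCount near s U| ≤ s.card :=
  (abs_of_nonneg (nonIsolatedCount_nonneg s U)).trans_le (nonIsolatedCount_le_card s U)

omit [DecidableEq ι] in
lemma insertionIncrement_nonneg (s : Finset ι) (U : ι → 𝒳) (x : 𝒳) :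
    0 ≤ insertionIncrement near s U x :=
  add_nonneg (by split_ifs <;> norm_num)
    (Finset.sum_nonneg fun i _ => by split_ifs <;> norm_num)

omit [DecidableEq ι] in
lemma insertionIncrement_le (hpack : PackingBound near κ) (s : Finset ι) (U : ι → 𝒳) (x : 𝒳) :
    insertionIncrement near s U x ≤ 1 + κ := by
  refine add_le_add (by split_ifs <;> norm_num) ?_
  rw [Finset.sum_boole]
  refine Nat.cast_le.2 (hpack.card_le (fun i hi => (Finset.mem_filter.mp hi).2.2)
    fun i hi j hj hne => ?_)
  exact (Finset.mem_filter.mp hi).2.1 j (Finset.mem_filter.mp hj).1 hne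

omit [DecidableEq ι] in
lemma abs_insertionIncrement_sub_le (hpack : PackingBound near κ) (s t : Finset ι) (U : ι → 𝒳)
    (x y : 𝒳) : |insertionIncrement near s U x - insertionIncrement near t U y| ≤ 1 + κ :=
  abs_sub_le_of_nonneg_of_le (insertionIncrement_nonneg _ _ _) (insertionIncrement_le hpack _ _ _)
    (insertionIncrement_nonneg _ _ _) (insertionIncrement_le hpack _ _ _)

lemma insertionIncrement_erase (s : Finset ι) (hkx : ¬ near (U k) x)
    (hk : ∀ l, near (U l) x → ¬ near (U l) (U k)) :
    insertionIncrement near (s.erase k) U x = insertionIncrement near s U x := by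
  have hne {l : ι} (hl : near (U l) x) : l ≠ k := fun e => hkx (e ▸ hl)
  have hex : (∃ l ∈ s.erase k, near (U l) x) ↔ ∃ l ∈ s, near (U l) x :=
    ⟨fun ⟨l, hl, h⟩ => ⟨l, Finset.mem_of_mem_erase hl, h⟩,
      fun ⟨l, hl, h⟩ => ⟨l, Finset.mem_erase.mpr ⟨hne h, hl⟩, h⟩⟩
  have hfilter : (s.erase k).filter (fun l => IsIsolatedIn near (s.erase k) U l ∧ near (U l) x) =
      s.filter fun l => IsIsolatedIn near s U l ∧ near (U l) x := by
    ext l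
    simp only [Finset.mem_filter, Finset.mem_erase]
    refine ⟨fun ⟨⟨_, hl⟩, hiso, hlx⟩ => ⟨hl, fun q hq hql => ?_, hlx⟩, fun ⟨hl, hiso, hlx⟩ =>
      ⟨⟨hne hlx, hl⟩, fun q hq => hiso q (Finset.mem_of_mem_erase hq), hlx⟩⟩
    by_cases hqk : q = k
    · exact hqk ▸ hk l hlx
    · exact hiso q (Finset.mem_erase.mpr ⟨hqk, hq⟩) hql
  simp only [insertionIncrement, hex, Finset.sum_boole, hfilter]

lemma otherNeighborCount_le [Fintype ι] (hm : Fintype.card ι ≤ m + 1) (s : Finset ι) (hij : i ≠ j)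
    (U : ι → 𝒳) : otherNeighborCount near s i j U ≤ m - 1 := by
  have hsub : (s.erase i).erase j ⊆ (Finset.univ.erase i).erase j :=
    Finset.erase_subset_erase _ (Finset.erase_subset_erase _ (Finset.subset_univ _))
  refine (Finset.card_filter_le _ _).trans ((Finset.card_le_card hsub).trans ?_)
  rw [Finset.card_erase_of_mem (Finset.mem_erase.2 ⟨hij.symm, Finset.mem_univ _⟩),
    Finset.card_erase_of_mem (Finset.mem_univ _), Finset.card_univ]
  omega

lemma otherNeighborCount_congr (hi : U i = V i) (h : ∀ l ∈ s, l ≠ j → U l = V l) :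
    otherNeighborCount near s i j U = otherNeighborCount near s i j V := by
  refine congrArg Finset.card (Finset.filter_congr fun l hl => ?_)
  simp only [Finset.mem_erase] at hl
  rw [hi, h l hl.2.2 hl.1]

lemma otherNeighborCount_erase (s : Finset ι) (hik : ¬ near (U i) (U k)) :
    otherNeighborCount near (s.erase k) i j U = otherNeighborCount near s i j U := by
  refine congrArg Finset.card (Finset.ext fun l => ?_)
  simp only [Finset.mem_filter, Finset.mem_erase]
  exact ⟨fun ⟨⟨hlj, hli, _, hl⟩, hn⟩ => ⟨⟨hlj, hli, hl⟩, hn⟩,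
    fun ⟨⟨hlj, hli, hl⟩, hn⟩ => ⟨⟨hlj, hli, fun e => hik (e ▸ hn), hl⟩, hn⟩⟩

lemma exchangeDrift_congr (hi : i ∈ s) (hj : j ∈ s) (h : ∀ l ∈ s, U l = V l) (x : 𝒳) :
    exchangeDrift near p m s i j U x = exchangeDrift near p m s i j V x := by
  have herase : ∀ l ∈ s.erase j, U l = V l := fun l hl => h l (Finset.mem_of_mem_erase hl)
  rw [exchangeDrift, exchangeDrift, otherNeighborCount_congr (h i hi) fun l hl _ => h l hl, h i hi,
    h j hj, insertionIncrement_congr herase, insertionIncrement_congr herase]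

lemma abs_exchangeDrift_le [Fintype ι] (hpack : PackingBound near κ) (hp : p ∈ Icc 0 1)
    (hm : Fintype.card ι ≤ m + 1) (s : Finset ι) (hij : i ≠ j) (U : ι → 𝒳) (x : 𝒳) :
    |exchangeDrift near p m s i j U x| ≤
      exchangeWeight p m 0 * (1 + κ) * (if near (U i) x then 1 else 0) := by
  have hw := exchangeWeight_le hp (otherNeighborCount_le (near := near) hm s hij U)
  have hw0 := exchangeWeight_nonneg hp m 0
  have hincr := abs_insertionIncrement_sub_le hpack (s.erase j) (s.erase j) U x (U j)
  rw [exchangeDrift, abs_mul, abs_mul, abs_of_nonneg (exchangeWeight_nonneg hp _ _)]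
  split_ifs
  · rw [abs_one, mul_one, mul_one]
    exact mul_le_mul hw hincr (abs_nonneg _) hw0
  · simp only [abs_zero, mul_zero, zero_mul, le_refl]

variable [Fintype ι]

/-- `reach` relates points at most three `near`-steps apart: the increments caused by inserting a
neighbour of the `i`-th point depend only on points at most three steps away from it. -/
lemma abs_insertionIncrement_sub_sub_le (hpack : PackingBound near κ)
    (hrefl : ∀ x, near x x) (hsymm : ∀ x y, near x y → near y x)
    (hreach : ∀ x y z t, near x y → near y z → near z t → reach x t)
    (hix : near (U i) x) (hik : ¬ reach (U i) (U k)) :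
    |(insertionIncrement near (Finset.univ.erase j) U x -
          insertionIncrement near (Finset.univ.erase j) U (U j)) -
        (insertionIncrement near ((Finset.univ.erase k).erase j) U x -
          insertionIncrement near ((Finset.univ.erase k).erase j) U (U j))| ≤
      (1 + κ) * (if reach (U j) (U k) then 1 else 0) := by
  have hleft : insertionIncrement near ((Finset.univ.erase k).erase j) U x =
      insertionIncrement near (Finset.univ.erase j) U x := by
    rw [Finset.erase_right_comm]
    exact insertionIncrement_erase _
      (fun h => hik (hreach _ _ _ _ (hrefl _) hix (hsymm _ _ h)))
      fun l hl hlk => hik (hreach _ _ _ _ hix (hsymm _ _ hl) hlk)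
  rw [hleft, sub_sub_sub_cancel_left]
  split_ifs with hjk
  · rw [mul_one]
    exact abs_insertionIncrement_sub_le hpack _ _ _ _ _
  · rw [Finset.erase_right_comm, insertionIncrement_erase _
      (fun h => hjk (hreach _ _ _ _ (hrefl _) (hrefl _) (hsymm _ _ h)))
      fun l hl hlk => hjk (hreach _ _ _ _ (hrefl _) (hsymm _ _ hl) hlk)]
    simp only [sub_self, abs_zero, mul_zero, le_refl]

lemma abs_exchangeDrift_sub_le (hpack : PackingBound near κ)
    (hrefl : ∀ x, near x x) (hsymm : ∀ x y, near x y → near y x)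
    (hreach : ∀ x y z t, near x y → near y z → near z t → reach x t)
    (hp : p ∈ Icc 0 1) (hm : Fintype.card ι ≤ m + 1) (hij : i ≠ j) (k : ι) (U : ι → 𝒳) (x : 𝒳) :
    |exchangeDrift near p m Finset.univ i j U x -
        exchangeDrift near p m (Finset.univ.erase k) i j U x| ≤
      exchangeWeight p m 0 * (1 + κ) *
        (2 * (if reach (U i) (U k) then 1 else 0) + (if reach (U j) (U k) then 1 else 0)) *
        (if near (U i) x then 1 else 0) := by
  have hw0 := exchangeWeight_nonneg hp m 0
  by_cases hix : near (U i) x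
  swap
  · simp only [exchangeDrift, hix, if_false, mul_zero, zero_mul, sub_self, abs_zero, le_refl]
  by_cases hik : reach (U i) (U k)
  · have hfull := abs_exchangeDrift_le hpack hp hm Finset.univ hij U x
    have herased := abs_exchangeDrift_le hpack hp hm (Finset.univ.erase k) hij U x
    have hjk : 0 ≤ exchangeWeight p m 0 * (1 + κ) * (if reach (U j) (U k) then 1 else 0) := by
      positivity
    rw [if_pos hik]
    rw [if_pos hix, mul_one] at *
    linarith [abs_sub (exchangeDrift near p m Finset.univ i j U x)
      (exchangeDrift near p m (Finset.univ.erase k) i j U x)]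
  · have hnear : ¬ near (U i) (U k) := fun h => hik (hreach _ _ _ _ (hrefl _) (hrefl _) h)
    rw [exchangeDrift, exchangeDrift, otherNeighborCount_erase _ hnear, if_pos hix, if_neg hik,
      mul_one, ← mul_sub, abs_mul, abs_of_nonneg (exchangeWeight_nonneg hp _ _), mul_one, mul_zero,
      zero_add, mul_assoc]
    exact mul_le_mul (exchangeWeight_le hp (otherNeighborCount_le hm _ hij U))
      (abs_insertionIncrement_sub_sub_le hpack hrefl hsymm hreach hix hik) (abs_nonneg _) hw0

lemma nonIsolatedCount_sub_eq_sum (p : ℝ) (hm : Fintype.card ι = m + 1) (U : ι → 𝒳) :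
    nonIsolatedCount near Finset.univ U - (m + 1) * (1 - (1 - p) ^ m) =
      ∑ i, ∑ j ∈ Finset.univ.erase i,
        exchangeWeight p m (otherNeighborCount near Finset.univ i j U) *
          ((if near (U i) (U j) then 1 else 0) - p) := by
  have hone (i : ι) : (if IsIsolatedIn near Finset.univ U i then (0 : ℝ) else 1) -
      (1 - (1 - p) ^ m) = ∑ j ∈ Finset.univ.erase i,
        exchangeWeight p m (otherNeighborCount near Finset.univ i j U) *
          ((if near (U i) (U j) then 1 else 0) - p) := by
    have hsum := sum_exchangeWeight_mul_indicator_sub (Finset.univ.erase i) p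
      fun j => near (U i) (U j)
    have hex : (∃ j ∈ Finset.univ.erase i, near (U i) (U j)) ↔
        ¬ IsIsolatedIn near Finset.univ U i := by
      simp only [IsIsolatedIn, Finset.mem_erase, Finset.mem_univ, and_true]
      push Not
      simp only [ne_eq, true_and]
    rw [Finset.card_erase_of_mem (Finset.mem_univ _), Finset.card_univ, hm, Nat.add_sub_cancel]
      at hsum
    simp only [otherNeighborCount]
    convert hsum.symm using 2
    simp only [hex, ite_not]
  rw [← Finset.sum_congr rfl fun i _ => hone i, Finset.sum_sub_distrib, Finset.sum_const,
    Finset.card_univ, hm, nsmul_eq_mul, Nat.cast_succ, nonIsolatedCount]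

end NearRelation

section NeighborGeometry

section Measurability

variable {𝒳 ι α : Type*} [MeasurableSpace 𝒳] [MeasurableSpace α] {R near : 𝒳 → 𝒳 → Prop}

lemma measurable_rel (hR : MeasurableSet {r : 𝒳 × 𝒳 | R r.1 r.2}) {y z : α → 𝒳}
    (hy : Measurable y) (hz : Measurable z) : Measurable fun a => R (y a) (z a) :=
  measurableSet_setOfPred.mp ((hy.prodMk hz) hR)

lemma measurable_ite_const {β : Type*} [MeasurableSpace β] {P : α → Prop} [DecidablePred P]
    (hP : Measurable P) (c d : β) : Measurable fun a => if P a then c else d :=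
  Measurable.ite (measurableSet_setOfPred.mpr hP) measurable_const measurable_const

variable [Countable ι]

lemma measurable_isIsolatedIn (hR : MeasurableSet {r : 𝒳 × 𝒳 | near r.1 r.2}) (s : Finset ι)
    (i : ι) : Measurable fun U : ι → 𝒳 => IsIsolatedIn near s U i :=
  Measurable.forall fun l => measurable_const.imp (measurable_const.imp
    (measurable_rel hR (measurable_pi_apply i) (measurable_pi_apply l)).not)

lemma measurable_nonIsolatedCount (hR : MeasurableSet {r : 𝒳 × 𝒳 | near r.1 r.2})
    (s : Finset ι) : Measurable fun U : ι → 𝒳 => nonIsolatedCount near s U :=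
  Finset.measurable_sum _ fun i _ => measurable_ite_const (measurable_isIsolatedIn hR s i) _ _

lemma measurable_insertionIncrement (hR : MeasurableSet {r : 𝒳 × 𝒳 | near r.1 r.2})
    (s : Finset ι) : Measurable fun r : (ι → 𝒳) × 𝒳 => insertionIncrement near s r.1 r.2 := by
  have hnear (l : ι) : Measurable fun r : (ι → 𝒳) × 𝒳 => near (r.1 l) r.2 :=
    measurable_rel hR ((measurable_pi_apply l).comp measurable_fst) measurable_snd
  have hex : Measurable fun r : (ι → 𝒳) × 𝒳 => ∃ l ∈ s, near (r.1 l) r.2 :=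
    Measurable.exists fun l => measurable_const.and (hnear l)
  have hsum : Measurable fun r : (ι → 𝒳) × 𝒳 =>
      ∑ l ∈ s, if IsIsolatedIn near s r.1 l ∧ near (r.1 l) r.2 then (1 : ℝ) else 0 :=
    Finset.measurable_sum _ fun l _ => measurable_ite_const
      (((measurable_isIsolatedIn hR s l).comp measurable_fst).and (hnear l)) _ _
  exact (measurable_ite_const hex (1 : ℝ) 0).fun_add hsum

omit [Countable ι] in
lemma measurable_exchangeWeight_otherNeighborCount [DecidableEq ι]
    (hR : MeasurableSet {r : 𝒳 × 𝒳 | near r.1 r.2}) (p : ℝ) (m : ℕ) (s : Finset ι) (i j : ι) :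
    Measurable fun U : ι → 𝒳 => exchangeWeight p m (otherNeighborCount near s i j U) := by
  have hcount : Measurable fun U : ι → 𝒳 => otherNeighborCount near s i j U := by
    simp only [otherNeighborCount, Finset.card_filter]
    exact Finset.measurable_sum _ fun l _ => measurable_ite_const
      (measurable_rel hR (measurable_pi_apply i) (measurable_pi_apply l)) _ _
  exact (Measurable.of_discrete (f := exchangeWeight p m)).comp hcount

lemma measurable_exchangeDrift [DecidableEq ι] (hR : MeasurableSet {r : 𝒳 × 𝒳 | near r.1 r.2})
    (p : ℝ) (m : ℕ) (s : Finset ι) (i j : ι) :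
    Measurable fun r : (ι → 𝒳) × 𝒳 => exchangeDrift near p m s i j r.1 r.2 := by
  have hincr := measurable_insertionIncrement hR (s.erase j)
  refine ((((measurable_exchangeWeight_otherNeighborCount hR p m s i j).comp measurable_fst).mul
    (measurable_ite_const (measurable_rel hR ((measurable_pi_apply i).comp measurable_fst)
      measurable_snd) _ _)).mul (hincr.sub ?_))
  exact hincr.comp (measurable_fst.prodMk ((measurable_pi_apply j).comp measurable_fst))

end Measurability

/-- A law `ν` of a random point together with a neighbour relation `near` whose neighbourhoods all
have probability `p` and satisfy a packing bound, and a relation `reach`, of probability at most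
`q`, that holds for any two points joined by three steps between neighbours. -/
structure NeighborGeometry {𝒳 : Type*} [MeasurableSpace 𝒳] (ν : Measure 𝒳)
    (near reach : 𝒳 → 𝒳 → Prop) (κ : ℕ) (p q : ℝ) : Prop where
  measurableSet_near : MeasurableSet {r : 𝒳 × 𝒳 | near r.1 r.2}
  measurableSet_reach : MeasurableSet {r : 𝒳 × 𝒳 | reach r.1 r.2}
  refl : ∀ x, near x x
  symm : ∀ x y, near x y → near y x
  reach_of_near : ∀ x y z t, near x y → near y z → near z t → reach x t
  measureReal_near : ∀ x, ν.real {y | near x y} = p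
  measureReal_reach_le : ∀ x, ν.real {y | reach y x} ≤ q
  packingBound : PackingBound near κ

variable {𝒳 : Type*} [MeasurableSpace 𝒳] {ν : Measure 𝒳} [IsProbabilityMeasure ν] {m κ : ℕ}
  {near reach : 𝒳 → 𝒳 → Prop} {p q K : ℝ}

/-- The coefficient with which moving the point number `a.2` to `r.2` enters the exchange formula
for the configuration `r.1`; nonzero only if `r.2` is a neighbour of the point number `a.1`. -/
def exchangeCoefficient (near : 𝒳 → 𝒳 → Prop) (p : ℝ) (a : Fin (m + 1) × Fin (m + 1))
    (r : (Fin (m + 1) → 𝒳) × 𝒳) : ℝ :=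
  if a.1 = a.2 then 0 else
    exchangeWeight p m (otherNeighborCount near Finset.univ a.1 a.2 r.1) *
      (if near (r.1 a.1) r.2 then 1 else 0)

/-- The conditional mean, given the configuration, of the total weighted change of the number of
non-isolated points with index in `s` when a point of the configuration is moved. -/
def meanDrift (ν : Measure 𝒳) (near : 𝒳 → 𝒳 → Prop) (p : ℝ) (s : Finset (Fin (m + 1)))
    (U : Fin (m + 1) → 𝒳) : ℝ :=
  ∑ i ∈ s, ∑ j ∈ s.erase i, ∫ x, exchangeDrift near p m s i j U x ∂ν

namespace NeighborGeometry

variable (G : NeighborGeometry ν near reach κ p q)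
include G

lemma prob_mem_Icc : p ∈ Icc 0 1 := by
  obtain ⟨x⟩ := nonempty_of_isProbabilityMeasure ν
  rw [← G.measureReal_near x]
  exact ⟨measureReal_nonneg, measureReal_le_one⟩

lemma reach_prob_nonneg : 0 ≤ q := by
  obtain ⟨x⟩ := nonempty_of_isProbabilityMeasure ν
  exact measureReal_nonneg.trans (G.measureReal_reach_le x)

lemma integrable_near (c : ℝ) (z : 𝒳) :
    Integrable (fun x => c * if near z x then (1 : ℝ) else 0) ν :=
  (integrable_of_abs_le (K := 1) (measurable_ite_const
    (measurable_rel G.measurableSet_near measurable_const measurable_id) _ _)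
    fun x => by split_ifs <;> simp).const_mul c

omit [IsProbabilityMeasure ν] in
lemma integral_near (c : ℝ) (z : 𝒳) : ∫ x, c * (if near z x then 1 else 0) ∂ν = c * p := by
  have hset : MeasurableSet {y | near z y} :=
    measurableSet_setOfPred.mpr (measurable_rel G.measurableSet_near measurable_const measurable_id)
  rw [integral_const_mul, ← G.measureReal_near z, ← integral_indicator_one hset]
  simp only [indicator_apply, mem_ofPred_eq, Pi.one_apply]

omit [IsProbabilityMeasure ν] in
lemma integral_reach_le (z : 𝒳) : ∫ x, (if reach x z then (1 : ℝ) else 0) ∂ν ≤ q := by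
  have hset : MeasurableSet {y | reach y z} :=
    measurableSet_setOfPred.mpr
      (measurable_rel G.measurableSet_reach measurable_id measurable_const)
  refine le_trans (le_of_eq ?_) (G.measureReal_reach_le z)
  rw [← integral_indicator_one hset]
  simp only [indicator_apply, mem_ofPred_eq, Pi.one_apply]

section Exchange

variable {F : (Fin (m + 1) → 𝒳) → ℝ}

/-- Resampling `U j` is measure preserving, so conditioning on `U j` being a neighbour of `U i` can
be traded for moving the `j`-th point to a neighbour `r.2` of the `i`-th one. -/
lemma integral_near_sub_mul (hF : Measurable F) (hK : ∀ U, |F U| ≤ K) {i j : Fin (m + 1)}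
    (hij : i ≠ j) :
    ∫ U, ((if near (U i) (U j) then 1 else 0) - p) * F U ∂(Measure.pi fun _ => ν) =
      ∫ r, (if near (r.1 i) r.2 then 1 else 0) * (F (Function.update r.1 j r.2) - F r.1)
        ∂((Measure.pi fun _ => ν).prod ν) := by
  have hone (P : Prop) : |(if P then (1 : ℝ) else 0)| ≤ 1 := by split_ifs <;> simp
  have hbound {b c : ℝ} (hb : |b| ≤ 1) (hc : |c| ≤ K) : |b * c| ≤ 1 * K :=
    (abs_mul b c).trans_le (mul_le_mul hb hc (abs_nonneg _) zero_le_one)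
  have hpair : Measurable fun U : Fin (m + 1) → 𝒳 => if near (U i) (U j) then (1 : ℝ) else 0 :=
    measurable_ite_const (measurable_rel G.measurableSet_near (measurable_pi_apply i)
      (measurable_pi_apply j)) _ _
  have hnew : Measurable fun r : (Fin (m + 1) → 𝒳) × 𝒳 =>
      if near (r.1 i) r.2 then (1 : ℝ) else 0 :=
    measurable_ite_const (measurable_rel G.measurableSet_near
      ((measurable_pi_apply i).comp measurable_fst) measurable_snd) _ _
  have hold : Integrable (fun r : (Fin (m + 1) → 𝒳) × 𝒳 =>
      (if near (r.1 i) r.2 then 1 else 0) * F r.1) ((Measure.pi fun _ => ν).prod ν) :=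
    integrable_of_abs_le (hnew.mul (hF.comp measurable_fst)) fun r => hbound (hone _) (hK r.1)
  have hmoved : Integrable (fun r : (Fin (m + 1) → 𝒳) × 𝒳 => (if near (r.1 i) r.2 then 1 else 0) *
      F (Function.update r.1 j r.2)) ((Measure.pi fun _ => ν).prod ν) :=
    integrable_of_abs_le (hnew.mul (hF.comp measurable_update')) fun r => hbound (hone _) (hK _)
  have hsampled : Integrable (fun U => (if near (U i) (U j) then 1 else 0) * F U)
      (Measure.pi fun _ => ν) :=
    integrable_of_abs_le (hpair.mul hF) fun U => hbound (hone _) (hK U)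
  simp_rw [mul_sub, sub_mul]
  rw [integral_sub hsampled ((integrable_of_abs_le hF hK).const_mul p), integral_sub hmoved hold,
    ← integral_comp_eq_of_measurePreserving (measurePreserving_update (fun _ => ν) j)
      (hpair.fun_mul hF), integral_prod _ hold]
  simp only [Function.update_self, Function.update_of_ne hij, mul_comm _ (F _), G.integral_near]

lemma abs_exchangeWeight_mul_le (hK : ∀ U, |F U| ≤ K) {i j : Fin (m + 1)} (hij : i ≠ j)
    (U : Fin (m + 1) → 𝒳) :
    |exchangeWeight p m (otherNeighborCount near Finset.univ i j U) * F U| ≤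
      exchangeWeight p m 0 * K := by
  rw [abs_mul, abs_of_nonneg (exchangeWeight_nonneg G.prob_mem_Icc _ _)]
  exact mul_le_mul (exchangeWeight_le G.prob_mem_Icc
    (otherNeighborCount_le (Fintype.card_fin _).le _ hij U)) (hK U) (abs_nonneg _)
    (exchangeWeight_nonneg G.prob_mem_Icc _ _)

omit [IsProbabilityMeasure ν] in
lemma measurable_exchangeCoefficient (a : Fin (m + 1) × Fin (m + 1)) :
    Measurable (exchangeCoefficient near p a) := by
  have hweight := measurable_exchangeWeight_otherNeighborCount G.measurableSet_near p m
    Finset.univ a.1 a.2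
  exact measurable_const.ite (.const _) ((hweight.comp measurable_fst).mul (measurable_ite_const
    (measurable_rel G.measurableSet_near ((measurable_pi_apply a.1).comp measurable_fst)
      measurable_snd) _ _))

lemma exchangeCoefficient_mem_Icc (a : Fin (m + 1) × Fin (m + 1))
    (r : (Fin (m + 1) → 𝒳) × 𝒳) :
    exchangeCoefficient near p a r ∈
      Icc 0 (exchangeWeight p m 0 * if near (r.1 a.1) r.2 then 1 else 0) := by
  have hw0 := exchangeWeight_nonneg G.prob_mem_Icc m 0
  rw [exchangeCoefficient]
  by_cases heq : a.1 = a.2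
  · rw [if_pos heq]
    exact ⟨le_rfl, by positivity⟩
  · rw [if_neg heq]
    have hweight : exchangeWeight p m (otherNeighborCount near Finset.univ a.1 a.2 r.1) ∈
        Icc 0 (exchangeWeight p m 0) := ⟨exchangeWeight_nonneg G.prob_mem_Icc _ _,
      exchangeWeight_le G.prob_mem_Icc (otherNeighborCount_le (Fintype.card_fin _).le _ heq _)⟩
    have hnear : (0 : ℝ) ≤ if near (r.1 a.1) r.2 then 1 else 0 := by positivity
    exact ⟨mul_nonneg hweight.1 hnear, mul_le_mul_of_nonneg_right hweight.2 hnear⟩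

lemma abs_exchangeCoefficient_le (a : Fin (m + 1) × Fin (m + 1))
    (r : (Fin (m + 1) → 𝒳) × 𝒳) :
    |exchangeCoefficient near p a r| ≤ exchangeWeight p m 0 := by
  obtain ⟨hnonneg, hle⟩ := G.exchangeCoefficient_mem_Icc a r
  rw [abs_of_nonneg hnonneg]
  refine hle.trans (mul_le_of_le_one_right (exchangeWeight_nonneg G.prob_mem_Icc _ _) ?_)
  split_ifs <;> norm_num

lemma integrable_exchangeWeight_mul_near_sub_mul (hF : Measurable F) (hK : ∀ U, |F U| ≤ K)
    {i j : Fin (m + 1)} (hij : i ≠ j) :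
    Integrable (fun U => exchangeWeight p m (otherNeighborCount near Finset.univ i j U) *
      ((if near (U i) (U j) then 1 else 0) - p) * F U) (Measure.pi fun _ => ν) := by
  have hweight := measurable_exchangeWeight_otherNeighborCount G.measurableSet_near p m
    Finset.univ i j
  refine integrable_of_abs_le (K := exchangeWeight p m 0 * K * 1) ((hweight.mul
    ((measurable_ite_const (measurable_rel G.measurableSet_near (measurable_pi_apply i)
      (measurable_pi_apply j)) _ _).sub_const p)).mul hF) fun U => ?_
  have hw := G.abs_exchangeWeight_mul_le hK hij U
  rw [mul_right_comm, abs_mul]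
  refine mul_le_mul hw ?_ (abs_nonneg _) ((abs_nonneg _).trans hw)
  exact abs_sub_le_of_nonneg_of_le (by positivity) (by split_ifs <;> norm_num)
    G.prob_mem_Icc.1 G.prob_mem_Icc.2

lemma integrable_exchangeCoefficient_mul_sub (hF : Measurable F) (hK : ∀ U, |F U| ≤ K)
    (a : Fin (m + 1) × Fin (m + 1)) :
    Integrable (fun r => exchangeCoefficient near p a r *
      (F (Function.update r.1 a.2 r.2) - F r.1)) ((Measure.pi fun _ => ν).prod ν) := by
  refine integrable_of_abs_le (K := exchangeWeight p m 0 * (K + K))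
    ((measurable_exchangeCoefficient G a).mul
      ((hF.comp measurable_update').sub (hF.comp measurable_fst))) fun r => ?_
  rw [abs_mul]
  exact mul_le_mul (G.abs_exchangeCoefficient_le a r)
    ((abs_sub _ _).trans (add_le_add (hK _) (hK _))) (abs_nonneg _)
    (exchangeWeight_nonneg G.prob_mem_Icc _ _)

lemma integral_exchangeWeight_mul_near_sub_mul (hF : Measurable F) (hK : ∀ U, |F U| ≤ K)
    {i j : Fin (m + 1)} (hij : i ≠ j) :
    ∫ U, exchangeWeight p m (otherNeighborCount near Finset.univ i j U) *
        ((if near (U i) (U j) then 1 else 0) - p) * F U ∂(Measure.pi fun _ => ν) =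
      ∫ r, exchangeCoefficient near p (i, j) r * (F (Function.update r.1 j r.2) - F r.1)
        ∂((Measure.pi fun _ => ν).prod ν) := by
  have hweight := measurable_exchangeWeight_otherNeighborCount G.measurableSet_near p m
    Finset.univ i j
  have hupdate (r : (Fin (m + 1) → 𝒳) × 𝒳) :
      otherNeighborCount near Finset.univ i j (Function.update r.1 j r.2) =
        otherNeighborCount near Finset.univ i j r.1 :=
    otherNeighborCount_congr (Function.update_of_ne hij _ _)
      fun l _ hl => Function.update_of_ne hl _ _
  have hexch := G.integral_near_sub_mul (hweight.fun_mul hF)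
    (G.abs_exchangeWeight_mul_le hK hij) hij
  simp only [hupdate, ← mul_sub] at hexch
  simpa only [exchangeCoefficient, if_neg hij, mul_assoc, mul_left_comm (_ - p),
    mul_left_comm (ite _ _ _)] using hexch

lemma integral_nonIsolatedCount_sub_mul (hF : Measurable F) (hK : ∀ U, |F U| ≤ K) :
    ∫ U, (nonIsolatedCount near Finset.univ U - (m + 1) * (1 - (1 - p) ^ m)) * F U
        ∂(Measure.pi fun _ => ν) =
      ∫ r, ∑ a, exchangeCoefficient near p a r * (F (Function.update r.1 a.2 r.2) - F r.1)
        ∂((Measure.pi fun _ : Fin (m + 1) => ν).prod ν) := by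
  have hleft (i : Fin (m + 1)) : ∀ j ∈ Finset.univ.erase i, Integrable (fun U =>
      exchangeWeight p m (otherNeighborCount near Finset.univ i j U) *
        ((if near (U i) (U j) then 1 else 0) - p) * F U) (Measure.pi fun _ => ν) :=
    fun j hj => G.integrable_exchangeWeight_mul_near_sub_mul hF hK (Finset.ne_of_mem_erase hj).symm
  simp_rw [nonIsolatedCount_sub_eq_sum p (Fintype.card_fin _), Finset.sum_mul]
  rw [integral_finsetSum _ fun i _ => integrable_finsetSum _ (hleft i), integral_finsetSum _
    fun a _ => G.integrable_exchangeCoefficient_mul_sub hF hK a, Fintype.sum_prod_type]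
  refine Finset.sum_congr rfl fun i _ => ?_
  have hdiag (r : (Fin (m + 1) → 𝒳) × 𝒳) : exchangeCoefficient near p (i, i) r = 0 := if_pos rfl
  rw [integral_finsetSum _ (hleft i), ← Finset.add_sum_erase _ _ (Finset.mem_univ i)]
  simp only [hdiag, zero_mul, integral_zero, zero_add]
  exact Finset.sum_congr rfl fun j hj =>
    G.integral_exchangeWeight_mul_near_sub_mul hF hK (Finset.ne_of_mem_erase hj).symm

lemma integral_nonIsolatedCount :
    ∫ U, nonIsolatedCount near Finset.univ U ∂(Measure.pi fun _ : Fin (m + 1) => ν) =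
      (m + 1) * (1 - (1 - p) ^ m) := by
  have hint : Integrable (fun U => nonIsolatedCount near Finset.univ U)
      (Measure.pi fun _ : Fin (m + 1) => ν) :=
    integrable_of_abs_le (measurable_nonIsolatedCount G.measurableSet_near _)
      (abs_nonIsolatedCount_le_card _)
  have hexch := G.integral_nonIsolatedCount_sub_mul (m := m) (K := 1) (F := fun _ => 1)
    measurable_const fun _ => abs_one.le
  simp only [mul_one, sub_self, mul_zero, Finset.sum_const_zero, integral_zero] at hexch
  rw [integral_sub hint (integrable_const _), integral_const, probReal_univ, one_smul] at hexch
  exact sub_eq_zero.1 hexch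

end Exchange

end NeighborGeometry

end NeighborGeometry

section DriftVariance

variable {𝒳 : Type*} [MeasurableSpace 𝒳] {ν : Measure 𝒳} [IsProbabilityMeasure ν] {m κ : ℕ}
  {near reach : 𝒳 → 𝒳 → Prop} {p q K : ℝ} {k : Fin (m + 1)}

/-- The number of points of the configuration with index in `s` within reach of the `k`-th one, not
counting the latter. -/
def reachCount (reach : 𝒳 → 𝒳 → Prop) (s : Finset (Fin (m + 1))) (k : Fin (m + 1))
    (U : Fin (m + 1) → 𝒳) : ℝ :=
  ∑ l ∈ s.erase k, if reach (U l) (U k) then 1 else 0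

lemma card_erase_le_of_fin_succ (s : Finset (Fin (m + 1))) (k : Fin (m + 1)) :
    (s.erase k).card ≤ m :=
  (Finset.card_le_card (Finset.erase_subset_erase k (Finset.subset_univ s))).trans (by simp)

omit [MeasurableSpace 𝒳] in
lemma reachCount_mem_Icc (s : Finset (Fin (m + 1))) (k : Fin (m + 1)) (U : Fin (m + 1) → 𝒳) :
    reachCount reach s k U ∈ Icc (0 : ℝ) m := by
  rw [reachCount, Finset.sum_boole]
  exact ⟨Nat.cast_nonneg _, Nat.cast_le.2
    ((Finset.card_filter_le _ _).trans (card_erase_le_of_fin_succ s k))⟩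

omit [MeasurableSpace 𝒳] in
lemma reachCount_sq (k : Fin (m + 1)) (U : Fin (m + 1) → 𝒳) :
    reachCount reach Finset.univ k U ^ 2 = ∑ l ∈ Finset.univ.erase k,
      (if reach (U l) (U k) then 1 else 0) * (1 + reachCount reach (Finset.univ.erase l) k U) := by
  rw [sq]
  nth_rw 1 [reachCount]
  rw [Finset.sum_mul]
  refine Finset.sum_congr rfl fun l hl => ?_
  rw [reachCount, reachCount, Finset.erase_right_comm, ← Finset.add_sum_erase _ _ hl]
  split_ifs <;> simp

section OffDiagonalSums

variable {ι : Type*} [DecidableEq ι] {t : Finset ι} {k : ι}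

lemma sum_sum_erase_sub_sum_sum_erase (hk : k ∈ t) (A B : ι → ι → ℝ) :
    ∑ i ∈ t, ∑ j ∈ t.erase i, A i j - ∑ i ∈ t.erase k, ∑ j ∈ (t.erase k).erase i, B i j =
      ∑ j ∈ t.erase k, A k j + ∑ i ∈ t.erase k, A i k +
        ∑ i ∈ t.erase k, ∑ j ∈ (t.erase k).erase i, (A i j - B i j) := by
  have hrow : ∀ i ∈ t.erase k,
      ∑ j ∈ t.erase i, A i j = A i k + ∑ j ∈ (t.erase k).erase i, A i j := fun i hi => by
    rw [← Finset.add_sum_erase _ _ (Finset.mem_erase.2 ⟨(Finset.ne_of_mem_erase hi).symm, hk⟩),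
      Finset.erase_right_comm]
  simp only [Finset.sum_sub_distrib]
  rw [← Finset.add_sum_erase _ _ hk, Finset.sum_congr rfl hrow, Finset.sum_add_distrib]
  ring

lemma abs_sum_sum_erase_sub_le (hk : k ∈ t) {A B : ι → ι → ℝ} {b : ι → ℝ} {c : ℝ}
    (hA : ∀ i j, i ≠ j → |A i j| ≤ c)
    (hAB : ∀ i j, i ≠ j → |A i j - B i j| ≤ c * (2 * b i + b j)) (hc : 0 ≤ c)
    (hb : ∀ l, 0 ≤ b l) :
    |∑ i ∈ t, ∑ j ∈ t.erase i, A i j - ∑ i ∈ t.erase k, ∑ j ∈ (t.erase k).erase i, B i j| ≤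
      (t.erase k).card * c * (2 + 3 * ∑ l ∈ t.erase k, b l) := by
  rw [sum_sum_erase_sub_sum_sum_erase hk]
  set s := t.erase k
  have hrow : |∑ j ∈ s, A k j| ≤ s.card * c := by
    rw [← nsmul_eq_mul]
    exact (Finset.abs_sum_le_sum_abs _ _).trans (Finset.sum_le_card_nsmul _ _ _ fun j hj =>
      hA k j (Finset.ne_of_mem_erase hj).symm)
  have hcol : |∑ i ∈ s, A i k| ≤ s.card * c := by
    rw [← nsmul_eq_mul]
    exact (Finset.abs_sum_le_sum_abs _ _).trans (Finset.sum_le_card_nsmul _ _ _ fun i hi =>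
      hA i k (Finset.ne_of_mem_erase hi))
  have hrest : |∑ i ∈ s, ∑ j ∈ s.erase i, (A i j - B i j)| ≤
      ∑ i ∈ s, ∑ j ∈ s, c * (2 * b i + b j) := by
    refine (Finset.abs_sum_le_sum_abs _ _).trans (Finset.sum_le_sum fun i _ => ?_)
    refine (Finset.abs_sum_le_sum_abs _ _).trans ((Finset.sum_le_sum fun j hj =>
      hAB i j (Finset.ne_of_mem_erase hj).symm).trans ?_)
    exact Finset.sum_le_sum_of_subset_of_nonneg (Finset.erase_subset _ _) fun j _ _ =>
      mul_nonneg hc (by linarith [hb i, hb j])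
  have htotal : ∑ i ∈ s, ∑ j ∈ s, c * (2 * b i + b j) = 3 * (s.card * c) * ∑ l ∈ s, b l := by
    simp only [← Finset.mul_sum, Finset.sum_add_distrib, Finset.sum_const, nsmul_eq_mul]
    ring
  refine (abs_add_three _ _ _).trans ((add_le_add (add_le_add hrow hcol) hrest).trans_eq ?_)
  rw [htotal]
  ring

end OffDiagonalSums

namespace NeighborGeometry

variable (G : NeighborGeometry ν near reach κ p q)
include G

omit [IsProbabilityMeasure ν] in
lemma measurable_reach (l k : Fin (m + 1)) :
    Measurable fun U : Fin (m + 1) → 𝒳 => if reach (U l) (U k) then (1 : ℝ) else 0 :=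
  measurable_ite_const (measurable_rel G.measurableSet_reach (measurable_pi_apply l)
    (measurable_pi_apply k)) _ _

omit [IsProbabilityMeasure ν] in
lemma measurable_reachCount (s : Finset (Fin (m + 1))) (k : Fin (m + 1)) :
    Measurable fun U => reachCount reach s k U :=
  Finset.measurable_sum _ fun l _ => G.measurable_reach l k

lemma integrable_reachCount (s : Finset (Fin (m + 1))) (k : Fin (m + 1)) :
    Integrable (fun U => reachCount reach s k U) (Measure.pi fun _ => ν) :=
  integrable_of_abs_le (G.measurable_reachCount s k) fun U =>
    (abs_of_nonneg (reachCount_mem_Icc s k U).1).trans_le (reachCount_mem_Icc s k U).2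

lemma integral_reach_mul_le {F : (Fin (m + 1) → 𝒳) → ℝ} (hF : Measurable F)
    (hK : ∀ U, F U ∈ Icc 0 K) {l k : Fin (m + 1)} (hlk : l ≠ k)
    (hFl : ∀ U x, F (Function.update U l x) = F U) :
    ∫ U, (if reach (U l) (U k) then 1 else 0) * F U ∂(Measure.pi fun _ => ν) ≤
      q * ∫ U, F U ∂(Measure.pi fun _ => ν) := by
  have hF' : Integrable F (Measure.pi fun _ => ν) :=
    integrable_of_abs_le hF fun U => (abs_of_nonneg (hK U).1).trans_le (hK U).2
  have hreach : Measurable fun r : (Fin (m + 1) → 𝒳) × 𝒳 =>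
      if reach r.2 (r.1 k) then (1 : ℝ) else 0 :=
    measurable_ite_const (measurable_rel G.measurableSet_reach measurable_snd
      ((measurable_pi_apply k).comp measurable_fst)) _ _
  have hint : Integrable (fun r : (Fin (m + 1) → 𝒳) × 𝒳 =>
      (if reach r.2 (r.1 k) then 1 else 0) * F r.1) ((Measure.pi fun _ => ν).prod ν) :=
    (hF'.comp_fst ν).bdd_mul (c := 1) hreach.aestronglyMeasurable
      (ae_of_all _ fun r => by split_ifs <;> simp)
  rw [← integral_comp_eq_of_measurePreserving (measurePreserving_update (fun _ => ν) l)
    ((G.measurable_reach l k).fun_mul hF)]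
  simp only [Function.update_self, Function.update_of_ne hlk.symm, hFl]
  rw [integral_prod _ hint, ← integral_const_mul]
  refine integral_mono hint.integral_prod_left (hF'.const_mul q) fun U => ?_
  simp only [integral_mul_const]
  exact mul_le_mul_of_nonneg_right (G.integral_reach_le (U k)) (hK U).1

lemma integral_reachCount_le (s : Finset (Fin (m + 1))) (k : Fin (m + 1)) :
    ∫ U, reachCount reach s k U ∂(Measure.pi fun _ => ν) ≤ m * q := by
  have hone : ∀ l ∈ s.erase k,
      ∫ U, (if reach (U l) (U k) then (1 : ℝ) else 0) ∂(Measure.pi fun _ => ν) ≤ q := fun l hl => by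
    simpa using G.integral_reach_mul_le (F := fun _ => 1) (K := 1) measurable_const
      (fun _ => ⟨zero_le_one, le_rfl⟩) (Finset.ne_of_mem_erase hl) fun _ _ => rfl
  simp only [reachCount]
  rw [integral_finsetSum _ fun l _ => integrable_of_abs_le (K := 1) (G.measurable_reach l k)
    fun U => by split_ifs <;> simp]
  calc _ ≤ (s.erase k).card • q := Finset.sum_le_card_nsmul _ _ _ hone
    _ ≤ m * q := by
      rw [nsmul_eq_mul]
      exact mul_le_mul_of_nonneg_right (Nat.cast_le.2 (card_erase_le_of_fin_succ s k))
        G.reach_prob_nonneg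

lemma integral_reachCount_sq_le (k : Fin (m + 1)) :
    ∫ U, reachCount reach Finset.univ k U ^ 2 ∂(Measure.pi fun _ => ν) ≤
      m * q * (1 + m * q) := by
  have hcount (l : Fin (m + 1)) := (integrable_const (1 : ℝ)).fun_add
    (G.integrable_reachCount (Finset.univ.erase l) k)
  have hIcc (l : Fin (m + 1)) (U : Fin (m + 1) → 𝒳) :
      1 + reachCount reach (Finset.univ.erase l) k U ∈ Icc (0 : ℝ) (1 + m) :=
    have h := reachCount_mem_Icc (reach := reach) (Finset.univ.erase l) k U
    ⟨by linarith [h.1], by linarith [h.2]⟩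
  have hone : ∀ l ∈ Finset.univ.erase k, ∫ U, (if reach (U l) (U k) then 1 else 0) *
      (1 + reachCount reach (Finset.univ.erase l) k U) ∂(Measure.pi fun _ => ν) ≤
        q * (1 + m * q) := fun l hl => by
    have hlk := Finset.ne_of_mem_erase hl
    refine (G.integral_reach_mul_le ((G.measurable_reachCount _ k).const_add 1) (hIcc l) hlk
      fun U x => ?_).trans (mul_le_mul_of_nonneg_left ?_ G.reach_prob_nonneg)
    · refine congrArg (1 + ·) (Finset.sum_congr rfl fun l' hl' => ?_)
      rw [Function.update_of_ne (Finset.ne_of_mem_erase (Finset.mem_of_mem_erase hl')),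
        Function.update_of_ne hlk.symm]
    · rw [integral_add (integrable_const _) (G.integrable_reachCount _ k), integral_const,
        probReal_univ, one_smul]
      exact add_le_add_right (G.integral_reachCount_le _ k) 1
  simp only [reachCount_sq]
  rw [integral_finsetSum _ fun l _ => (hcount l).bdd_mul (c := 1)
    (G.measurable_reach l k).aestronglyMeasurable
    (ae_of_all _ fun U => by split_ifs <;> simp)]
  refine (Finset.sum_le_card_nsmul _ _ _ hone).trans_eq ?_
  rw [Finset.card_erase_of_mem (Finset.mem_univ k), Finset.card_fin, nsmul_eq_mul,
    Nat.add_sub_cancel, mul_assoc]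

lemma integrable_exchangeDrift (s : Finset (Fin (m + 1))) {i j : Fin (m + 1)} (hij : i ≠ j)
    (U : Fin (m + 1) → 𝒳) : Integrable (fun x => exchangeDrift near p m s i j U x) ν :=
  (G.integrable_near (exchangeWeight p m 0 * (1 + κ)) (U i)).mono'
    ((measurable_exchangeDrift G.measurableSet_near p m s i j).comp
      measurable_prodMk_left).aestronglyMeasurable
    (ae_of_all _ fun x => abs_exchangeDrift_le G.packingBound G.prob_mem_Icc
      (Fintype.card_fin _).le s hij U x)

lemma abs_integral_exchangeDrift_le (s : Finset (Fin (m + 1))) {i j : Fin (m + 1)} (hij : i ≠ j)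
    (U : Fin (m + 1) → 𝒳) :
    |∫ x, exchangeDrift near p m s i j U x ∂ν| ≤ exchangeWeight p m 0 * (1 + κ) * p := by
  rw [← G.integral_near _ (U i)]
  exact norm_integral_le_of_norm_le (f := fun x => exchangeDrift near p m s i j U x)
    (G.integrable_near _ _) (ae_of_all _ fun x => abs_exchangeDrift_le G.packingBound
      G.prob_mem_Icc (Fintype.card_fin _).le s hij U x)

lemma abs_integral_exchangeDrift_sub_le {i j : Fin (m + 1)} (hij : i ≠ j) (k : Fin (m + 1))
    (U : Fin (m + 1) → 𝒳) :
    |∫ x, exchangeDrift near p m Finset.univ i j U x ∂ν -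
        ∫ x, exchangeDrift near p m (Finset.univ.erase k) i j U x ∂ν| ≤
      exchangeWeight p m 0 * (1 + κ) * p *
        (2 * (if reach (U i) (U k) then 1 else 0) + (if reach (U j) (U k) then 1 else 0)) := by
  rw [mul_right_comm, ← G.integral_near _ (U i), ← integral_sub
    (G.integrable_exchangeDrift _ hij U) (G.integrable_exchangeDrift _ hij U)]
  exact norm_integral_le_of_norm_le (f := fun x => exchangeDrift near p m Finset.univ i j U x -
      exchangeDrift near p m (Finset.univ.erase k) i j U x) (G.integrable_near _ _)
    (ae_of_all _ fun x => abs_exchangeDrift_sub_le G.packingBound G.refl G.symm G.reach_of_near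
      G.prob_mem_Icc (Fintype.card_fin _).le hij k U x)

lemma measurable_meanDrift (s : Finset (Fin (m + 1))) :
    Measurable fun U => meanDrift ν near p s U :=
  Finset.measurable_sum _ fun i _ => Finset.measurable_sum _ fun j _ =>
    measurable_integral_section (measurable_exchangeDrift G.measurableSet_near p m s i j)

lemma driftBound_nonneg : 0 ≤ exchangeWeight p m 0 * (1 + κ) * p :=
  mul_nonneg (mul_nonneg (exchangeWeight_nonneg G.prob_mem_Icc _ _) (by positivity))
    G.prob_mem_Icc.1

lemma abs_meanDrift_le (s : Finset (Fin (m + 1))) (U : Fin (m + 1) → 𝒳) :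
    |meanDrift ν near p s U| ≤ (m + 1) * (m * (exchangeWeight p m 0 * (1 + κ) * p)) := by
  have hc : 0 ≤ exchangeWeight p m 0 * (1 + κ) * p := G.driftBound_nonneg
  have hrow : ∀ i ∈ s, |∑ j ∈ s.erase i, ∫ x, exchangeDrift near p m s i j U x ∂ν| ≤
      m * (exchangeWeight p m 0 * (1 + κ) * p) := fun i _ => by
    refine (Finset.abs_sum_le_sum_abs _ _).trans ((Finset.sum_le_card_nsmul _ _ _ fun j hj =>
      G.abs_integral_exchangeDrift_le s (Finset.ne_of_mem_erase hj).symm U).trans ?_)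
    rw [nsmul_eq_mul]
    exact mul_le_mul_of_nonneg_right (Nat.cast_le.2 (card_erase_le_of_fin_succ s i)) hc
  refine (Finset.abs_sum_le_sum_abs _ _).trans ((Finset.sum_le_card_nsmul _ _ _ hrow).trans ?_)
  rw [nsmul_eq_mul]
  refine mul_le_mul_of_nonneg_right ?_ (by positivity)
  exact_mod_cast (card_finset_fin_le s)

omit [IsProbabilityMeasure ν] G in
lemma meanDrift_update (k : Fin (m + 1)) (U : Fin (m + 1) → 𝒳) (x : 𝒳) :
    meanDrift ν near p (Finset.univ.erase k) (Function.update U k x) =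
      meanDrift ν near p (Finset.univ.erase k) U :=
  Finset.sum_congr rfl fun _ hi => Finset.sum_congr rfl fun _ hj => integral_congr_ae
    (ae_of_all _ fun y => exchangeDrift_congr hi (Finset.mem_of_mem_erase hj)
      (fun _ hl => Function.update_of_ne (Finset.ne_of_mem_erase hl) _ _) y)

lemma abs_meanDrift_sub_le (k : Fin (m + 1)) (U : Fin (m + 1) → 𝒳) :
    |meanDrift ν near p Finset.univ U - meanDrift ν near p (Finset.univ.erase k) U| ≤
      (1 - (1 - p) ^ m) * (1 + κ) * (2 + 3 * reachCount reach Finset.univ k U) := by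
  refine (abs_sum_sum_erase_sub_le (Finset.mem_univ k)
    (fun i j hij => G.abs_integral_exchangeDrift_le _ hij U)
    (fun i j hij => G.abs_integral_exchangeDrift_sub_le hij k U)
    G.driftBound_nonneg fun l => by positivity).trans_eq ?_
  rw [Finset.card_erase_of_mem (Finset.mem_univ k), Finset.card_fin, Nat.add_sub_cancel,
    ← mul_exchangeWeight_zero, reachCount]
  ring

lemma integral_meanDrift_sub_sq_le (k : Fin (m + 1)) :
    ∫ U, (meanDrift ν near p Finset.univ U - meanDrift ν near p (Finset.univ.erase k) U) ^ 2
        ∂(Measure.pi fun _ => ν) ≤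
      (1 - (1 - p) ^ m) ^ 2 * ((1 + κ) ^ 2 * (4 + 21 * (m * q) + 9 * (m * q) ^ 2)) := by
  set P := 1 - (1 - p) ^ m
  have hcount := G.integrable_reachCount Finset.univ k
  have hcount_sq : Integrable (fun U => reachCount reach Finset.univ k U ^ 2)
      (Measure.pi fun _ => ν) :=
    (memLp_two_of_abs_le (G.measurable_reachCount _ k) fun U =>
      (abs_of_nonneg (reachCount_mem_Icc _ k U).1).trans_le
        (reachCount_mem_Icc _ k U).2).integrable_sq
  have hdiff : Integrable (fun U => (meanDrift ν near p Finset.univ U -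
      meanDrift ν near p (Finset.univ.erase k) U) ^ 2) (Measure.pi fun _ => ν) :=
    (memLp_two_of_abs_le ((G.measurable_meanDrift _).sub (G.measurable_meanDrift _)) fun U =>
      (abs_sub _ _).trans (add_le_add (G.abs_meanDrift_le _ U)
        (G.abs_meanDrift_le _ U))).integrable_sq
  have hlin := (integrable_const (4 : ℝ)).fun_add (hcount.const_mul 12)
  have hquad := hcount_sq.const_mul 9
  calc _ ≤ ∫ U, (P * (1 + κ)) ^ 2 * (4 + 12 * reachCount reach Finset.univ k U +
        9 * reachCount reach Finset.univ k U ^ 2) ∂(Measure.pi fun _ => ν) := by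
        refine integral_mono hdiff ((hlin.fun_add hquad).const_mul _) fun U => ?_
        have hsq := pow_le_pow_left₀ (abs_nonneg _) (G.abs_meanDrift_sub_le k U) 2
        simp only [sq_abs] at hsq
        exact hsq.trans_eq (by ring)
    _ = P ^ 2 * ((1 + κ) ^ 2 *
        (4 + 12 * ∫ U, reachCount reach Finset.univ k U ∂(Measure.pi fun _ => ν) +
          9 * ∫ U, reachCount reach Finset.univ k U ^ 2 ∂(Measure.pi fun _ => ν))) := by
        rw [integral_const_mul, integral_add hlin hquad,
          integral_add (integrable_const _) (hcount.const_mul 12),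
          integral_const_mul, integral_const_mul, integral_const, probReal_univ, one_smul]
        ring
    _ ≤ _ := by
        gcongr P ^ 2 * (_ * ?_)
        linarith [G.integral_reachCount_le Finset.univ k, G.integral_reachCount_sq_le k]

theorem variance_meanDrift_le :
    variance (fun U => meanDrift ν near p Finset.univ U)
        (Measure.pi fun _ : Fin (m + 1) => ν) ≤
      (m + 1) * ((1 - (1 - p) ^ m) ^ 2 *
        ((1 + κ) ^ 2 * (4 + 21 * (m * q) + 9 * (m * q) ^ 2))) := by
  refine (variance_pi_le (fun _ => ν) (g := fun k => meanDrift ν near p (Finset.univ.erase k))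
    (G.measurable_meanDrift _) (G.abs_meanDrift_le _) (fun k => G.measurable_meanDrift _)
    (fun k => G.abs_meanDrift_le _) meanDrift_update).trans
    ((Finset.sum_le_card_nsmul _ _ _ fun k _ => G.integral_meanDrift_sub_sq_le k).trans_eq ?_)
  rw [Finset.card_fin, nsmul_eq_mul, Nat.cast_succ]

end NeighborGeometry

end DriftVariance

section IsolatedCount

lemma kolDist_comp {α β : Type*} [MeasurableSpace α] [MeasurableSpace β] {μ : Measure α}
    {ν : Measure β} {φ : α → β} (hφ : MeasurePreserving φ μ ν) {X : β → ℝ} (hX : Measurable X) :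
    kolDist μ (fun a => X (φ a)) = kolDist ν X := by
  have hset (t : ℝ) : MeasurableSet {b | (X b - ∫ x, X x ∂ν) / √(variance X ν) ≤ t} :=
    measurableSet_le ((hX.sub_const _).div_const _) measurable_const
  unfold kolDist
  rw [integral_comp_eq_of_measurePreserving hφ hX, hφ.variance_fun_comp hX.aemeasurable]
  exact iSup_congr fun t => by rw [← hφ.measure_preimage (hset t).nullMeasurableSet]; rfl

lemma kolDist_congr {Ω : Type*} [MeasurableSpace Ω] {P : Measure Ω} {X Y : Ω → ℝ}
    (h : X =ᵐ[P] Y) : kolDist P X = kolDist P Y := by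
  unfold kolDist
  rw [integral_congr_ae h, variance_congr h]
  refine iSup_congr fun t => ?_
  have hset : {ω | (X ω - ∫ x, Y x ∂P) / √(variance Y P) ≤ t} =ᵐ[P]
      {ω | (Y ω - ∫ x, Y x ∂P) / √(variance Y P) ≤ t} := by
    filter_upwards [h] with ω hω
    simp only [eq_iff_iff]
    change _ ≤ t ↔ _ ≤ t
    rw [hω]
  rw [measure_congr hset]

lemma sq_variance_mul_integral_sub_le {Ω : Type*} [MeasurableSpace Ω] {Q : Measure Ω}
    [IsProbabilityMeasure Q] {Φ F : Ω → ℝ} {K : ℝ} (hΦ : Measurable Φ) (hK : ∀ ω, |Φ ω| ≤ K)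
    (hF : Measurable F) (hF1 : ∀ ω, |F ω| ≤ 1) :
    ((∫ ω, Φ ω ∂Q) * ∫ ω, F ω ∂Q - ∫ ω, Φ ω * F ω ∂Q) ^ 2 ≤ variance Φ Q := by
  have hcenter : Measurable fun ω => (∫ x, Φ x ∂Q) - Φ ω := hΦ.const_sub _
  have hcenter_le (ω : Ω) : |(∫ x, Φ x ∂Q) - Φ ω| ≤ K + K :=
    (abs_sub _ _).trans (add_le_add (abs_integral_le_of_abs_le hK) (hK ω))
  have hprod_le {G : Ω → ℝ} {L : ℝ} (hL : ∀ ω, |G ω| ≤ L) (ω : Ω) : |G ω * F ω| ≤ L * 1 :=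
    (abs_mul _ _).trans_le (mul_le_mul (hL ω) (hF1 ω) (abs_nonneg _) ((abs_nonneg _).trans (hL ω)))
  have hintF := (integrable_of_abs_le (Q := Q) hF hF1).const_mul (∫ ω, Φ ω ∂Q)
  calc _ = (∫ ω, ((∫ x, Φ x ∂Q) - Φ ω) * F ω ∂Q) ^ 2 := by
        simp_rw [sub_mul]
        rw [integral_sub hintF (integrable_of_abs_le (hΦ.fun_mul hF) (hprod_le hK)),
          integral_const_mul]
    _ ≤ ∫ ω, (((∫ x, Φ x ∂Q) - Φ ω) * F ω) ^ 2 ∂Q :=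
        sq_integral_le_integral_sq (memLp_two_of_abs_le (hcenter.mul hF) (hprod_le hcenter_le))
    _ ≤ ∫ ω, (Φ ω - ∫ x, Φ x ∂Q) ^ 2 ∂Q := by
        refine integral_mono (memLp_two_of_abs_le (hcenter.mul hF)
          (hprod_le hcenter_le)).integrable_sq (memLp_two_of_abs_le (hΦ.sub_const _) fun ω =>
            (abs_sub_comm _ _).trans_le (hcenter_le ω)).integrable_sq fun ω => ?_
        simp only
        rw [mul_pow, sub_sq_comm]
        exact mul_le_of_le_one_right (sq_nonneg _) ((sq_le_one_iff_abs_le_one _).2 (hF1 ω))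
    _ = variance Φ Q := (variance_eq_integral hΦ.aemeasurable).symm

/-- The number of isolated points of a configuration. -/
def isolatedCount {𝒳 ι : Type*} [Fintype ι] (near : 𝒳 → 𝒳 → Prop) (U : ι → 𝒳) : ℝ :=
  ∑ i, if IsIsolatedIn near Finset.univ U i then 1 else 0

lemma isolatedCount_eq_card_sub {𝒳 ι : Type*} [Fintype ι] (near : 𝒳 → 𝒳 → Prop) (U : ι → 𝒳) :
    isolatedCount near U = Fintype.card ι - nonIsolatedCount near Finset.univ U := by
  rw [eq_sub_iff_add_eq, isolatedCount, nonIsolatedCount, ← Finset.sum_add_distrib,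
    Finset.sum_congr rfl fun i _ =>
      (by split_ifs <;> norm_num : (_ : ℝ) + (if IsIsolatedIn near Finset.univ U i then 0 else 1) =
        1)]
  simp

namespace NeighborGeometry

variable {𝒳 : Type*} [MeasurableSpace 𝒳] {ν : Measure 𝒳} [IsProbabilityMeasure ν] {m κ : ℕ}
  {near reach : 𝒳 → 𝒳 → Prop} {p q K : ℝ} {F : (Fin (m + 1) → 𝒳) → ℝ}
  (G : NeighborGeometry ν near reach κ p q)
include G

lemma integral_exchangeCoefficient_mul_le (hF : Measurable F) (hF0 : ∀ U, 0 ≤ F U)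
    (hK : ∀ U, F U ≤ K) (a : Fin (m + 1) × Fin (m + 1)) :
    ∫ r, exchangeCoefficient near p a r * F r.1 ∂((Measure.pi fun _ => ν).prod ν) ≤
      p * exchangeWeight p m 0 * ∫ U, F U ∂(Measure.pi fun _ => ν) := by
  have hw0 := exchangeWeight_nonneg G.prob_mem_Icc m 0
  have hmajorant : Integrable (fun r : (Fin (m + 1) → 𝒳) × 𝒳 => (exchangeWeight p m 0 * F r.1) *
      if near (r.1 a.1) r.2 then 1 else 0) ((Measure.pi fun _ => ν).prod ν) := by
    refine integrable_of_abs_le (K := exchangeWeight p m 0 * K) (((hF.comp measurable_fst).const_mul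
      _).mul (measurable_ite_const (measurable_rel G.measurableSet_near
        ((measurable_pi_apply a.1).comp measurable_fst) measurable_snd) _ _)) fun r => ?_
    rw [abs_of_nonneg (by have := hF0 r.1; positivity)]
    refine (mul_le_of_le_one_right (mul_nonneg hw0 (hF0 _)) ?_).trans
      (mul_le_mul_of_nonneg_left (hK _) hw0)
    split_ifs <;> norm_num
  refine (integral_mono_of_nonneg (ae_of_all _ fun r =>
    mul_nonneg (G.exchangeCoefficient_mem_Icc a r).1 (hF0 _)) hmajorant (ae_of_all _ fun r =>
      (mul_le_mul_of_nonneg_right (G.exchangeCoefficient_mem_Icc a r).2 (hF0 _)).trans_eq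
        (mul_right_comm _ _ _))).trans_eq ?_
  rw [integral_prod _ hmajorant]
  simp only [G.integral_near]
  rw [integral_mul_const, integral_const_mul]
  ring

lemma integral_sum_exchangeCoefficient_mul_le (hF : Measurable F) (hF0 : ∀ U, 0 ≤ F U)
    (hK : ∀ U, F U ≤ K) :
    ∫ r, (∑ a, exchangeCoefficient near p a r) * F r.1 ∂((Measure.pi fun _ => ν).prod ν) ≤
      (m + 1) * (1 - (1 - p) ^ m) * ∫ U, F U ∂(Measure.pi fun _ => ν) := by
  have hint (a : Fin (m + 1) × Fin (m + 1)) : Integrable (fun r =>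
      exchangeCoefficient near p a r * F r.1) ((Measure.pi fun _ => ν).prod ν) :=
    (integrable_of_abs_le (G.measurable_exchangeCoefficient a)
      (G.abs_exchangeCoefficient_le a)).mul_bdd (hF.comp measurable_fst).aestronglyMeasurable
        (ae_of_all _ fun r => (Real.norm_of_nonneg (hF0 r.1)).trans_le (hK _))
  have hdiag (i : Fin (m + 1)) : ∫ r, exchangeCoefficient near p (i, i) r * F r.1
      ∂((Measure.pi fun _ => ν).prod ν) = 0 := by
    simp only [exchangeCoefficient, ↓reduceIte, zero_mul, integral_zero]
  simp_rw [Finset.sum_mul]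
  rw [integral_finsetSum _ fun a _ => hint a, Fintype.sum_prod_type, ← mul_exchangeWeight_zero]
  have hrow (i : Fin (m + 1)) : ∑ j, ∫ r, exchangeCoefficient near p (i, j) r * F r.1
      ∂((Measure.pi fun _ => ν).prod ν) ≤
      m * (p * exchangeWeight p m 0 * ∫ U, F U ∂(Measure.pi fun _ => ν)) := by
    rw [← Finset.add_sum_erase _ _ (Finset.mem_univ i), hdiag, zero_add]
    refine (Finset.sum_le_card_nsmul _ _ _ fun j _ =>
      G.integral_exchangeCoefficient_mul_le hF hF0 hK (i, j)).trans_eq ?_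
    rw [Finset.card_erase_of_mem (Finset.mem_univ i), Finset.card_fin, Nat.add_sub_cancel,
      nsmul_eq_mul]
  refine (Finset.sum_le_card_nsmul _ _ _ fun i _ => hrow i).trans_eq ?_
  rw [Finset.card_fin, nsmul_eq_mul, Nat.cast_succ]
  ring

omit [IsProbabilityMeasure ν] in
lemma exchangeCoefficient_mul_sub (a : Fin (m + 1) × Fin (m + 1))
    (r : (Fin (m + 1) → 𝒳) × 𝒳) :
    exchangeCoefficient near p a r *
        (nonIsolatedCount near Finset.univ (Function.update r.1 a.2 r.2) -
          nonIsolatedCount near Finset.univ r.1) =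
      if a.1 = a.2 then 0 else exchangeDrift near p m Finset.univ a.1 a.2 r.1 r.2 := by
  rw [exchangeCoefficient, ite_mul, zero_mul, nonIsolatedCount_update G.symm, exchangeDrift]

lemma integral_sum_exchangeCoefficient_mul_sub_mul (hF : Measurable F) (hK : ∀ U, |F U| ≤ K) :
    ∫ r, ∑ a, exchangeCoefficient near p a r *
        (nonIsolatedCount near Finset.univ (Function.update r.1 a.2 r.2) -
          nonIsolatedCount near Finset.univ r.1) * F r.1
        ∂((Measure.pi fun _ : Fin (m + 1) => ν).prod ν) =
      ∫ U, meanDrift ν near p Finset.univ U * F U ∂(Measure.pi fun _ => ν) := by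
  have hterm (a : Fin (m + 1) × Fin (m + 1)) : Integrable (fun r =>
      exchangeCoefficient near p a r *
        (nonIsolatedCount near Finset.univ (Function.update r.1 a.2 r.2) -
          nonIsolatedCount near Finset.univ r.1) * F r.1) ((Measure.pi fun _ => ν).prod ν) :=
    (G.integrable_exchangeCoefficient_mul_sub (measurable_nonIsolatedCount G.measurableSet_near _)
      (abs_nonIsolatedCount_le_card _) a).mul_bdd (hF.comp measurable_fst).aestronglyMeasurable
      (ae_of_all _ fun r => hK r.1)
  rw [integral_prod _ (integrable_finsetSum _ fun a _ => hterm a)]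
  refine integral_congr_ae (ae_of_all _ fun U => ?_)
  have hint (i j : Fin (m + 1)) : Integrable (fun x =>
      if i = j then 0 else exchangeDrift near p m Finset.univ i j U x) ν := by
    split_ifs with hij
    · exact integrable_zero _ _ _
    · exact G.integrable_exchangeDrift _ hij U
  simp only [G.exchangeCoefficient_mul_sub, ← Finset.sum_mul]
  rw [integral_mul_const, integral_finsetSum _ fun a _ => hint a.1 a.2, Fintype.sum_prod_type,
    meanDrift]
  congr 1
  refine Finset.sum_congr rfl fun i _ => ?_
  rw [← Finset.add_sum_erase _ _ (Finset.mem_univ i)]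
  simp only [↓reduceIte, integral_zero, zero_add]
  exact Finset.sum_congr rfl fun j hj =>
    by simp only [if_neg (Finset.ne_of_mem_erase hj).symm]

lemma integral_meanDrift :
    ∫ U, meanDrift ν near p Finset.univ U ∂(Measure.pi fun _ : Fin (m + 1) => ν) =
      variance (nonIsolatedCount near Finset.univ) (Measure.pi fun _ : Fin (m + 1) => ν) := by
  have hY := measurable_nonIsolatedCount (ι := Fin (m + 1)) G.measurableSet_near Finset.univ
  have hexch := G.integral_nonIsolatedCount_sub_mul (m := m)
    (F := fun U => nonIsolatedCount near Finset.univ U - (m + 1) * (1 - (1 - p) ^ m))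
    (hY.sub_const _) fun U =>
      (abs_sub _ _).trans (add_le_add (abs_nonIsolatedCount_le_card Finset.univ U) le_rfl)
  have hdrift := G.integral_sum_exchangeCoefficient_mul_sub_mul (m := m) (F := fun _ => 1)
    measurable_const fun _ => abs_one.le
  simp only [mul_one] at hdrift
  simp only [sub_sub_sub_cancel_right] at hexch
  rw [variance_eq_integral hY.aemeasurable, G.integral_nonIsolatedCount, ← hdrift, ← hexch]
  simp only [sq]

lemma abs_variance_mul_integral_sub_le {η : ℝ}
    (hη : (1 + κ) ^ 2 * (4 + 21 * (m * q) + 9 * (m * q) ^ 2) ≤ η) (hF : Measurable F)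
    (hF1 : ∀ U, |F U| ≤ 1) :
    |variance (nonIsolatedCount near Finset.univ) (Measure.pi fun _ : Fin (m + 1) => ν) *
          ∫ U, F U ∂(Measure.pi fun _ => ν) -
        ∫ U, meanDrift ν near p Finset.univ U * F U ∂(Measure.pi fun _ => ν)| ≤
      (m + 1) * (1 - (1 - p) ^ m) * (√η / √(m + 1)) := by
  have hm : (0 : ℝ) < m + 1 := by positivity
  have hη0 : 0 ≤ η := le_trans (by have := G.reach_prob_nonneg; positivity) hη
  have hP : 0 ≤ 1 - (1 - p) ^ m := sub_nonneg.2
    (pow_le_one₀ (sub_nonneg.2 G.prob_mem_Icc.2) (sub_le_self _ G.prob_mem_Icc.1))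
  refine abs_le_of_sq_le_sq ?_ (by positivity)
  rw [← G.integral_meanDrift]
  refine (sq_variance_mul_integral_sub_le (G.measurable_meanDrift _) (G.abs_meanDrift_le _) hF
    hF1).trans (G.variance_meanDrift_le.trans ?_)
  calc _ ≤ (m + 1) * ((1 - (1 - p) ^ m) ^ 2 * η) := by gcongr
    _ = _ := by
      rw [mul_pow, mul_pow, div_pow, Real.sq_sqrt hη0, Real.sq_sqrt hm.le]
      field_simp

lemma integral_sub_nonIsolatedCount_div_mul (hF : Measurable F) (hK : ∀ U, |F U| ≤ K) (σ : ℝ) :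
    ∫ r, ((m + 1) * (1 - (1 - p) ^ m) - nonIsolatedCount near Finset.univ r.1) / σ * F r.1
        ∂((Measure.pi fun _ : Fin (m + 1) => ν).prod ν) =
      ∫ r, ∑ a, -exchangeCoefficient near p a r / σ * (F (Function.update r.1 a.2 r.2) - F r.1)
        ∂((Measure.pi fun _ : Fin (m + 1) => ν).prod ν) := by
  have hY := measurable_nonIsolatedCount (ι := Fin (m + 1)) G.measurableSet_near Finset.univ
  calc _ = ∫ U, ((m + 1) * (1 - (1 - p) ^ m) - nonIsolatedCount near Finset.univ U) / σ * F U
        ∂(Measure.pi fun _ => ν) :=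
        integral_comp_eq_of_measurePreserving measurePreserving_fst
          (((hY.const_sub _).div_const σ).mul hF)
    _ = -σ⁻¹ * ∫ U, (nonIsolatedCount near Finset.univ U - (m + 1) * (1 - (1 - p) ^ m)) * F U
        ∂(Measure.pi fun _ => ν) := by
        rw [← integral_const_mul]
        exact integral_congr_ae (ae_of_all _ fun U => by simp only; ring)
    _ = _ := by
        rw [G.integral_nonIsolatedCount_sub_mul hF hK, ← integral_const_mul]
        refine integral_congr_ae (ae_of_all _ fun r => ?_)
        simp only [Finset.mul_sum]
        exact Finset.sum_congr rfl fun a _ => by ring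

lemma integral_sum_abs_exchangeCoefficient_div_mul_le (hF : Measurable F) (hF0 : ∀ U, 0 ≤ F U)
    (hK : ∀ U, F U ≤ K) {σ : ℝ} (hσ : 0 < σ) :
    ∫ r, (∑ a, |-exchangeCoefficient near p a r / σ|) * F r.1
        ∂((Measure.pi fun _ : Fin (m + 1) => ν).prod ν) ≤
      (m + 1) * (1 - (1 - p) ^ m) / σ *
        ∫ r, F r.1 ∂((Measure.pi fun _ : Fin (m + 1) => ν).prod ν) := by
  have habs (a : Fin (m + 1) × Fin (m + 1)) (r : (Fin (m + 1) → 𝒳) × 𝒳) :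
      |-exchangeCoefficient near p a r / σ| = σ⁻¹ * exchangeCoefficient near p a r := by
    rw [abs_div, abs_neg, abs_of_nonneg (G.exchangeCoefficient_mem_Icc a r).1, abs_of_pos hσ,
      div_eq_inv_mul]
  simp_rw [habs, ← Finset.mul_sum, mul_assoc]
  rw [integral_const_mul, integral_comp_eq_of_measurePreserving measurePreserving_fst hF,
    div_eq_inv_mul, mul_assoc]
  gcongr
  exact G.integral_sum_exchangeCoefficient_mul_le hF hF0 hK

lemma abs_integral_sub_integral_exchangeCoefficient_le {η σ c : ℝ}
    (hη : (1 + κ) ^ 2 * (4 + 21 * (m * q) + 9 * (m * q) ^ 2) ≤ η) (hσ : 0 < σ)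
    (hσY : variance (nonIsolatedCount near Finset.univ) (Measure.pi fun _ : Fin (m + 1) => ν) =
      σ ^ 2) (hF : Measurable F) (hF1 : ∀ U, |F U| ≤ 1) :
    |∫ r, F r.1 ∂((Measure.pi fun _ : Fin (m + 1) => ν).prod ν) -
        ∫ r, ∑ a, -exchangeCoefficient near p a r / σ *
          ((c - nonIsolatedCount near Finset.univ (Function.update r.1 a.2 r.2)) / σ -
            (c - nonIsolatedCount near Finset.univ r.1) / σ) * F r.1
          ∂((Measure.pi fun _ : Fin (m + 1) => ν).prod ν)| ≤
      (m + 1) * (1 - (1 - p) ^ m) * (√η / √(m + 1)) / σ ^ 2 := by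
  have hscale (a : Fin (m + 1) × Fin (m + 1)) (r : (Fin (m + 1) → 𝒳) × 𝒳) :
      -exchangeCoefficient near p a r / σ *
          ((c - nonIsolatedCount near Finset.univ (Function.update r.1 a.2 r.2)) / σ -
            (c - nonIsolatedCount near Finset.univ r.1) / σ) * F r.1 =
        (σ ^ 2)⁻¹ * (exchangeCoefficient near p a r *
          (nonIsolatedCount near Finset.univ (Function.update r.1 a.2 r.2) -
            nonIsolatedCount near Finset.univ r.1) * F r.1) := by ring
  have hdrift := G.abs_variance_mul_integral_sub_le hη hF hF1
  rw [hσY] at hdrift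
  simp_rw [hscale, ← Finset.mul_sum]
  rw [integral_const_mul, G.integral_sum_exchangeCoefficient_mul_sub_mul hF hF1,
    integral_comp_eq_of_measurePreserving measurePreserving_fst hF, le_div_iff₀ (by positivity),
    ← abs_of_pos (by positivity : 0 < σ ^ 2), ← abs_mul, abs_of_pos (by positivity : 0 < σ ^ 2),
    sub_mul, mul_right_comm, inv_mul_cancel₀ (by positivity), one_mul, mul_comm _ (σ ^ 2)]
  exact hdrift

theorem steinCoupling_isolatedCount {η σ : ℝ}
    (hη : (1 + κ) ^ 2 * (4 + 21 * (m * q) + 9 * (m * q) ^ 2) ≤ η) (hσ : 0 < σ)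
    (hσY : variance (nonIsolatedCount near Finset.univ) (Measure.pi fun _ : Fin (m + 1) => ν) =
      σ ^ 2) :
    SteinCoupling ((Measure.pi fun _ : Fin (m + 1) => ν).prod ν)
      (fun r => ((m + 1) * (1 - (1 - p) ^ m) - nonIsolatedCount near Finset.univ r.1) / σ)
      (fun a r => -exchangeCoefficient near p a r / σ)
      (fun a r => ((m + 1) * (1 - (1 - p) ^ m) -
        nonIsolatedCount near Finset.univ (Function.update r.1 a.2 r.2)) / σ)
      ((1 + κ) / σ) ((m + 1) * (1 - (1 - p) ^ m) / σ)
      ((m + 1) * (1 - (1 - p) ^ m) * (√η / √(m + 1)) / σ ^ 2) := by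
  set c := (m + 1) * (1 - (1 - p) ^ m)
  have hY := measurable_nonIsolatedCount (ι := Fin (m + 1)) G.measurableSet_near Finset.univ
  have hh : Measurable fun U : Fin (m + 1) → 𝒳 => (c - nonIsolatedCount near Finset.univ U) / σ :=
    (hY.const_sub c).div_const σ
  have hh_le (U : Fin (m + 1) → 𝒳) : |(c - nonIsolatedCount near Finset.univ U) / σ| ≤
      (|c| + (Finset.univ : Finset (Fin (m + 1))).card) / σ := by
    rw [abs_div, abs_of_pos hσ]
    gcongr
    exact (abs_sub _ _).trans (add_le_add le_rfl (abs_nonIsolatedCount_le_card _ U))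
  exact
  { measurable := hh.comp measurable_fst
    bounded := ⟨_, fun r => hh_le r.1⟩
    measurable_weight := fun a => (G.measurable_exchangeCoefficient a).neg.div_const σ
    bounded_weight := fun a => ⟨_, fun r => by
      rw [abs_div, abs_neg]
      exact div_le_div_of_nonneg_right (G.abs_exchangeCoefficient_le a r) (abs_nonneg σ)⟩
    measurable_coupled := fun a => hh.comp measurable_update'
    abs_sub_le := fun a r => by
      rw [← sub_div, sub_sub_sub_cancel_left, abs_div, abs_of_pos hσ, abs_sub_comm,
        nonIsolatedCount_update G.symm]
      gcongr
      exact abs_insertionIncrement_sub_le G.packingBound _ _ _ _ _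
    integral_mul_eq := fun g hg => by
      obtain ⟨K, hK⟩ := isCompact_Icc.exists_bound_of_continuousOn hg.continuousOn
      exact G.integral_sub_nonIsolatedCount_div_mul (hg.measurable.comp hh)
        (fun U => hK _ (abs_le.1 (hh_le U))) σ
    integral_weight_le := fun u hu hu0 ⟨K, hK⟩ => by
      obtain ⟨x⟩ := nonempty_of_isProbabilityMeasure ν
      exact G.integral_sum_abs_exchangeCoefficient_div_mul_le (hu.comp hh) (fun U => hu0 _)
        (fun U => hK (U, x)) hσ
    abs_integral_sub_le := fun u hu hu1 =>
      G.abs_integral_sub_integral_exchangeCoefficient_le hη hσ hσY (hu.comp hh) fun U => hu1 _ }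

omit [IsProbabilityMeasure ν] in
lemma measurable_isolatedCount :
    Measurable (isolatedCount near : (Fin (m + 1) → 𝒳) → ℝ) := by
  simp only [funext (isolatedCount_eq_card_sub near)]
  exact (measurable_nonIsolatedCount G.measurableSet_near Finset.univ).const_sub _

lemma card_sub_integral_isolatedCount :
    (m + 1) - ∫ U, isolatedCount near U ∂(Measure.pi fun _ : Fin (m + 1) => ν) =
      (m + 1) * (1 - (1 - p) ^ m) := by
  simp only [isolatedCount_eq_card_sub near]
  rw [integral_sub (integrable_const _) (integrable_of_abs_le (measurable_nonIsolatedCount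
    G.measurableSet_near _) (abs_nonIsolatedCount_le_card _)), integral_const,
    G.integral_nonIsolatedCount, probReal_univ, one_smul, Fintype.card_fin, Nat.cast_succ,
    sub_sub_cancel]

lemma variance_isolatedCount :
    variance (isolatedCount near) (Measure.pi fun _ : Fin (m + 1) => ν) =
      variance (nonIsolatedCount near Finset.univ) (Measure.pi fun _ : Fin (m + 1) => ν) := by
  simp only [funext (isolatedCount_eq_card_sub near)]
  exact variance_const_sub
    (measurable_nonIsolatedCount G.measurableSet_near _).aestronglyMeasurable _

theorem kolDist_isolatedCount_le {η : ℝ}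
    (hη : (1 + κ) ^ 2 * (4 + 21 * (m * q) + 9 * (m * q) ^ 2) ≤ η)
    (hvar : 0 < variance (isolatedCount near) (Measure.pi fun _ : Fin (m + 1) => ν)) :
    kolDist (Measure.pi fun _ : Fin (m + 1) => ν) (isolatedCount near) ≤
      ((m + 1) - ∫ U, isolatedCount near U ∂(Measure.pi fun _ : Fin (m + 1) => ν)) /
          (5 * variance (isolatedCount near) (Measure.pi fun _ : Fin (m + 1) => ν)) *
        (√(11 * (1 + κ) ^ 2 /
            √(variance (isolatedCount near) (Measure.pi fun _ : Fin (m + 1) => ν)) +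
            5 * (√η / √(m + 1))) +
          2 * (1 + κ) /
            √√(variance (isolatedCount near) (Measure.pi fun _ : Fin (m + 1) => ν))) ^ 2 := by
  set μ := Measure.pi fun _ : Fin (m + 1) => ν
  set σ := √(variance (isolatedCount near) μ)
  have hσ : 0 < σ := Real.sqrt_pos.2 hvar
  have hσX : variance (isolatedCount near) μ = σ ^ 2 := (Real.sq_sqrt hvar.le).symm
  have hXmeas : Measurable (isolatedCount near : (Fin (m + 1) → 𝒳) → ℝ) :=
    G.measurable_isolatedCount
  rw [← kolDist_comp (measurePreserving_fst (μ := μ) (ν := ν)) hXmeas, hσX,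
    G.card_sub_integral_isolatedCount]
  refine SteinCoupling.kolDist_le (hXmeas.comp measurable_fst) hσ ?_ ?_
    (w := fun a r => -exchangeCoefficient near p a r / σ)
    (W' := fun a r => ((m + 1) * (1 - (1 - p) ^ m) -
      nonIsolatedCount near Finset.univ (Function.update r.1 a.2 r.2)) / σ)
  · rw [← hσX]
    exact measurePreserving_fst.variance_fun_comp hXmeas.aemeasurable
  · convert G.steinCoupling_isolatedCount hη hσ (G.variance_isolatedCount.symm.trans hσX)
      using 3 with r
    have hmean := G.card_sub_integral_isolatedCount (m := m)
    simp only [Function.comp_apply]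
    rw [integral_comp_eq_of_measurePreserving measurePreserving_fst hXmeas, ← hmean,
      isolatedCount_eq_card_sub, Fintype.card_fin, Nat.cast_succ]
    ring

end NeighborGeometry

end IsolatedCount

section Torus

variable {d : ℕ}

lemma iInf_abs_sub_intCast_mul {L : ℝ} (hL : 0 < L) (x : ℝ) :
    ⨅ k : ℤ, |x - k * L| = |x - round (x / L) * L| := by
  have hscale (k : ℤ) : |x - k * L| = |x / L - k| * L := by
    rw [← abs_of_pos hL, ← abs_mul, abs_of_pos hL, sub_mul, div_mul_cancel₀ _ hL.ne']
  refine le_antisymm (ciInf_le ⟨0, ?_⟩ _) (le_ciInf fun k => ?_)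
  · rintro _ ⟨k, rfl⟩
    exact abs_nonneg _
  · rw [hscale, hscale]
    exact mul_le_mul_of_nonneg_right (round_le _ _) hL.le

/-- The points of the lattice `L ℤ^d`, whose translations identify `ℝ^d` modulo `L` with the
torus. -/
def latticeVector (L : ℝ) : (Fin d → ℤ) →+ (Fin d → ℝ) where
  toFun k i := k i * L
  map_zero' := by ext; simp
  map_add' k l := by ext; simp [add_mul]

lemma torDist_le_norm (L : ℝ) (x y : Fin d → ℝ) (k : Fin d → ℤ) :
    torDist L x y ≤ ‖WithLp.toLp 2 (x - y - latticeVector L k)‖ := by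
  rw [EuclideanSpace.norm_eq, torDist]
  refine Real.sqrt_le_sqrt (Finset.sum_le_sum fun i _ => ?_)
  refine pow_le_pow_left₀ (Real.iInf_nonneg fun _ => abs_nonneg _) (ciInf_le ⟨0, ?_⟩ (k i)) 2
  rintro _ ⟨k, rfl⟩
  exact abs_nonneg _

lemma exists_torDist_eq_norm {L : ℝ} (hL : 0 < L) (x y : Fin d → ℝ) :
    ∃ k, torDist L x y = ‖WithLp.toLp 2 (x - y - latticeVector L k)‖ := by
  refine ⟨fun i => round ((x i - y i) / L), ?_⟩
  rw [EuclideanSpace.norm_eq, torDist]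
  simp only [iInf_abs_sub_intCast_mul hL]
  rfl

lemma torDist_le_iff {L : ℝ} (hL : 0 < L) {r : ℝ} {x y : Fin d → ℝ} :
    torDist L x y ≤ r ↔ ∃ k, ‖WithLp.toLp 2 (x - y - latticeVector L k)‖ ≤ r := by
  refine ⟨fun h => ?_, fun ⟨k, hk⟩ => (torDist_le_norm L x y k).trans hk⟩
  obtain ⟨k, hk⟩ := exists_torDist_eq_norm hL x y
  exact ⟨k, hk ▸ h⟩

lemma torDist_self (L : ℝ) (x : Fin d → ℝ) : torDist L x x = 0 := by
  refine le_antisymm ((torDist_le_norm L x x 0).trans_eq ?_) (Real.sqrt_nonneg _)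
  rw [sub_self, map_zero, sub_zero, WithLp.toLp_zero, norm_zero]

lemma torDist_comm (L : ℝ) (x y : Fin d → ℝ) : torDist L x y = torDist L y x := by
  unfold torDist
  congr! 3 with i
  refine (Equiv.neg ℤ).iInf_congr fun k => ?_
  rw [← abs_neg, Equiv.neg_apply, Int.cast_neg]
  congr 1
  ring

lemma torDist_triangle {L : ℝ} (hL : 0 < L) (x y z : Fin d → ℝ) :
    torDist L x z ≤ torDist L x y + torDist L y z := by
  obtain ⟨k, hk⟩ := exists_torDist_eq_norm hL x y
  obtain ⟨l, hl⟩ := exists_torDist_eq_norm hL y z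
  have hsplit : x - z - latticeVector L (k + l) =
      (x - y - latticeVector L k) + (y - z - latticeVector L l) := by
    rw [map_add]
    abel
  refine (torDist_le_norm L x z (k + l)).trans ?_
  rw [hk, hl, hsplit, WithLp.toLp_add]
  exact norm_add_le _ _

lemma torDist_add_right (L : ℝ) (x y z : Fin d → ℝ) :
    torDist L (x + z) (y + z) = torDist L x y := by
  simp only [torDist, Pi.add_apply, add_sub_add_right_eq_sub]

lemma torDist_latticeVector_add_le_iff {L : ℝ} (hL : 0 < L) {r : ℝ} {x y : Fin d → ℝ}
    (l : Fin d → ℤ) : torDist L x (latticeVector L l + y) ≤ r ↔ torDist L x y ≤ r := by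
  rw [torDist_le_iff hL, torDist_le_iff hL]
  refine (Equiv.addRight l).exists_congr fun k => ?_
  rw [Equiv.coe_addRight, map_add]
  congr! 3
  abel_nf

lemma measurable_torDist (L : ℝ) :
    Measurable fun q : (Fin d → ℝ) × (Fin d → ℝ) => torDist L q.1 q.2 := by
  unfold torDist
  fun_prop

lemma measurableSet_torDist_le (L r : ℝ) (x : Fin d → ℝ) :
    MeasurableSet {y | torDist L x y ≤ r} :=
  measurable_prodMk_left (measurableSet_le (measurable_torDist L) measurable_const)

/-- The half-open cube of side length `L` with lowest corner `c`. -/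
def cubeAt (L : ℝ) (c : Fin d → ℝ) : Set (Fin d → ℝ) :=
  Set.univ.pi fun i => Set.Ico (c i) (c i + L)

lemma cubeAt_zero (L : ℝ) : cubeAt L 0 = box d L := by
  simp only [cubeAt, box, Pi.zero_apply, zero_add]

lemma isAddFundamentalDomain_cubeAt {L : ℝ} (hL : 0 < L) (c : Fin d → ℝ) :
    IsAddFundamentalDomain (latticeVector L : (Fin d → ℤ) →+ (Fin d → ℝ)).range (cubeAt L c)
      volume := by
  refine IsAddFundamentalDomain.mk'
    (MeasurableSet.univ_pi fun _ => measurableSet_Ico).nullMeasurableSet fun x => ?_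
  choose k hk hunique using fun i => existsUnique_add_zsmul_mem_Ico hL (x i) (c i)
  simp only [zsmul_eq_mul, add_comm (x _)] at hk hunique
  refine ⟨⟨latticeVector L k, k, rfl⟩, fun i _ => hk i, ?_⟩
  rintro ⟨_, l, rfl⟩ hl
  obtain rfl : l = k := funext fun i => hunique i (l i) (hl i (Set.mem_univ i))
  rfl

instance countable_range_latticeVector (L : ℝ) :
    Countable (latticeVector L : (Fin d → ℤ) →+ (Fin d → ℝ)).range :=
  (Set.countable_range (latticeVector L)).to_subtype

-- A toroidal ball is periodic, so its volume may be computed in the cube based at its own centre.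
lemma volume_torDist_le_inter_box {L : ℝ} (hL : 0 < L) (r : ℝ) (x : Fin d → ℝ) :
    volume ({y | torDist L x y ≤ r} ∩ box d L) = volume ({y | torDist L 0 y ≤ r} ∩ box d L) := by
  have hshift := (isAddFundamentalDomain_cubeAt hL 0).measure_set_eq
    (isAddFundamentalDomain_cubeAt hL x) (measurableSet_torDist_le L r x) (by
      rintro ⟨_, l, rfl⟩
      ext y
      exact torDist_latticeVector_add_le_iff hL l)
  rw [← cubeAt_zero, hshift, ← measure_preimage_add_right volume x]
  congr 1
  ext y
  have hdist : torDist L x (y + x) = torDist L 0 y := by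
    nth_rw 1 [← zero_add x]
    exact torDist_add_right L 0 y x
  simp only [Set.mem_preimage, Set.mem_inter_iff, Set.mem_ofPred_eq, cubeAt, Set.mem_univ_pi,
    Set.mem_Ico, Pi.add_apply, Pi.zero_apply, zero_add, hdist, le_add_iff_nonneg_left,
    add_comm (x _), add_lt_add_iff_right]

lemma volume_setOf_norm_toLp_le {r : ℝ} (hr : 0 ≤ r) :
    volume {z : Fin d → ℝ | ‖WithLp.toLp 2 z‖ ≤ r} = ENNReal.ofReal (unitBallVol d * r ^ d) := by
  have hpreimage : {z : Fin d → ℝ | ‖WithLp.toLp 2 z‖ ≤ r} =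
      WithLp.toLp 2 ⁻¹' closedBall (0 : EuclideanSpace ℝ (Fin d)) r := by
    ext z
    exact mem_closedBall_zero_iff.symm
  rw [hpreimage, (PiLp.volume_preserving_toLp (Fin d)).measure_preimage
    measurableSet_closedBall.nullMeasurableSet, Measure.addHaar_closedBall' _ _ hr,
    finrank_euclideanSpace_fin, mul_comm, unitBallVol, ENNReal.ofReal_mul ENNReal.toReal_nonneg,
    ENNReal.ofReal_toReal measure_closedBall_lt_top.ne]

lemma volume_torDist_zero_le_inter_box_le {L r : ℝ} (hL : 0 < L) (hr : 0 ≤ r) :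
    volume ({y | torDist L 0 y ≤ r} ∩ box d L) ≤ ENNReal.ofReal (unitBallVol d * r ^ d) := by
  rw [← volume_setOf_norm_toLp_le hr, (isAddFundamentalDomain_cubeAt hL 0).measure_eq_tsum
    {z : Fin d → ℝ | ‖WithLp.toLp 2 z‖ ≤ r}, cubeAt_zero]
  refine (measure_mono ?_).trans (measure_iUnion_le _)
  rintro y ⟨hy, hbox⟩
  obtain ⟨k, hk⟩ := (torDist_le_iff hL).1 hy
  refine Set.mem_iUnion.2 ⟨⟨latticeVector L (-k), -k, rfl⟩, Set.mem_vadd_set.2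
    ⟨y + latticeVector L k, ?_, ?_⟩, hbox⟩
  · rwa [Set.mem_ofPred_eq, ← norm_neg, ← WithLp.toLp_neg, neg_add, ← zero_sub y,
      ← sub_eq_add_neg]
  · change latticeVector L (-k) + (y + latticeVector L k) = y
    rw [map_neg]
    abel

lemma volume_box (L : ℝ) : volume (box d L) = ENNReal.ofReal L ^ d := by
  rw [box, Real.volume_pi_Ico]
  simp only [sub_zero, Finset.prod_const, Finset.card_univ, Fintype.card_fin]

lemma sideLen_pos (d : ℕ) {n : ℕ} (hn : 0 < n) : 0 < sideLen d n :=
  Real.rpow_pos_of_pos (Nat.cast_pos.2 hn) _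

lemma sideLen_pow (n : ℕ) (hd : d ≠ 0) : sideLen d n ^ d = n :=
  Real.rpow_inv_natCast_pow n.cast_nonneg hd

lemma uniformBox_real_apply {L : ℝ} (hL : 0 < L) {s : Set (Fin d → ℝ)} (hs : MeasurableSet s) :
    (uniformBox d L).real s = volume.real (s ∩ box d L) / L ^ d := by
  rw [uniformBox, measureReal_nnreal_smul_apply, measureReal_restrict_apply hs, NNReal.coe_inv,
    NNReal.coe_pow, Real.coe_toNNReal L hL.le, div_eq_inv_mul]

lemma isProbabilityMeasure_uniformBox {L : ℝ} (hL : 0 < L) :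
    IsProbabilityMeasure (uniformBox d L) := by
  refine ⟨?_⟩
  rw [uniformBox, Measure.smul_apply, Measure.restrict_apply MeasurableSet.univ, Set.univ_inter,
    volume_box, ENNReal.smul_def, smul_eq_mul,
    ENNReal.coe_inv (pow_ne_zero d (Real.toNNReal_pos.2 hL).ne'), ENNReal.coe_pow]
  exact ENNReal.inv_mul_cancel (pow_ne_zero d (ENNReal.ofReal_pos.2 hL).ne')
    (ENNReal.pow_ne_top ENNReal.ofReal_ne_top)

lemma uniformBox_real_torDist_le_eq {L : ℝ} (hL : 0 < L) (r : ℝ) (x : Fin d → ℝ) :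
    (uniformBox d L).real {y | torDist L x y ≤ r} =
      (uniformBox d L).real {y | torDist L 0 y ≤ r} := by
  rw [uniformBox_real_apply hL (measurableSet_torDist_le L r x), measureReal_def,
    volume_torDist_le_inter_box hL, ← measureReal_def,
    uniformBox_real_apply hL (measurableSet_torDist_le L r 0)]

lemma uniformBox_real_torDist_le_le {L r : ℝ} (hL : 0 < L) (hr : 0 ≤ r) (x : Fin d → ℝ) :
    (uniformBox d L).real {y | torDist L x y ≤ r} ≤ phi d r / L ^ d := by
  rw [uniformBox_real_torDist_le_eq hL, uniformBox_real_apply hL (measurableSet_torDist_le L r 0)]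
  gcongr
  exact ENNReal.toReal_le_of_le_ofReal (mul_nonneg ENNReal.toReal_nonneg (pow_nonneg hr d))
    (volume_torDist_zero_le_inter_box_le hL hr)

end Torus

section Kappa

variable {d : ℕ}

lemma bddAbove_packing (d : ℕ) : BddAbove {k : ℕ | ∃ c : Fin k → EuclideanSpace ℝ (Fin d),
    (∀ i, (closedBall (c i) 1 ∩ closedBall 0 1).Nonempty) ∧
    Pairwise fun i j => Disjoint (closedBall (c i) 1) (closedBall (c j) 1)} := by
  refine ⟨5 ^ d, ?_⟩
  rintro k ⟨c, hmeet, hdisj⟩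
  have hsep (i j : Fin k) (hij : i ≠ j) : 1 ≤ ‖c i - c j‖ := by
    by_contra! h
    refine Set.disjoint_left.1 (hdisj hij) (mem_closedBall_self zero_le_one) ?_
    rw [mem_closedBall, dist_eq_norm]
    exact h.le
  have hnorm (i : Fin k) : ‖c i‖ ≤ 2 := by
    obtain ⟨z, hzi, hz0⟩ := hmeet i
    rw [← dist_zero_right]
    exact (dist_triangle_left _ _ z).trans
      ((add_le_add (mem_closedBall.1 hzi) (mem_closedBall.1 hz0)).trans_eq one_add_one_eq_two)
  have hinj : Function.Injective c := fun i j hij => by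
    by_contra hne
    exact (hsep i j hne).not_gt (by rw [hij, sub_self, norm_zero]; exact one_pos)
  have hcard := Besicovitch.card_le_of_separated (Finset.univ.image c)
    (fun x hx => by
      obtain ⟨i, -, rfl⟩ := Finset.mem_image.1 hx
      exact hnorm i)
    (fun x hx y hy hxy => by
      obtain ⟨i, -, rfl⟩ := Finset.mem_image.1 hx
      obtain ⟨j, -, rfl⟩ := Finset.mem_image.1 hy
      exact hsep i j (ne_of_apply_ne c hxy))
  rwa [Finset.card_image_of_injective _ hinj, Finset.card_fin, finrank_euclideanSpace_fin] at hcard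

lemma le_kappa {k : ℕ} (c : Fin k → EuclideanSpace ℝ (Fin d)) (hnorm : ∀ i, ‖c i‖ ≤ 2)
    (hsep : Pairwise fun i j => 2 < ‖c i - c j‖) : k ≤ kappa d := by
  refine le_csSup (bddAbove_packing d) ⟨c, fun i => ⟨(2 : ℝ)⁻¹ • c i, ?_, ?_⟩, fun i j hij => ?_⟩
  · rw [mem_closedBall, dist_eq_norm, show (2 : ℝ)⁻¹ • c i - c i = (-(2 : ℝ)⁻¹) • c i by module,
      norm_smul, norm_neg, norm_inv, Real.norm_two, inv_mul_le_one₀ two_pos]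
    exact hnorm i
  · rw [mem_closedBall, dist_zero_right, norm_smul, norm_inv, Real.norm_two,
      inv_mul_le_one₀ two_pos]
    exact hnorm i
  · refine closedBall_disjoint_closedBall ?_
    rw [dist_eq_norm, one_add_one_eq_two]
    exact hsep hij

lemma two_le_kappa (hd : 1 ≤ d) : 2 ≤ kappa d := by
  have : Nonempty (Fin d) := ⟨⟨0, hd⟩⟩
  obtain ⟨e, he⟩ := exists_norm_eq (EuclideanSpace ℝ (Fin d)) zero_le_one
  have hnorm (s : ℝ) : ‖s • e‖ = |s| := by rw [norm_smul, he, mul_one, Real.norm_eq_abs]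
  refine le_kappa (fun i => (![2, -2] i : ℝ) • e) (fun i => ?_) (fun i j hij => ?_)
  · fin_cases i <;> simp [hnorm]
  · simp only [← sub_smul, hnorm]
    fin_cases i <;> fin_cases j <;> first | exact absurd rfl hij | norm_num

-- Lifting the points to their representatives nearest to a lift of the centre and rescaling by
-- `2 / ρ` turns them into centres of a packing of unit balls around the unit ball.
lemma packingBound_torDist {L ρ : ℝ} (hL : 0 < L) (hρ : 0 < ρ) :
    PackingBound (fun x y : Fin d → ℝ => torDist L x y ≤ ρ) (kappa d) := by
  intro n V x hnear hsep
  choose k hk using fun i => (torDist_le_iff hL).1 (hnear i)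
  have hscale (z : EuclideanSpace ℝ (Fin d)) : ‖(2 / ρ) • z‖ = 2 / ρ * ‖z‖ := by
    rw [norm_smul, Real.norm_of_nonneg (by positivity)]
  refine le_kappa (fun i => (2 / ρ) • WithLp.toLp 2 (V i - x - latticeVector L (k i)))
    (fun i => ?_) (fun i j hij => ?_)
  · calc _ ≤ 2 / ρ * ρ := by rw [hscale]; gcongr; exact hk i
      _ = 2 := div_mul_cancel₀ _ hρ.ne'
  · have hlift : V i - x - latticeVector L (k i) - (V j - x - latticeVector L (k j)) =
        V i - V j - latticeVector L (k i - k j) := by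
      rw [map_sub]
      abel
    have hfar := (not_le.1 (hsep hij)).trans_le (torDist_le_norm L (V i) (V j) (k i - k j))
    calc (2 : ℝ) = 2 / ρ * ρ := (div_mul_cancel₀ _ hρ.ne').symm
      _ < _ := by rw [← smul_sub, hscale, ← WithLp.toLp_sub, hlift]; gcongr

end Kappa

section Eta

variable {d n : ℕ} {ρ : ℝ}

lemma phi_nonneg (d : ℕ) (hρ : 0 ≤ ρ) : 0 ≤ phi d ρ :=
  mul_nonneg ENNReal.toReal_nonneg (pow_nonneg hρ d)

lemma two_le_two_mul_sub_div_sub {a b : ℝ} (ha : 0 ≤ a) (hab : a < b) :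
    2 ≤ (2 * b - a) / (b - a) := by
  rw [le_div_iff₀ (sub_pos.2 hab)]
  linarith

lemma le_etaS_first_factor (hd : 1 ≤ d) (hρ : 0 ≤ ρ) (hφ : 3 ^ d * phi d ρ < n) :
    1 + 3 * (3 ^ d * phi d ρ) + 2 * (3 ^ d * phi d ρ) ^ 2 ≤
      1 + (2 ^ d + 1) * 3 ^ d * phi d ρ +
        ((2 * n - 3 ^ d * phi d ρ) / (n - 3 ^ d * phi d ρ)) * 9 ^ d * phi d ρ ^ 2 := by
  have hφ0 := phi_nonneg d hρ
  have hpow : (2 : ℝ) ≤ 2 ^ d := le_self_pow₀ one_le_two (Nat.one_le_iff_ne_zero.1 hd)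
  have hratio := two_le_two_mul_sub_div_sub (mul_nonneg (by positivity) hφ0) hφ
  have hsq : ((3 : ℝ) ^ d * phi d ρ) ^ 2 = 9 ^ d * phi d ρ ^ 2 := by
    rw [mul_pow, ← pow_mul, mul_comm d, pow_mul]
    norm_num
  rw [hsq, mul_assoc _ (9 ^ d), mul_assoc _ (3 ^ d)]
  gcongr
  linarith

lemma le_etaS_second_factor (hn : 1 < n) (hρ : 0 ≤ ρ)
    (hφ : (2 ^ (d + 1) + 1) * phi d ρ < n) :
    4 + 2 * (3 ^ d * phi d ρ) ≤ (2 ^ d + 2 * 3 ^ d + 3) * phi d ρ +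
      (2 ^ (d + 1) + 1) *
        ((2 * n - (2 ^ (d + 1) + 1) * phi d ρ) / (n - (2 ^ (d + 1) + 1) * phi d ρ)) *
        phi d ρ ^ 2 + (4 * n - 2) / (n - 1) := by
  have hφ0 := phi_nonneg d hρ
  have hratio := two_le_two_mul_sub_div_sub (mul_nonneg (by positivity) hφ0) hφ
  have hlast : 4 ≤ (4 * (n : ℝ) - 2) / (n - 1) := by
    rw [le_div_iff₀ (sub_pos.2 (Nat.one_lt_cast.2 hn))]
    linarith
  have hlinear : 0 ≤ (2 ^ d + 3) * phi d ρ := by positivity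
  have hquadratic : 0 ≤ (2 ^ (d + 1) + 1) *
      ((2 * n - (2 ^ (d + 1) + 1) * phi d ρ) / (n - (2 ^ (d + 1) + 1) * phi d ρ)) *
      phi d ρ ^ 2 := by positivity
  linarith

lemma quadratic_le_of_two_le {κ a : ℝ} (hκ : 2 ≤ κ) (ha : 0 ≤ a) :
    (1 + κ) ^ 2 * (4 + 21 * a + 9 * a ^ 2) ≤
      2 * (1 + 2 * κ) ^ 2 * (1 + 3 * a + 2 * a ^ 2) + (1 + κ) ^ 2 / 2 * (4 + 2 * a) := by
  obtain ⟨b, hb, rfl⟩ : ∃ b, 0 ≤ b ∧ κ = 2 + b := ⟨κ - 2, sub_nonneg.2 hκ, by ring⟩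
  have hconst : 0 ≤ 32 - 30 * a + 19 * a ^ 2 := by nlinarith [sq_nonneg (a - 15 / 19)]
  have hlinear : 0 ≤ b * (28 + 26 * a ^ 2) := by positivity
  have hquadratic : 0 ≤ b ^ 2 * (6 + 4 * a + 7 * a ^ 2) := by positivity
  linarith

lemma kappa_mul_quadratic_le_etaS (hd : 1 ≤ d) (hn : 1 < n) (hρ : 0 ≤ ρ)
    (hφ : max ((3 : ℝ) ^ d) (2 ^ (d + 1) + 1) * phi d ρ < n) {a : ℝ} (ha0 : 0 ≤ a)
    (ha : a ≤ 3 ^ d * phi d ρ) :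
    (1 + (kappa d : ℝ)) ^ 2 * (4 + 21 * a + 9 * a ^ 2) ≤ etaS d n ρ := by
  have hφ0 := phi_nonneg d hρ
  rw [max_mul_of_nonneg _ _ hφ0, max_lt_iff] at hφ
  calc _ ≤ (1 + (kappa d : ℝ)) ^ 2 * (4 + 21 * (3 ^ d * phi d ρ) + 9 * (3 ^ d * phi d ρ) ^ 2) := by
        gcongr
    _ ≤ _ := quadratic_le_of_two_le (by exact_mod_cast two_le_kappa hd)
        (mul_nonneg (by positivity) hφ0)
    _ ≤ etaS d n ρ := by
        unfold etaS
        gcongr 2 * (1 + 2 * (kappa d : ℝ)) ^ 2 * ?_ + (1 + (kappa d : ℝ)) ^ 2 / 2 * ?_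
        · exact le_etaS_first_factor hd hρ hφ.1
        · exact le_etaS_second_factor hn hρ hφ.2

end Eta

section IsolCount

variable {d n : ℕ} {ρ : ℝ}

lemma uniformBox_absolutelyContinuous (d : ℕ) (L : ℝ) : uniformBox d L ≪ volume :=
  Measure.smul_absolutelyContinuous.trans Measure.restrict_le_self.absolutelyContinuous

lemma ae_forall_mem_box (d : ℕ) (hn : 0 < n) :
    ∀ᵐ ω ∂binppLaw d n, ∀ i, ω i ∈ box d (sideLen d n) := by
  have := isProbabilityMeasure_uniformBox (d := d) (sideLen_pos d hn)
  have hbox : ∀ᵐ x ∂uniformBox d (sideLen d n), x ∈ box d (sideLen d n) :=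
    Measure.ae_smul_measure (ae_restrict_mem (MeasurableSet.univ_pi fun _ => measurableSet_Ico)) _
  exact ae_all_iff.2 fun i => (measurePreserving_eval _ i).quasiMeasurePreserving.ae hbox

lemma ae_injective_pi {𝒳 ι : Type*} [MeasurableSpace 𝒳] [Fintype ι] {ν : Measure 𝒳}
    [MeasurableEq 𝒳] [IsProbabilityMeasure ν] [NullSingletonClass ν] :
    ∀ᵐ U ∂(Measure.pi fun _ : ι => ν), Function.Injective U := by
  have hpair (i j : ι) (hij : i ≠ j) : ∀ᵐ U ∂(Measure.pi fun _ : ι => ν), U i ≠ U j := by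
    have hmeas : MeasurableSet {U : ι → 𝒳 | U i = U j} :=
      measurableSet_eq_fun (measurable_pi_apply i) (measurable_pi_apply j)
    rw [ae_iff]
    simp only [not_not]
    rw [← (measurePreserving_update (fun _ : ι => ν) j).measure_preimage hmeas.nullMeasurableSet]
    refine (Measure.measure_prod_null (measurable_update' hmeas)).2 (ae_of_all _ fun U => ?_)
    have hslice : Prod.mk U ⁻¹' ((fun q : (ι → 𝒳) × 𝒳 => Function.update q.1 j q.2) ⁻¹'
        {U | U i = U j}) = {U i} := by
      ext y
      simp [Function.update_of_ne hij, eq_comm]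
    beta_reduce
    rw [hslice, measure_singleton]
    rfl
  have hall : ∀ᵐ U ∂(Measure.pi fun _ : ι => ν), ∀ i j, i ≠ j → U i ≠ U j :=
    ae_all_iff.2 fun i => ae_all_iff.2 fun j => eventually_imp_distrib_left.2 (hpair i j)
  filter_upwards [hall] with U hU
  exact Function.injective_iff_pairwise_ne.2 hU

lemma range_inter_torBall_eq_singleton_iff {L : ℝ} (hρ : 0 ≤ ρ) {ω : Fin n → Fin d → ℝ}
    (hbox : ∀ i, ω i ∈ box d L) (hω : Function.Injective ω) (i : Fin n) :
    Set.range ω ∩ torBall L (ω i) ρ = {ω i} ↔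
      IsIsolatedIn (fun x y => torDist L x y ≤ ρ) Finset.univ ω i := by
  refine ⟨fun h l _ hl hnear => hl (hω ?_), fun h => Set.Subset.antisymm ?_ ?_⟩
  · exact h.subset ⟨⟨l, rfl⟩, hbox l, hnear⟩
  · rintro _ ⟨⟨l, rfl⟩, _, hnear⟩
    by_contra hl
    exact h l (Finset.mem_univ l) (ne_of_apply_ne ω hl) hnear
  · rintro _ rfl
    exact ⟨⟨i, rfl⟩, hbox i, (torDist_self L (ω i)).trans_le hρ⟩

lemma isolCount_ae_eq_isolatedCount (hd : 1 ≤ d) (hn : 0 < n) (hρ : 0 ≤ ρ) :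
    isolCount d n ρ =ᵐ[binppLaw d n]
      isolatedCount fun x y => torDist (sideLen d n) x y ≤ ρ := by
  have := isProbabilityMeasure_uniformBox (d := d) (sideLen_pos d hn)
  have : Nonempty (Fin d) := ⟨⟨0, hd⟩⟩
  have : NullSingletonClass (uniformBox d (sideLen d n)) :=
    ⟨fun x => uniformBox_absolutelyContinuous d _ (measure_singleton x)⟩
  filter_upwards [ae_forall_mem_box d hn, ae_injective_pi] with ω hbox hω
  simp only [isolCount, isolatedCount, range_inter_torBall_eq_singleton_iff hρ hbox hω]

lemma neighborGeometry_torDist {L : ℝ} (hL : 0 < L) (hρ : 0 < ρ) :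
    NeighborGeometry (uniformBox d L) (fun x y => torDist L x y ≤ ρ)
      (fun x y => torDist L x y ≤ 3 * ρ) (kappa d)
      ((uniformBox d L).real {y | torDist L 0 y ≤ ρ}) (3 ^ d * phi d ρ / L ^ d) where
  measurableSet_near := measurableSet_le (measurable_torDist L) measurable_const
  measurableSet_reach := measurableSet_le (measurable_torDist L) measurable_const
  refl x := (torDist_self L x).trans_le hρ.le
  symm x y := (torDist_comm L y x).trans_le
  reach_of_near x y z t hxy hyz hzt := by
    linarith [torDist_triangle hL x y z, torDist_triangle hL x z t]
  measureReal_near := uniformBox_real_torDist_le_eq hL ρ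
  measureReal_reach_le x := by
    simp only [torDist_comm L _ x]
    refine (uniformBox_real_torDist_le_le hL (mul_nonneg zero_le_three hρ.le) x).trans_eq ?_
    rw [phi, phi, mul_pow, mul_left_comm]
  packingBound := packingBound_torDist hL hρ

end IsolCount

/-- Theorem 2.2 (Goldstein–Penrose): normal approximation for the number of isolated points. -/
theorem isolated_points_normal_approximation
    (d n : ℕ) (hd : 1 ≤ d) (hn : 4 ≤ n) (ρ : ℝ) (hρ : 0 < ρ)
    (hphi : max ((3 : ℝ) ^ d) (2 ^ (d + 1) + 1) * phi d ρ < n)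
    (hvar : 0 < variance (isolCount d n ρ) (binppLaw d n)) :
    kolDist (binppLaw d n) (isolCount d n ρ) ≤
      ((n : ℝ) - ∫ ω, isolCount d n ρ ω ∂binppLaw d n) /
          (5 * variance (isolCount d n ρ) (binppLaw d n)) *
        (Real.sqrt
            (11 * ((1 : ℝ) + kappa d) ^ 2 /
                Real.sqrt (variance (isolCount d n ρ) (binppLaw d n)) +
              5 * Real.sqrt (etaS d n ρ) / Real.sqrt n) +
          2 * ((1 : ℝ) + kappa d) /
            Real.sqrt (Real.sqrt (variance (isolCount d n ρ) (binppLaw d n)))) ^ 2 := by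
  have hcount := isolCount_ae_eq_isolatedCount hd (by lia : 0 < n) hρ.le
  rw [variance_congr hcount] at hvar
  rw [kolDist_congr hcount, integral_congr_ae hcount, variance_congr hcount, mul_div_assoc 5]
  obtain ⟨m, rfl⟩ : ∃ m, n = m + 1 := ⟨n - 1, by lia⟩
  have hL := sideLen_pos d m.succ_pos
  have hside := sideLen_pow (m + 1) (Nat.one_le_iff_ne_zero.1 hd)
  have hφ := phi_nonneg d hρ.le
  have := isProbabilityMeasure_uniformBox (d := d) hL
  have hη : (1 + (kappa d : ℝ)) ^ 2 * (4 + 21 * (m * (3 ^ d * phi d ρ / sideLen d (m + 1) ^ d)) +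
      9 * (m * (3 ^ d * phi d ρ / sideLen d (m + 1) ^ d)) ^ 2) ≤ etaS d (m + 1) ρ := by
    refine kappa_mul_quadratic_le_etaS hd (by lia) hρ.le hphi (by positivity) ?_
    rw [hside, Nat.cast_succ, mul_div_left_comm]
    exact mul_le_of_le_one_right (by positivity) ((div_le_one (by positivity)).2 (by linarith))
  have hbound := (neighborGeometry_torDist hL hρ).kolDist_isolatedCount_le hη hvar
  rwa [← Nat.cast_succ] at hbound

end
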